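/- arXiv:2404.05554 — 3 statements merged into one kernel-verified Lean document; each statement's English description precedes it below -/
import Mathlib

section
/- Fix T > 0 and let K ∈ L¹([0,T]; ℝ^{d×d}) be completely monotone with K(t₀) ≻ 0 for some t₀ > 0, with resolvent of the first kind L. Then for each η ∈ [0,1], the integral transformation Z defined by Z_t(x) = ∫_{[0,t]} L(ds)(x_{t−s} − x₀) maps C^η([0,T]; ℝ^d) into C₀^η([0,T]; ℝ^d) (the η-Hölder continuous paths vanishing at 0) and is a continuous linear operator between these spaces. -/
open MeasureTheory Set Filter Matrix
open scoped ENNReal NNReal Topology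

noncomputable section

/-- A matrix-valued kernel is completely monotone: it is `C^∞` on `(0,∞)` and
`(-1)^n K^{(n)}(t)` is positive semidefinite (as a quadratic form) for all `t > 0`. -/
def CompletelyMonotoneMat {d : ℕ} (K : ℝ → Matrix (Fin d) (Fin d) ℝ) : Prop :=
  (∀ i j, ContDiffOn ℝ (⊤ : ℕ∞) (fun t => K t i j) (Set.Ioi 0)) ∧
  ∀ (n : ℕ) (t : ℝ), 0 < t → ∀ v : Fin d → ℝ,
    0 ≤ (-1 : ℝ) ^ n *
      (v ⬝ᵥ (Matrix.of fun i j => iteratedDerivWithin n (fun s => K s i j) (Set.Ioi 0) t).mulVec v)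

/-- The resolvent of the first kind `L(ds) = A δ₀(ds) + L₀(s) ds` of `K`:
a measure of locally bounded variation with `K ∗ L = L ∗ K = Id` on `(0,∞)`. -/
def IsResolventFirstKind {d : ℕ} (K : ℝ → Matrix (Fin d) (Fin d) ℝ)
    (A : Matrix (Fin d) (Fin d) ℝ) (L₀ : ℝ → Matrix (Fin d) (Fin d) ℝ) : Prop :=
  (∀ T > (0:ℝ), ∀ i j, IntervalIntegrable (fun t => L₀ t i j) volume 0 T) ∧
  (∀ t > (0:ℝ), ∀ i j,
    (K t * A) i j + (∫ s in (0:ℝ)..t, (K (t - s) * L₀ s) i j) = (1 : Matrix (Fin d) (Fin d) ℝ) i j) ∧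
  (∀ t > (0:ℝ), ∀ i j,
    (A * K t) i j + (∫ s in (0:ℝ)..t, (L₀ s * K (t - s)) i j) = (1 : Matrix (Fin d) (Fin d) ℝ) i j)

/-- The transformation `Z_t(x) = ∫_{[0,t]} L(ds)(x_{t-s} - x₀)`, where
`L(ds) = A δ₀(ds) + L₀(s) ds`. -/
noncomputable def zTransform {d : ℕ} (A : Matrix (Fin d) (Fin d) ℝ)
    (L₀ : ℝ → Matrix (Fin d) (Fin d) ℝ) (x : ℝ → Fin d → ℝ) (t : ℝ) : Fin d → ℝ :=
  A.mulVec (x t - x 0) + ∫ s in (0:ℝ)..t, (L₀ s).mulVec (x (t - s) - x 0)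

/-- Membership in `C^η([0,T]; ℝ^d)` (for `η = 0` this is the space of continuous paths). -/
def HolderOnIcc {d : ℕ} (η T : ℝ) (x : ℝ → Fin d → ℝ) : Prop :=
  ContinuousOn x (Set.Icc 0 T) ∧
  ∃ C : ℝ, ∀ s ∈ Set.Icc (0:ℝ) T, ∀ t ∈ Set.Icc (0:ℝ) T, ‖x t - x s‖ ≤ C * |t - s| ^ η

/-- `x` has `C^η([0,T])`-norm (sup norm plus Hölder seminorm) bounded by `C`. -/
def HolderNormBound {d : ℕ} (η T : ℝ) (x : ℝ → Fin d → ℝ) (C : ℝ) : Prop :=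
  (∀ t ∈ Set.Icc (0:ℝ) T, ‖x t‖ ≤ C) ∧
  ∀ s ∈ Set.Icc (0:ℝ) T, ∀ t ∈ Set.Icc (0:ℝ) T, ‖x t - x s‖ ≤ C * |t - s| ^ η

/-- entrywise `ℓ¹` size of a matrix -/
def matSize {d : ℕ} (M : Matrix (Fin d) (Fin d) ℝ) : ℝ := ∑ i, ∑ j, |M i j|

lemma matSize_nonneg {d : ℕ} (M : Matrix (Fin d) (Fin d) ℝ) : 0 ≤ matSize M :=
  Finset.sum_nonneg fun _ _ => Finset.sum_nonneg fun _ _ => abs_nonneg _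

lemma norm_mulVec_le_matSize {d : ℕ} (M : Matrix (Fin d) (Fin d) ℝ) (v : Fin d → ℝ) :
    ‖M.mulVec v‖ ≤ matSize M * ‖v‖ := by
  refine (pi_norm_le_iff_of_nonneg (mul_nonneg (matSize_nonneg M) (norm_nonneg v))).2 fun i => ?_
  have h1 : ‖M.mulVec v i‖ ≤ ∑ j, |M i j| * ‖v‖ := by
    simp only [Matrix.mulVec, dotProduct]
    refine (norm_sum_le _ _).trans (Finset.sum_le_sum fun j _ => ?_)
    rw [norm_mul, Real.norm_eq_abs]
    exact mul_le_mul_of_nonneg_left (norm_le_pi_norm v j) (abs_nonneg _)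
  refine h1.trans ?_
  rw [← Finset.sum_mul]
  refine mul_le_mul_of_nonneg_right ?_ (norm_nonneg v)
  exact Finset.single_le_sum (f := fun i => ∑ j, |M i j|)
    (fun _ _ => Finset.sum_nonneg fun _ _ => abs_nonneg _) (Finset.mem_univ i)

/-- clamp to `[0,T]` -/
def clampT (T r : ℝ) : ℝ := max 0 (min T r)

lemma clampT_mem {T : ℝ} (hT : 0 < T) (r : ℝ) : clampT T r ∈ Set.Icc (0:ℝ) T :=
  ⟨le_max_left _ _, max_le hT.le (min_le_left _ _)⟩

lemma clampT_of_mem {T r : ℝ} (h : r ∈ Set.Icc (0:ℝ) T) : clampT T r = r := by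
  simp [clampT, h.1, h.2]

lemma clampT_of_nonpos {T r : ℝ} (h : r ≤ 0) : clampT T r = 0 := by
  simp [clampT, h]

lemma clampT_lip (T r s : ℝ) : |clampT T r - clampT T s| ≤ |r - s| := by
  refine (abs_max_sub_max_le_max 0 (min T r) 0 (min T s)).trans ?_
  simp only [sub_self, abs_zero]
  refine max_le (abs_nonneg _) ((abs_min_sub_min_le_max T r T s).trans ?_)
  simp

lemma clampT_continuous (T : ℝ) : Continuous (clampT T) := by
  unfold clampT; fun_prop

/-- the extended, recentred path -/
def extPath {d : ℕ} (T : ℝ) (x : ℝ → Fin d → ℝ) (r : ℝ) : Fin d → ℝ := x (clampT T r) - x 0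

lemma extPath_continuous {d : ℕ} {T : ℝ} (hT : 0 < T) {x : ℝ → Fin d → ℝ}
    (hx : ContinuousOn x (Set.Icc 0 T)) : Continuous (extPath T x) :=
  (hx.comp_continuous (clampT_continuous T) (clampT_mem hT)).sub continuous_const

lemma extPath_holder {d : ℕ} {η T C : ℝ} (hT : 0 < T) (hη : 0 ≤ η) {x : ℝ → Fin d → ℝ}
    (hC : ∀ s ∈ Set.Icc (0:ℝ) T, ∀ t ∈ Set.Icc (0:ℝ) T, ‖x t - x s‖ ≤ C * |t - s| ^ η)
    (s t : ℝ) : ‖extPath T x t - extPath T x s‖ ≤ C * |t - s| ^ η := by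
  have hC0 : 0 ≤ C := by
    have h := (norm_nonneg _).trans (hC 0 ⟨le_rfl, hT.le⟩ T ⟨hT.le, le_rfl⟩)
    rw [sub_zero, abs_of_pos hT] at h
    exact nonneg_of_mul_nonneg_left h (Real.rpow_pos_of_pos hT η)
  have e : extPath T x t - extPath T x s = x (clampT T t) - x (clampT T s) := by
    simp [extPath]
  rw [e]
  refine (hC _ (clampT_mem hT s) _ (clampT_mem hT t)).trans ?_
  exact mul_le_mul_of_nonneg_left
    (Real.rpow_le_rpow (abs_nonneg _) (clampT_lip T t s) hη) hC0

lemma zTransform_eq {d : ℕ} {T : ℝ} (A : Matrix (Fin d) (Fin d) ℝ)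
    (L₀ : ℝ → Matrix (Fin d) (Fin d) ℝ) (x : ℝ → Fin d → ℝ) {t : ℝ}
    (ht : t ∈ Set.Icc (0:ℝ) T) :
    zTransform A L₀ x t = A.mulVec (extPath T x t) +
      ∫ s in (0:ℝ)..T, (L₀ s).mulVec (extPath T x (t - s)) := by
  unfold zTransform
  congr 1
  · rw [extPath, clampT_of_mem ht]
  · rw [intervalIntegral.integral_of_le ht.1, intervalIntegral.integral_of_le (ht.1.trans ht.2)]
    have h1 : ∫ s in Set.Ioc 0 T, (L₀ s).mulVec (extPath T x (t - s)) =
        ∫ s in Set.Ioc 0 t, (L₀ s).mulVec (extPath T x (t - s)) := by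
      refine setIntegral_eq_of_subset_of_forall_diff_eq_zero measurableSet_Ioc
        (Set.Ioc_subset_Ioc_right ht.2) fun s hs => ?_
      have : t - s ≤ 0 := by
        by_contra hcon
        exact hs.2 ⟨hs.1.1, by linarith⟩
      simp [extPath, clampT_of_nonpos this]
    rw [h1]
    refine setIntegral_congr_fun measurableSet_Ioc fun s hs => ?_
    have : clampT T (t - s) = t - s :=
      clampT_of_mem ⟨by linarith [hs.2], by linarith [hs.1, ht.2]⟩
    simp only [extPath, this]

lemma matSize_integrable {d : ℕ} {T : ℝ} {L₀ : ℝ → Matrix (Fin d) (Fin d) ℝ}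
    (hL : ∀ i j, IntervalIntegrable (fun t => L₀ t i j) volume 0 T) :
    IntervalIntegrable (fun s => matSize (L₀ s)) volume 0 T := by
  unfold matSize
  have : (fun s => ∑ i, ∑ j, |L₀ s i j|) = ∑ i, ∑ j, fun s => |L₀ s i j| := by
    ext s; simp
  rw [this]
  exact IntervalIntegrable.sum _ fun i _ => IntervalIntegrable.sum _ fun j _ => (hL i j).abs

lemma mulVec_aesm {d : ℕ} {T : ℝ} {L₀ : ℝ → Matrix (Fin d) (Fin d) ℝ} (hT : 0 < T)
    (hL : ∀ i j, IntervalIntegrable (fun t => L₀ t i j) volume 0 T)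
    {w : ℝ → Fin d → ℝ} (hw : Continuous w) :
    AEStronglyMeasurable (fun s => (L₀ s).mulVec (w s)) (volume.restrict (Set.uIoc 0 T)) := by
  refine AEMeasurable.aestronglyMeasurable (aemeasurable_pi_iff.2 fun i => ?_)
  simp only [Matrix.mulVec, dotProduct]
  refine Finset.aemeasurable_fun_sum _ fun j _ => AEMeasurable.mul ?_ ?_
  · have := (hL i j).aestronglyMeasurable.aemeasurable
    rwa [Set.uIoc_of_le hT.le]
  · exact ((continuous_apply j).comp hw).measurable.aemeasurable

lemma extPath_bdd {d : ℕ} {T : ℝ} (hT : 0 < T) {x : ℝ → Fin d → ℝ}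
    (hx : ContinuousOn x (Set.Icc 0 T)) : ∃ B, ∀ r, ‖extPath T x r‖ ≤ B := by
  obtain ⟨B, hB⟩ := isCompact_Icc.exists_bound_of_continuousOn hx
  exact ⟨B + B, fun r => (norm_sub_le _ _).trans
    (add_le_add (hB _ (clampT_mem hT r)) (hB _ ⟨le_rfl, hT.le⟩))⟩

lemma integrand_integrable {d : ℕ} {T : ℝ} {L₀ : ℝ → Matrix (Fin d) (Fin d) ℝ} (hT : 0 < T)
    (hL : ∀ i j, IntervalIntegrable (fun t => L₀ t i j) volume 0 T)
    {x : ℝ → Fin d → ℝ} (hx : ContinuousOn x (Set.Icc 0 T)) (t : ℝ) :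
    IntervalIntegrable (fun s => (L₀ s).mulVec (extPath T x (t - s))) volume 0 T := by
  obtain ⟨B, hB⟩ := extPath_bdd hT hx
  refine ((matSize_integrable hL).mul_const B).mono_fun'
    (mulVec_aesm hT hL ((extPath_continuous hT hx).comp (continuous_const.sub continuous_id))) ?_
  exact Eventually.of_forall fun s => (norm_mulVec_le_matSize _ _).trans
    (mul_le_mul_of_nonneg_left (hB _) (matSize_nonneg _))

lemma conv_bound {d : ℕ} {T : ℝ} (A : Matrix (Fin d) (Fin d) ℝ)
    {L₀ : ℝ → Matrix (Fin d) (Fin d) ℝ} (hT : 0 < T)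
    (hL : ∀ i j, IntervalIntegrable (fun t => L₀ t i j) volume 0 T)
    {v : Fin d → ℝ} {w : ℝ → Fin d → ℝ} {B : ℝ} (hv : ‖v‖ ≤ B) (hw : ∀ s, ‖w s‖ ≤ B) :
    ‖A.mulVec v + ∫ s in (0:ℝ)..T, (L₀ s).mulVec (w s)‖ ≤
      (matSize A + ∫ s in (0:ℝ)..T, matSize (L₀ s)) * B := by
  rw [add_mul, ← intervalIntegral.integral_mul_const]
  refine (norm_add_le _ _).trans (add_le_add ((norm_mulVec_le_matSize _ _).trans
    (mul_le_mul_of_nonneg_left hv (matSize_nonneg _))) ?_)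
  refine intervalIntegral.norm_integral_le_of_norm_le hT.le
    (Eventually.of_forall fun s _ => (norm_mulVec_le_matSize _ _).trans
    (mul_le_mul_of_nonneg_left (hw s) (matSize_nonneg _))) ((matSize_integrable hL).mul_const B)

lemma zTransform_holder {d : ℕ} {η T C : ℝ} (A : Matrix (Fin d) (Fin d) ℝ)
    {L₀ : ℝ → Matrix (Fin d) (Fin d) ℝ} (hT : 0 < T) (hη : 0 ≤ η)
    (hL : ∀ i j, IntervalIntegrable (fun t => L₀ t i j) volume 0 T)
    {x : ℝ → Fin d → ℝ} (hx : ContinuousOn x (Set.Icc 0 T))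
    (hC : ∀ s ∈ Set.Icc (0:ℝ) T, ∀ t ∈ Set.Icc (0:ℝ) T, ‖x t - x s‖ ≤ C * |t - s| ^ η)
    {s t : ℝ} (hs : s ∈ Set.Icc (0:ℝ) T) (ht : t ∈ Set.Icc (0:ℝ) T) :
    ‖zTransform A L₀ x t - zTransform A L₀ x s‖ ≤
      (matSize A + ∫ s in (0:ℝ)..T, matSize (L₀ s)) * (C * |t - s| ^ η) := by
  rw [zTransform_eq A L₀ x ht, zTransform_eq A L₀ x hs, add_sub_add_comm, ← Matrix.mulVec_sub,
    ← intervalIntegral.integral_sub (integrand_integrable hT hL hx t)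
      (integrand_integrable hT hL hx s)]
  simp only [← Matrix.mulVec_sub]
  refine conv_bound A hT hL (extPath_holder hT hη hC s t) fun u => ?_
  have := extPath_holder hT hη hC (s - u) (t - u)
  rwa [sub_sub_sub_cancel_right] at this

lemma zTransform_contOn {d : ℕ} {T : ℝ} (A : Matrix (Fin d) (Fin d) ℝ)
    {L₀ : ℝ → Matrix (Fin d) (Fin d) ℝ} (hT : 0 < T)
    (hL : ∀ i j, IntervalIntegrable (fun t => L₀ t i j) volume 0 T)
    {x : ℝ → Fin d → ℝ} (hx : ContinuousOn x (Set.Icc 0 T)) :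
    ContinuousOn (zTransform A L₀ x) (Set.Icc 0 T) := by
  have hc := extPath_continuous hT hx
  obtain ⟨B, hB⟩ := extPath_bdd hT hx
  refine ContinuousOn.congr (Continuous.continuousOn (Continuous.add ?_ ?_))
    fun t ht => zTransform_eq A L₀ x ht
  · exact Continuous.matrix_mulVec continuous_const hc
  · refine intervalIntegral.continuous_of_dominated_interval
      (bound := fun s => matSize (L₀ s) * B) (fun t => mulVec_aesm hT hL
        (hc.comp (continuous_const.sub continuous_id))) (fun t => ?_)
      ((matSize_integrable hL).mul_const B) ?_
    · exact Eventually.of_forall fun s _ => (norm_mulVec_le_matSize _ _).trans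
        (mul_le_mul_of_nonneg_left (hB _) (matSize_nonneg _))
    · exact Eventually.of_forall fun s _ => Continuous.matrix_mulVec continuous_const
        (hc.comp (continuous_id.sub continuous_const))

/-- For a completely monotone kernel `K ∈ L¹([0,T])` with `K(t₀) ≻ 0`
for some `t₀ > 0` and resolvent of the first kind `L`, the map
`Z_t(x) = ∫_{[0,t]} L(ds)(x_{t-s} - x₀)` sends `C^η([0,T]; ℝ^d)` into
`C₀^η([0,T]; ℝ^d)` for every `η ∈ [0,1]`, and is a continuous linear operator
between these spaces. -/
theorem volterra_zTransform_continuous_linear_on_holder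
    {d : ℕ} (T : ℝ) (hT : 0 < T)
    (K : ℝ → Matrix (Fin d) (Fin d) ℝ)
    (A : Matrix (Fin d) (Fin d) ℝ) (L₀ : ℝ → Matrix (Fin d) (Fin d) ℝ)
    (hKint : ∀ i j, IntervalIntegrable (fun t => K t i j) volume 0 T)
    (hKcm : CompletelyMonotoneMat K)
    (hKpos : ∃ t₀ > (0:ℝ), ∀ v : Fin d → ℝ, v ≠ 0 → 0 < v ⬝ᵥ (K t₀).mulVec v)
    (hres : IsResolventFirstKind K A L₀)
    (η : ℝ) (hη : η ∈ Set.Icc (0:ℝ) 1) :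
    -- `Z` maps `C^η` into `C₀^η`
    (∀ x : ℝ → Fin d → ℝ, HolderOnIcc η T x →
      HolderOnIcc η T (zTransform A L₀ x) ∧ zTransform A L₀ x 0 = 0) ∧
    -- `Z` is linear
    (∀ x y : ℝ → Fin d → ℝ, HolderOnIcc η T x → HolderOnIcc η T y →
      ∀ t ∈ Set.Icc (0:ℝ) T,
        zTransform A L₀ (x + y) t = zTransform A L₀ x t + zTransform A L₀ y t) ∧
    (∀ (c : ℝ) (x : ℝ → Fin d → ℝ), HolderOnIcc η T x →
      ∀ t ∈ Set.Icc (0:ℝ) T, zTransform A L₀ (c • x) t = c • zTransform A L₀ x t) ∧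
    -- `Z` is continuous (bounded) for the `C^η`-norms
    (∃ M : ℝ, 0 ≤ M ∧ ∀ (C : ℝ) (x : ℝ → Fin d → ℝ), HolderNormBound η T x C →
      HolderNormBound η T (zTransform A L₀ x) (M * C)) := by
  have hL := hres.1 T hT
  set M₀ := matSize A + ∫ s in (0:ℝ)..T, matSize (L₀ s) with hM₀
  have hM₀0 : 0 ≤ M₀ := add_nonneg (matSize_nonneg A)
    (intervalIntegral.integral_nonneg hT.le fun _ _ => matSize_nonneg _)
  refine ⟨fun x hx => ⟨⟨zTransform_contOn A hT hL hx.1, ?_⟩, by simp [zTransform]⟩,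
    fun x y hx hy t ht => ?_, fun c x hx t ht => ?_, 2 * M₀, by positivity, fun C x hx => ?_⟩
  · obtain ⟨C, hC⟩ := hx.2
    refine ⟨M₀ * C, fun s hs t ht => ?_⟩
    rw [mul_assoc]
    exact zTransform_holder A hT hη.1 hL hx.1 hC hs ht
  · have e : ∀ r, extPath T (x + y) r = extPath T x r + extPath T y r := fun r => by
      simp only [extPath, Pi.add_apply]; abel
    simp only [zTransform_eq A L₀ _ ht, e, Matrix.mulVec_add]
    rw [intervalIntegral.integral_add (integrand_integrable hT hL hx.1 t)
      (integrand_integrable hT hL hy.1 t)]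
    abel
  · have e : ∀ r, extPath T (c • x) r = c • extPath T x r := fun r => by
      simp only [extPath, Pi.smul_apply, smul_sub]
    simp only [zTransform_eq A L₀ _ ht, e, Matrix.mulVec_smul]
    rw [intervalIntegral.integral_smul, smul_add]
  · obtain ⟨h1, h2⟩ := hx
    have h0 : (0:ℝ) ∈ Set.Icc (0:ℝ) T := ⟨le_rfl, hT.le⟩
    have hC0 : 0 ≤ C := (norm_nonneg _).trans (h1 0 h0)
    have hsup : ∀ r, ‖extPath T x r‖ ≤ 2 * C := fun r => by
      have := (norm_sub_le (x (clampT T r)) (x 0)).trans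
        (add_le_add (h1 _ (clampT_mem hT r)) (h1 0 h0))
      rw [extPath]; linarith
    refine ⟨fun t ht => ?_, fun s hs t ht => ?_⟩
    · rw [zTransform_eq A L₀ x ht]
      have := conv_bound A hT hL (hsup t) fun s => hsup (t - s)
      rw [← hM₀] at this
      linarith
    · rcases hη.1.eq_or_lt with h | h
      · subst h
        have hb : ∀ r, ‖extPath T x r‖ ≤ C := fun r => by
          have := h2 0 h0 _ (clampT_mem hT r)
          rwa [Real.rpow_zero, mul_one] at this
        rw [zTransform_eq A L₀ x ht, zTransform_eq A L₀ x hs, Real.rpow_zero]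
        have e1 := conv_bound A hT hL (hb t) fun u => hb (t - u)
        have e2 := conv_bound A hT hL (hb s) fun u => hb (s - u)
        rw [← hM₀] at e1 e2
        refine (norm_sub_le _ _).trans ?_
        linarith
      · have hxc : ContinuousOn x (Set.Icc 0 T) := by
          intro s hs
          rw [ContinuousWithinAt, tendsto_iff_norm_sub_tendsto_zero]
          refine squeeze_zero' (g := fun t => C * |t - s| ^ η)
            (Eventually.of_forall fun _ => norm_nonneg _)
            (eventually_nhdsWithin_of_forall fun t ht => h2 s hs t ht) ?_
          have hcont : Continuous fun t : ℝ => C * |t - s| ^ η :=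
            continuous_const.mul ((continuous_id.sub continuous_const).abs.rpow_const
              fun _ => Or.inr h.le)
          have := (hcont.tendsto s).mono_left (nhdsWithin_le_nhds (s := Set.Icc 0 T))
          simpa [Real.zero_rpow h.ne'] using this
        have := zTransform_holder A hT hη.1 hL hxc h2 hs ht
        rw [← hM₀] at this
        have hp : 0 ≤ M₀ * (C * |t - s| ^ η) := by positivity
        nlinarith

end
end

section
/- Fix T > 0 and let K be completely monotone with K(t₀) ≻ 0 for some t₀ > 0, and suppose there exists α ∈ (1/2,1] with sup_{t ∈ (0,T]} (t^{1−α}|K(t)| + t^{2−α}|K′(t)|) < ∞. Let η ∈ (1−α, 1]. Then C₀^η([0,T]; ℝ^d) ⊆ D(Γ) and Γ: C₀^η([0,T]; ℝ^d) → C₀([0,T]; ℝ^d) is a continuous linear operator. Moreover, for each x ∈ C([0,T]; ℝ^d) with Z(x) ∈ C₀^η([0,T]; ℝ^d) one has Γ(Z(x)) = x − x₀, and for each z ∈ C₀^η([0,T]; ℝ^d) one has Z(Γ(z)) = z. -/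
open MeasureTheory Set Filter Matrix
open scoped ENNReal NNReal Topology

noncomputable section

noncomputable def matNorm {d e : ℕ} (M : Matrix (Fin d) (Fin e) ℝ) : ℝ :=
  ‖LinearMap.toContinuousLinearMap (Matrix.mulVecLin M)‖

noncomputable def matDeriv {d : ℕ} (K : ℝ → Matrix (Fin d) (Fin d) ℝ) (t : ℝ) :
    Matrix (Fin d) (Fin d) ℝ :=
  Matrix.of fun i j => deriv (fun s => K s i j) t

noncomputable def gammaTransform {d : ℕ} (K : ℝ → Matrix (Fin d) (Fin d) ℝ)
    (z : ℝ → Fin d → ℝ) (t : ℝ) : Fin d → ℝ :=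
  (K t).mulVec (z t) + ∫ s in (0:ℝ)..t, (matDeriv K (t - s)).mulVec (z s - z t)

def MemDomGamma {d : ℕ} (T : ℝ) (K : ℝ → Matrix (Fin d) (Fin d) ℝ)
    (z : ℝ → Fin d → ℝ) : Prop :=
  ContinuousOn z (Set.Icc 0 T) ∧
  IntervalIntegrable (fun t => ‖(K t).mulVec (z t)‖) volume 0 T ∧
  IntervalIntegrable (fun t => ∫ s in (0:ℝ)..t, ‖(matDeriv K (t - s)).mulVec (z s - z t)‖)
    volume 0 T

namespace VGT

/-- scalar kernel hypotheses -/
structure Ker (k k' : ℝ → ℝ) (T α M : ℝ) : Prop where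
  hT : 0 < T
  hα0 : 0 < α
  hα1 : α ≤ 1
  hM : 0 ≤ M
  hd : ∀ t > 0, HasDerivAt k (k' t) t
  hc : ContinuousOn k' (Ioi 0)
  bk : ∀ t ∈ Ioc 0 T, |k t| ≤ M * t ^ (α - 1)
  bk' : ∀ t ∈ Ioc 0 T, |k' t| ≤ M * t ^ (α - 2)

/-- global Hoelder path, zero on the negative half line -/
structure Pth (z : ℝ → ℝ) (η C : ℝ) : Prop where
  hC : 0 ≤ C
  hη : 0 < η
  neg : ∀ t ≤ 0, z t = 0
  hol : ∀ s t, |z t - z s| ≤ C * |t - s| ^ η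

/-- scalar Gamma transform -/
def gs (k k' z : ℝ → ℝ) (t : ℝ) : ℝ :=
  k t * z t + ∫ s in (0:ℝ)..t, k' (t - s) * (z s - z t)

/-- clamping -/
def clp (T : ℝ) (t : ℝ) : ℝ := max 0 (min t T)

lemma clp_mem {T : ℝ} (hT : 0 < T) (t : ℝ) : clp T t ∈ Icc 0 T :=
  ⟨le_max_left _ _, max_le hT.le (min_le_right _ _)⟩

lemma clp_eq {T t : ℝ} (ht : t ∈ Icc 0 T) : clp T t = t := by
  simp [clp, ht.1, ht.2]

lemma clp_neg {T t : ℝ} (ht : t ≤ 0) : clp T t = 0 := by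
  simp [clp, ht]

lemma clp_cont (T : ℝ) : Continuous (clp T) := by unfold clp; fun_prop

lemma clp_lip (T s t : ℝ) : |clp T t - clp T s| ≤ |t - s| := by
  unfold clp
  refine (abs_max_sub_max_le_max _ _ _ _).trans ?_
  simp only [sub_self, abs_zero]
  refine max_le (abs_nonneg _) ?_
  refine (abs_min_sub_min_le_max _ _ _ _).trans ?_
  simp

lemma clp_contOn {E : Type*} [TopologicalSpace E] {T : ℝ} (hT : 0 < T) {z : ℝ → E}
    (hz : ContinuousOn z (Icc 0 T)) :
    Continuous (fun t => z (clp T t)) :=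
  hz.comp_continuous (clp_cont T) (clp_mem hT)

lemma Pth.of_hol {z : ℝ → ℝ} {η C T : ℝ} (hT : 0 < T) (hC : 0 ≤ C) (hη : 0 < η) (z0 : z 0 = 0)
    (h : ∀ s ∈ Icc (0:ℝ) T, ∀ t ∈ Icc (0:ℝ) T, |z t - z s| ≤ C * |t - s| ^ η) :
    Pth (fun t => z (clp T t)) η C where
  hC := hC
  hη := hη
  neg := fun t ht => by simp [clp_neg ht, z0]
  hol := fun s t => by
    refine (h _ (clp_mem hT s) _ (clp_mem hT t)).trans ?_
    exact mul_le_mul_of_nonneg_left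
      (Real.rpow_le_rpow (abs_nonneg _) (clp_lip T s t) hη.le) hC

lemma Pth.cont {z : ℝ → ℝ} {η C : ℝ} (h : Pth z η C) : Continuous z := by
  rw [continuous_iff_continuousAt]
  intro s
  rw [ContinuousAt, tendsto_iff_norm_sub_tendsto_zero]
  have h1 : Tendsto (fun t => C * |t - s| ^ η) (𝓝 s) (𝓝 0) := by
    have : Continuous (fun t : ℝ => C * |t - s| ^ η) := by
      have := h.hη.le
      fun_prop (disch := assumption)
    have h2 := this.tendsto s
    simpa [Real.zero_rpow h.hη.ne'] using h2
  exact squeeze_zero (fun _ => norm_nonneg _) (fun t => h.hol s t) h1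

lemma Ker.kc {k k' : ℝ → ℝ} {T α M : ℝ} (h : Ker k k' T α M) : ContinuousOn k (Ioi 0) :=
  fun t ht => (h.hd t ht).continuousAt.continuousWithinAt

lemma aesm_of_Ioi {f : ℝ → ℝ} (hf : ContinuousOn f (Ioi 0)) {T : ℝ} (hT : 0 ≤ T) :
    AEStronglyMeasurable f (volume.restrict (uIoc 0 T)) := by
  rw [uIoc_of_le hT]
  exact (hf.mono (fun x hx => hx.1)).aestronglyMeasurable measurableSet_Ioc

lemma Ker.intk {k k' : ℝ → ℝ} {T α M : ℝ} (h : Ker k k' T α M) :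
    IntervalIntegrable k volume 0 T := by
  have h1 : IntervalIntegrable (fun t : ℝ => M * t ^ (α - 1)) volume 0 T :=
    (intervalIntegral.intervalIntegrable_rpow' (by linarith [h.hα0])).const_mul M
  refine h1.mono_fun (aesm_of_Ioi h.kc h.hT.le) ?_
  rw [uIoc_of_le h.hT.le]
  refine (ae_restrict_mem measurableSet_Ioc).mono fun t ht => ?_
  refine (h.bk t ht).trans (le_abs_self _)

/-- basic bound for the integrand -/
lemma Ker.bd {k k' z : ℝ → ℝ} {T α M η C : ℝ} (h : Ker k k' T α M) (hz : Pth z η C)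
    (t u : ℝ) (hu : u ∈ Ioc 0 T) :
    |k' u * (z (t - u) - z t)| ≤ M * C * u ^ (α - 2 + η) := by
  rw [abs_mul, Real.rpow_add hu.1]
  have h1 := hz.hol t (t - u)
  rw [show |t - u - t| = u by rw [sub_sub_cancel_left, abs_neg, abs_of_pos hu.1]] at h1
  calc _ ≤ (M * u ^ (α - 2)) * (C * u ^ η) :=
        mul_le_mul (h.bk' u hu) h1 (abs_nonneg _) ((abs_nonneg _).trans (h.bk' u hu))
    _ = _ := by ring

lemma int_bd {T α η : ℝ} (hη : 1 - α < η) (c : ℝ) :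
    IntervalIntegrable (fun u : ℝ => c * u ^ (α - 2 + η)) volume 0 T :=
  (intervalIntegral.intervalIntegrable_rpow' (by linarith)).const_mul c

lemma Ker.intH {k k' z : ℝ → ℝ} {T α M η C : ℝ} (h : Ker k k' T α M) (hz : Pth z η C)
    (hη : 1 - α < η) (t : ℝ) :
    IntervalIntegrable (fun u => k' u * (z (t - u) - z t)) volume 0 T := by
  refine (int_bd hη (M * C)).mono_fun ?_ ?_
  · have := hz.cont
    exact (aesm_of_Ioi h.hc h.hT.le).mul (by fun_prop)
  · rw [uIoc_of_le h.hT.le]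
    refine (ae_restrict_mem measurableSet_Ioc).mono fun u hu => ?_
    exact (h.bd hz t u hu).trans (le_abs_self _)

lemma sub_mem_T {T t : ℝ} (ht : t ∈ Icc 0 T) : uIcc 0 t ⊆ uIcc 0 T := by
  rw [uIcc_of_le ht.1, uIcc_of_le (ht.1.trans ht.2)]
  exact Icc_subset_Icc_right ht.2

lemma Ker.formula {k k' z : ℝ → ℝ} {T α M η C : ℝ} (h : Ker k k' T α M) (hz : Pth z η C)
    (hη : 1 - α < η) (t : ℝ) (ht : t ∈ Icc 0 T) :
    gs k k' z t = k T * z t + ∫ u in (0:ℝ)..T, k' u * (z (t - u) - z t) := by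
  unfold gs
  rcases ht.1.eq_or_lt with h0 | h0
  · subst h0
    have : ∫ u in (0:ℝ)..T, k' u * (z (0 - u) - z 0) = 0 := by
      rw [intervalIntegral.integral_congr (g := fun _ => 0)]
      · simp
      · intro u hu
        rw [uIcc_of_le h.hT.le] at hu
        simp only
        rw [hz.neg (0 - u) (by linarith [hu.1]), hz.neg 0 le_rfl]; simp
    rw [this, hz.neg 0 le_rfl]; simp
  have e1 : ∫ s in (0:ℝ)..t, k' (t - s) * (z s - z t)
      = ∫ u in (0:ℝ)..t, k' u * (z (t - u) - z t) := by
    have := intervalIntegral.integral_comp_sub_left (a := 0) (b := t)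
      (fun u => k' u * (z (t - u) - z t)) t
    simpa using this
  have i1 := h.intH hz hη t
  have hs : uIcc t T ⊆ uIcc 0 T := by
    rw [uIcc_of_le ht.2, uIcc_of_le h.hT.le]; exact Icc_subset_Icc_left ht.1
  have e2 := intervalIntegral.integral_add_adjacent_intervals
    (i1.mono_set (sub_mem_T ht)) (i1.mono_set hs)
  have e3 : ∫ u in t..T, k' u * (z (t - u) - z t) = (k T - k t) * (- z t) := by
    rw [intervalIntegral.integral_congr (g := fun u => k' u * (- z t))]
    · rw [intervalIntegral.integral_mul_const]
      congr 1
      apply intervalIntegral.integral_eq_sub_of_hasDerivAt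
      · intro x hx
        rw [uIcc_of_le ht.2] at hx
        exact h.hd x (h0.trans_le hx.1)
      · apply ContinuousOn.intervalIntegrable
        rw [uIcc_of_le ht.2]
        exact h.hc.mono fun x hx => h0.trans_le hx.1
    · intro u hu
      rw [uIcc_of_le ht.2] at hu
      simp only
      rw [hz.neg (t - u) (by linarith [hu.1])]; ring
  rw [e1, ← e2, e3]; ring

lemma gs_congr {k k' z w : ℝ → ℝ} {T : ℝ} (hzw : ∀ t ∈ Icc 0 T, z t = w t) {t : ℝ}
    (ht : t ∈ Icc 0 T) : gs k k' z t = gs k k' w t := by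
  unfold gs
  rw [hzw t ht]
  congr 1
  apply intervalIntegral.integral_congr
  intro s hs
  rw [uIcc_of_le ht.1] at hs
  simp only
  rw [hzw s ⟨hs.1, hs.2.trans ht.2⟩]

lemma Ker.cont {k k' z : ℝ → ℝ} {T α M η C : ℝ} (h : Ker k k' T α M) (hz : Pth z η C)
    (hη : 1 - α < η) : 
    Continuous (fun t => k T * z t + ∫ u in (0:ℝ)..T, k' u * (z (t - u) - z t)) := by
  have hzc := hz.cont
  refine (continuous_const.mul hzc).add ?_
  refine intervalIntegral.continuous_of_dominated_interval
    (bound := fun u => M * C * u ^ (α - 2 + η)) ?_ ?_ (int_bd hη _) ?_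
  · intro t
    exact (aesm_of_Ioi h.hc h.hT.le).mul (by fun_prop)
  · intro t
    refine .of_forall fun u hu => ?_
    rw [uIoc_of_le h.hT.le] at hu
    exact h.bd hz t u hu
  · refine .of_forall fun u hu => ?_
    fun_prop

lemma Ker.gcont {k k' z : ℝ → ℝ} {T α M η C : ℝ} (h : Ker k k' T α M) (hz : Pth z η C)
    (hη : 1 - α < η) : ContinuousOn (gs k k' z) (Icc 0 T) :=
  (h.cont hz hη).continuousOn.congr (fun t ht => h.formula hz hη t ht)

lemma Ker.gbound {k k' z : ℝ → ℝ} {T α M η C : ℝ} (h : Ker k k' T α M) (hz : Pth z η C)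
    (hη : 1 - α < η) (t : ℝ) (ht : t ∈ Icc 0 T) :
    |gs k k' z t| ≤ (|k T| * T ^ η + M * ∫ u in (0:ℝ)..T, u ^ (α - 2 + η)) * C := by
  rw [h.formula hz hη t ht]
  refine (abs_add_le _ _).trans ?_
  have h1 : |z t| ≤ C * T ^ η := by
    have := hz.hol 0 t
    rw [hz.neg 0 le_rfl, sub_zero, sub_zero, abs_of_nonneg ht.1] at this
    refine this.trans ?_
    have := hz.hC
    have := hz.hη
    have := ht.1
    have := ht.2
    gcongr
  have h2 : |∫ u in (0:ℝ)..T, k' u * (z (t - u) - z t)|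
      ≤ ∫ u in (0:ℝ)..T, M * C * u ^ (α - 2 + η) := by
    rw [← Real.norm_eq_abs]
    exact intervalIntegral.norm_integral_le_of_norm_le h.hT.le
      (.of_forall fun u hu => h.bd hz t u hu) (int_bd hη _)
  rw [intervalIntegral.integral_const_mul] at h2
  rw [abs_mul]
  have h3 := mul_le_mul_of_nonneg_left h1 (abs_nonneg (k T))
  linarith

/-- primitive -/
lemma prim_sub {z : ℝ → ℝ} (hzc : Continuous z) (hneg : ∀ t ≤ 0, z t = 0) (τ u : ℝ) (hu : 0 ≤ u) :
    ∫ t in (0:ℝ)..τ, z (t - u) = ∫ t in (0:ℝ)..(τ - u), z t := by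
  rw [intervalIntegral.integral_comp_sub_right]
  have hi : ∀ a b, IntervalIntegrable z volume a b := fun a b => hzc.intervalIntegrable a b
  rw [← intervalIntegral.integral_add_adjacent_intervals (hi (0 - u) 0) (hi 0 (τ - u))]
  rw [intervalIntegral.integral_congr (a := 0 - u) (b := 0) (g := fun _ => 0)]
  · simp
  · intro s hs
    rw [uIcc_of_le (by linarith)] at hs
    exact hneg s hs.2

lemma Ker.ident {k k' z : ℝ → ℝ} {T α M η C : ℝ} (h : Ker k k' T α M) (hz : Pth z η C)
    (hη : 1 - α < η) (τ : ℝ) (hτ : τ ∈ Icc 0 T) :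
    ∫ t in (0:ℝ)..τ, gs k k' z t = ∫ u in (0:ℝ)..T, k u * z (τ - u) := by
  have hzc := hz.cont
  have hzi : ∀ a b, IntervalIntegrable z volume a b := fun a b => hzc.intervalIntegrable a b
  set W : ℝ → ℝ := fun r => ∫ t in (0:ℝ)..r, z t with hW
  have hWd : ∀ r, HasDerivAt W (z r) r := fun r =>
    intervalIntegral.integral_hasDerivAt_right (hzi 0 r)
      (hzc.stronglyMeasurableAtFilter _ _) hzc.continuousAt
  have hWc : Continuous W := continuous_iff_continuousAt.2 fun r => (hWd r).continuousAt
  have hWn : ∀ r ≤ 0, W r = 0 := by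
    intro r hr
    simp only [hW]
    rw [intervalIntegral.integral_congr (g := fun _ => 0)]
    · simp
    · intro s hs
      rw [uIcc_of_ge hr] at hs
      exact hz.neg s hs.2
  -- bound on W differences
  have hWb : ∃ B, 0 ≤ B ∧ ∀ u ∈ Ioc 0 T, |W (τ - u) - W τ| ≤ B * u := by
    obtain ⟨B, hB⟩ := (isCompact_Icc (a := -T) (b := T)).exists_bound_of_continuousOn
      hzc.continuousOn
    refine ⟨B, (norm_nonneg _).trans (hB 0 ⟨by linarith [h.hT], h.hT.le⟩), ?_⟩
    intro u hu
    simp only [hW]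
    rw [intervalIntegral.integral_interval_sub_left (hzi _ _) (hzi _ _)]
    have := intervalIntegral.norm_integral_le_of_norm_le_const (a := τ) (b := τ - u) (f := z)
      (C := B) (by
        intro x hx
        rw [uIoc_of_ge (by linarith [hu.1])] at hx
        exact hB x ⟨by linarith [hx.1, hτ.1, hu.2], by linarith [hx.2, hτ.2]⟩)
    rw [sub_sub_cancel_left, abs_neg, abs_of_pos hu.1] at this
    exact this
  obtain ⟨B, hB0, hWb⟩ := hWb
  -- Fubini
  have e1 : ∫ t in (0:ℝ)..τ, gs k k' z t = ∫ t in (0:ℝ)..τ,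
      (k T * z t + ∫ u in (0:ℝ)..T, k' u * (z (t - u) - z t)) := by
    apply intervalIntegral.integral_congr
    intro t ht
    rw [uIcc_of_le hτ.1] at ht
    exact h.formula hz hη t ⟨ht.1, ht.2.trans hτ.2⟩
  have hcont2 : Continuous (fun t => ∫ u in (0:ℝ)..T, k' u * (z (t - u) - z t)) := by
    have := (h.cont hz hη).sub (continuous_const.mul hzc : Continuous fun t => k T * z t)
    refine this.congr fun t => ?_
    simp
  rw [e1, intervalIntegral.integral_add ((hzi 0 τ).const_mul _) (hcont2.intervalIntegrable _ _),
    intervalIntegral.integral_const_mul]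
  rw [intervalIntegral_intervalIntegral_swap]
  swap
  · rw [IntegrableOn, Measure.volume_eq_prod, ← Measure.prod_restrict]
    have i1 : Integrable (fun u : ℝ => M * C * u ^ (α - 2 + η)) (volume.restrict (uIoc 0 T)) :=
      (intervalIntegrable_iff.1 (int_bd hη (M * C)))
    have : IsFiniteMeasure (volume.restrict (uIoc 0 τ)) := by
      rw [uIoc_of_le hτ.1]; infer_instance
    have i2 := i1.comp_snd (volume.restrict (uIoc 0 τ))
    refine i2.mono ?_ ?_
    · simp only [Function.uncurry_def]
      refine AEStronglyMeasurable.mul ?_ ?_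
      · exact (aesm_of_Ioi h.hc h.hT.le).comp_snd
      · exact Continuous.aestronglyMeasurable (by fun_prop)
    · rw [Measure.prod_restrict, uIoc_of_le h.hT.le]
      refine (ae_restrict_mem (measurableSet_uIoc.prod measurableSet_Ioc)).mono ?_
      rintro ⟨t, u⟩ ⟨-, hu⟩
      exact (h.bd hz t u hu).trans (le_abs_self _)
  have e2 : ∫ u in (0:ℝ)..T, ∫ t in (0:ℝ)..τ, k' u * (z (t - u) - z t)
      = ∫ u in (0:ℝ)..T, k' u * (W (τ - u) - W τ) := by
    apply intervalIntegral.integral_congr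
    intro u hu
    rw [uIcc_of_le h.hT.le] at hu
    simp only
    rw [intervalIntegral.integral_const_mul, intervalIntegral.integral_sub _ (hzi _ _),
      prim_sub hzc hz.neg τ u hu.1]
    exact Continuous.intervalIntegrable (by fun_prop) _ _
  rw [e2]
  -- integration by parts
  have j1 : IntervalIntegrable (fun u => k' u * (W (τ - u) - W τ)) volume 0 T := by
    have : IntervalIntegrable (fun u : ℝ => M * B * u ^ (α - 1)) volume 0 T :=
      (intervalIntegral.intervalIntegrable_rpow' (by linarith [h.hα0])).const_mul _
    refine this.mono_fun ((aesm_of_Ioi h.hc h.hT.le).mul ?_) ?_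
    · exact Continuous.aestronglyMeasurable (by fun_prop)
    · rw [uIoc_of_le h.hT.le]
      refine (ae_restrict_mem measurableSet_Ioc).mono fun u hu => ?_
      refine le_trans ?_ (le_abs_self _)
      beta_reduce
      rw [Real.norm_eq_abs, abs_mul, show α - 1 = (α - 2) + 1 by ring, Real.rpow_add hu.1,
        Real.rpow_one]
      calc _ ≤ (M * u ^ (α - 2)) * (B * u) :=
            mul_le_mul (h.bk' u hu) (hWb u hu) (abs_nonneg _)
              ((abs_nonneg _).trans (h.bk' u hu))
        _ = _ := by ring
  have j2 : IntervalIntegrable (fun u => k u * z (τ - u)) volume 0 T :=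
    h.intk.mul_continuousOn (by fun_prop)
  have key : ∫ u in (0:ℝ)..T, (k' u * (W (τ - u) - W τ) - k u * z (τ - u))
      = k T * (W (τ - T) - W τ) - 0 := by
    apply intervalIntegral.integral_eq_sub_of_hasDerivAt_of_tendsto
      (f := fun u => k u * (W (τ - u) - W τ)) h.hT
    · intro u hu
      have d1 : HasDerivAt (fun u => W (τ - u)) (z (τ - u) * (-1)) u :=
        (hWd (τ - u)).comp u ((hasDerivAt_id u).const_sub τ)
      have := (h.hd u hu.1).mul (d1.sub_const (W τ))
      exact this.congr_deriv (by ring)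
    · exact j1.sub j2
    · have lim : Tendsto (fun u : ℝ => M * B * u ^ α) (𝓝[>] 0) (𝓝 0) := by
        have c : Continuous (fun u : ℝ => M * B * u ^ α) := by
          have := h.hα0.le
          fun_prop (disch := assumption)
        have := (c.tendsto 0).mono_left (nhdsWithin_le_nhds (s := Ioi 0))
        simpa [Real.zero_rpow h.hα0.ne'] using this
      refine squeeze_zero_norm' ?_ lim
      filter_upwards [Ioc_mem_nhdsGT h.hT] with u hu
      rw [Real.norm_eq_abs, abs_mul, show α = (α - 1) + 1 by ring, Real.rpow_add hu.1,
        Real.rpow_one]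
      calc _ ≤ (M * u ^ (α - 1)) * (B * u) :=
            mul_le_mul (h.bk u hu) (hWb u hu) (abs_nonneg _)
              ((abs_nonneg _).trans (h.bk u hu))
        _ = _ := by ring_nf
    · have : ContinuousAt (fun u => k u * (W (τ - u) - W τ)) T :=
        (h.hd T h.hT).continuousAt.mul (by fun_prop)
      exact this.tendsto.mono_left nhdsWithin_le_nhds
  rw [intervalIntegral.integral_sub j1 j2, hWn (τ - T) (by linarith [hτ.2])] at key
  linarith

lemma Ker.ident' {k k' z : ℝ → ℝ} {T α M η C : ℝ} (h : Ker k k' T α M) (hz : Pth z η C)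
    (hη : 1 - α < η) (τ : ℝ) (hτ : τ ∈ Icc 0 T) :
    ∫ t in (0:ℝ)..τ, gs k k' z t = ∫ u in (0:ℝ)..τ, k u * z (τ - u) := by
  rw [h.ident hz hη τ hτ]
  have hzc := hz.cont
  have j2 : IntervalIntegrable (fun u => k u * z (τ - u)) volume 0 T :=
    h.intk.mul_continuousOn (by fun_prop)
  have hs : uIcc τ T ⊆ uIcc 0 T := by
    rw [uIcc_of_le hτ.2, uIcc_of_le h.hT.le]; exact Icc_subset_Icc_left hτ.1
  rw [← intervalIntegral.integral_add_adjacent_intervals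
    (j2.mono_set (sub_mem_T hτ)) (j2.mono_set hs)]
  rw [intervalIntegral.integral_congr (a := τ) (b := T) (g := fun _ => 0)]
  · simp
  · intro u hu
    rw [uIcc_of_le hτ.2] at hu
    simp only
    rw [hz.neg _ (by linarith [hu.1])]; simp


/-- one sided convolution -/
def cv (f g : ℝ → ℝ) (t : ℝ) : ℝ := ∫ u in (0:ℝ)..t, f u * g (t - u)

lemma cv_comm (f g : ℝ → ℝ) (t : ℝ) : cv f g t = cv g f t := by
  unfold cv
  have := intervalIntegral.integral_comp_sub_left (a := 0) (b := t)
      (fun u => f u * g (t - u)) t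
  simp only [sub_sub_cancel, sub_self, sub_zero] at this
  rw [← this]
  simp_rw [mul_comm]

lemma cv_congr {f f' g g' : ℝ → ℝ} {t : ℝ} (ht : 0 ≤ t) (hf : ∀ u ∈ Ioo 0 t, f u = f' u)
    (hg : ∀ u ∈ Ioo 0 t, g u = g' u) : cv f g t = cv f' g' t := by
  unfold cv
  rw [intervalIntegral.integral_of_le ht, intervalIntegral.integral_of_le ht,
    integral_Ioc_eq_integral_Ioo, integral_Ioc_eq_integral_Ioo]
  refine setIntegral_congr_fun measurableSet_Ioo fun u hu => ?_
  rw [hf u hu, hg (t - u) ⟨by linarith [hu.2], by linarith [hu.1]⟩]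

lemma cv_congr_ae {f f' g : ℝ → ℝ} {t T : ℝ} (ht : t ∈ Icc 0 T)
    (hf : ∀ᵐ u, u ∈ Ioc 0 T → f u = f' u) : cv f g t = cv f' g t := by
  unfold cv
  apply intervalIntegral.integral_congr_ae
  filter_upwards [hf] with u hu hu'
  rw [uIoc_of_le ht.1] at hu'
  rw [hu ⟨hu'.1, hu'.2.trans ht.2⟩]

lemma conv_eq {F G : ℝ → ℝ} (hF : ∀ u ≤ 0, F u = 0) (hG : ∀ u ≤ 0, G u = 0) {t : ℝ} (ht : 0 ≤ t) :
    convolution F G (ContinuousLinearMap.mul ℝ ℝ) volume t = cv F G t := by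
  unfold cv
  rw [convolution_def, intervalIntegral.integral_of_le ht]
  symm
  apply setIntegral_eq_integral_of_forall_compl_eq_zero
  intro u hu
  by_cases h : u ≤ 0
  · simp [hF u h]
  · have : t - u ≤ 0 := by
      by_contra h'
      exact hu ⟨by linarith, by linarith⟩
    simp [hG _ this]

lemma conv_neg {F G : ℝ → ℝ} (hF : ∀ u ≤ 0, F u = 0) (hG : ∀ u ≤ 0, G u = 0) {t : ℝ} (ht : t ≤ 0) :
    convolution F G (ContinuousLinearMap.mul ℝ ℝ) volume t = 0 := by
  rw [convolution_def]
  rw [integral_congr_ae (g := fun _ => 0)]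
  · simp
  refine .of_forall fun u => ?_
  simp only [ContinuousLinearMap.mul_apply']
  by_cases h : u ≤ 0
  · simp [hF u h]
  · simp [hG (t - u) (by linarith)]

/-- truncation -/
def tr (T : ℝ) (f : ℝ → ℝ) : ℝ → ℝ := indicator (Ioc 0 T) f

lemma tr_neg (T : ℝ) (f : ℝ → ℝ) (u : ℝ) (hu : u ≤ 0) : tr T f u = 0 := by
  simp [tr, hu]

lemma tr_eq {T : ℝ} (f : ℝ → ℝ) {u : ℝ} (hu : u ∈ Ioc 0 T) : tr T f u = f u := by
  simp only [tr]; rw [indicator_of_mem hu]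

lemma tr_int {T : ℝ} (hT : 0 < T) {f : ℝ → ℝ} (hf : IntervalIntegrable f volume 0 T) :
    Integrable (tr T f) := by
  rw [intervalIntegrable_iff_integrableOn_Ioc_of_le hT.le] at hf
  exact hf.integrable_indicator measurableSet_Ioc

lemma tr_conv {T : ℝ} (f g : ℝ → ℝ) {t : ℝ} (ht : t ∈ Icc 0 T) :
    convolution (tr T f) (tr T g) (ContinuousLinearMap.mul ℝ ℝ) volume t = cv f g t := by
  rw [conv_eq (tr_neg T f) (tr_neg T g) ht.1]
  apply cv_congr ht.1 <;>
  · intro u hu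
    exact tr_eq _ ⟨hu.1, hu.2.le.trans ht.2⟩

lemma cv_int {T : ℝ} (hT : 0 < T) {f g : ℝ → ℝ} (hf : IntervalIntegrable f volume 0 T)
    (hg : IntervalIntegrable g volume 0 T) : IntervalIntegrable (cv f g) volume 0 T := by
  have := (tr_int hT hf).integrable_convolution (ContinuousLinearMap.mul ℝ ℝ) (tr_int hT hg)
  rw [intervalIntegrable_iff_integrableOn_Ioc_of_le hT.le]
  refine this.integrableOn.congr_fun (fun t ht => ?_) measurableSet_Ioc
  exact tr_conv f g ⟨ht.1.le, ht.2⟩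

lemma cv_exists {T : ℝ} (hT : 0 < T) {f g : ℝ → ℝ} (hf : IntervalIntegrable f volume 0 T)
    (hg : IntervalIntegrable g volume 0 T) :
    ∀ᵐ t, t ∈ Ioc 0 T → IntervalIntegrable (fun u => f u * g (t - u)) volume 0 t := by
  have := (tr_int hT hf).ae_convolution_exists (ContinuousLinearMap.mul ℝ ℝ) (tr_int hT hg)
  filter_upwards [this] with t h ht
  rw [intervalIntegrable_iff_integrableOn_Ioo_of_le ht.1.le]
  refine (Integrable.integrableOn h).congr_fun (fun u hu => ?_) measurableSet_Ioo
  simp only [ContinuousLinearMap.mul_apply']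
  rw [tr_eq _ ⟨hu.1, hu.2.le.trans ht.2⟩, tr_eq _ ⟨by linarith [hu.2], by linarith [hu.1, ht.2]⟩]

lemma cv_integrand {T : ℝ} {f φ : ℝ → ℝ} (hf : IntervalIntegrable f volume 0 T)
    (hφ : ContinuousOn φ (Icc 0 T)) {t : ℝ} (ht : t ∈ Icc 0 T) :
    IntervalIntegrable (fun u => f u * φ (t - u)) volume 0 t := by
  refine (hf.mono_set (sub_mem_T ht)).mul_continuousOn ?_
  rw [uIcc_of_le ht.1]
  refine hφ.comp (by fun_prop) fun u hu => ⟨by linarith [hu.2], by linarith [hu.1, ht.2]⟩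

lemma cv_cont {T : ℝ} (hT : 0 < T) {f φ : ℝ → ℝ} (hf : IntervalIntegrable f volume 0 T)
    (hφ : ContinuousOn φ (Icc 0 T)) (h0 : φ 0 = 0) : ContinuousOn (cv f φ) (Icc 0 T) := by
  have hc := clp_contOn hT hφ
  obtain ⟨B, hB⟩ := isCompact_Icc.exists_bound_of_continuousOn hφ
  have key : Continuous (fun t => ∫ u in (0:ℝ)..T, f u * φ (clp T (t - u))) := by
    refine intervalIntegral.continuous_of_dominated_interval
      (bound := fun u => |f u| * B) ?_ ?_ (hf.abs.mul_const B) ?_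
    · intro t
      refine (intervalIntegrable_iff.1 hf).aestronglyMeasurable.mul ?_
      exact Continuous.aestronglyMeasurable (hc.comp (by fun_prop : Continuous fun u => t - u))
    · intro t
      refine .of_forall fun u hu => ?_
      rw [norm_mul]
      exact mul_le_mul_of_nonneg_left (hB _ (clp_mem hT _)) (abs_nonneg _)
    · refine .of_forall fun u hu => ?_
      exact continuous_const.mul (hc.comp (by fun_prop : Continuous fun t => t - u))
  refine key.continuousOn.congr fun t ht => ?_
  have j2 : IntervalIntegrable (fun u => f u * φ (clp T (t - u))) volume 0 T :=
    hf.mul_continuousOn (hc.comp (by fun_prop : Continuous fun u => t - u)).continuousOn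
  have hs : uIcc t T ⊆ uIcc 0 T := by
    rw [uIcc_of_le ht.2, uIcc_of_le hT.le]; exact Icc_subset_Icc_left ht.1
  simp only
  rw [← intervalIntegral.integral_add_adjacent_intervals
    (j2.mono_set (sub_mem_T ht)) (j2.mono_set hs)]
  rw [intervalIntegral.integral_congr (a := t) (b := T) (g := fun _ => 0)]
  · simp only [intervalIntegral.integral_zero, add_zero, cv]
    apply intervalIntegral.integral_congr
    intro u hu
    rw [uIcc_of_le ht.1] at hu
    simp only
    rw [clp_eq ⟨by linarith [hu.2], by linarith [hu.1, ht.2]⟩]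
  · intro u hu
    rw [uIcc_of_le ht.2] at hu
    simp only
    rw [clp_neg (by linarith [hu.1]), h0, mul_zero]

lemma cv_zero (f g : ℝ → ℝ) : cv f g 0 = 0 := by simp [cv]

lemma cv_assoc {T : ℝ} (hT : 0 < T) {f g φ : ℝ → ℝ} (hf : IntervalIntegrable f volume 0 T)
    (hg : IntervalIntegrable g volume 0 T) (hφ : ContinuousOn φ (Icc 0 T)) {t : ℝ}
    (ht : t ∈ Icc 0 T) : cv (cv f g) φ t = cv f (cv g φ) t := by
  have hφi : IntervalIntegrable φ volume 0 T := by
    apply ContinuousOn.intervalIntegrable; rwa [uIcc_of_le hT.le]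
  obtain ⟨B, hB⟩ := isCompact_Icc.exists_bound_of_continuousOn hφ
  have hB0 : 0 ≤ B := (norm_nonneg _).trans (hB 0 ⟨le_rfl, hT.le⟩)
  have If := tr_int hT hf
  have Ig := tr_int hT hg
  have Ip := tr_int hT hφi
  have hBt : ∀ u, ‖tr T φ u‖ ≤ B := by
    intro u
    by_cases hu : u ∈ Ioc 0 T
    · rw [tr_eq _ hu]; exact hB u ⟨hu.1.le, hu.2⟩
    · simp only [tr]; rw [indicator_of_notMem hu]; simpa
  have key := convolution_assoc (ContinuousLinearMap.mul ℝ ℝ) (ContinuousLinearMap.mul ℝ ℝ)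
    (ContinuousLinearMap.mul ℝ ℝ) (ContinuousLinearMap.mul ℝ ℝ) (f := tr T f) (g := tr T g)
    (k := tr T φ) (μ := volume) (ν := volume) (x₀ := t)
    (by intro x y z; simp [mul_assoc]) If.aestronglyMeasurable Ig.aestronglyMeasurable
    Ip.aestronglyMeasurable (If.ae_convolution_exists _ Ig)
    (Ig.norm.ae_convolution_exists _ Ip.norm) (by
      have m := (Ig.norm.integrable_convolution (ContinuousLinearMap.mul ℝ ℝ) Ip.norm)
      have m' := m.comp_sub_left t
      refine If.norm.mul_bdd (c := ∫ v, ‖tr T g v‖ * B) m'.aestronglyMeasurable ?_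
      refine .of_forall fun u => ?_
      rw [convolution_def]
      refine norm_integral_le_of_norm_le (Ig.norm.mul_const B) (.of_forall fun v => ?_)
      simp only [ContinuousLinearMap.mul_apply', norm_mul, norm_norm]
      exact mul_le_mul_of_nonneg_left (hBt _) (norm_nonneg _))
  rw [conv_eq (fun u hu => conv_neg (tr_neg T f) (tr_neg T g) hu) (tr_neg T φ) ht.1,
    conv_eq (tr_neg T f) (fun u hu => conv_neg (tr_neg T g) (tr_neg T φ) hu) ht.1] at key
  have hm : ∀ u ∈ Ioo 0 t, u ∈ Ioc 0 T := fun u hu => ⟨hu.1, hu.2.le.trans ht.2⟩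
  rw [cv_congr ht.1 (fun u hu => tr_conv f g ⟨hu.1.le, (hm u hu).2⟩)
      (fun u hu => tr_eq φ (hm u hu)),
    cv_congr ht.1 (fun u hu => tr_eq f (hm u hu))
      (fun u hu => tr_conv g φ ⟨hu.1.le, (hm u hu).2⟩)] at key
  exact key

lemma cv_add_left {T : ℝ} {f g φ : ℝ → ℝ} (hf : IntervalIntegrable f volume 0 T)
    (hg : IntervalIntegrable g volume 0 T) (hφ : ContinuousOn φ (Icc 0 T)) {t : ℝ}
    (ht : t ∈ Icc 0 T) : cv (fun u => f u + g u) φ t = cv f φ t + cv g φ t := by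
  unfold cv
  rw [← intervalIntegral.integral_add (cv_integrand hf hφ ht) (cv_integrand hg hφ ht)]
  simp_rw [add_mul]

lemma cv_const_left (c : ℝ) (f φ : ℝ → ℝ) (t : ℝ) :
    cv (fun u => c * f u) φ t = c * cv f φ t := by
  unfold cv
  rw [← intervalIntegral.integral_const_mul]
  simp_rw [mul_assoc]

lemma cv_sum_left {ι : Type*} [Fintype ι] {T : ℝ} {f : ι → ℝ → ℝ} {φ : ℝ → ℝ}
    (hf : ∀ j, IntervalIntegrable (f j) volume 0 T) (hφ : ContinuousOn φ (Icc 0 T)) {t : ℝ}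
    (ht : t ∈ Icc 0 T) : cv (fun u => ∑ j, f j u) φ t = ∑ j, cv (f j) φ t := by
  unfold cv
  rw [← intervalIntegral.integral_finsetSum (fun j _ => cv_integrand (hf j) hφ ht)]
  simp_rw [Finset.sum_mul]

lemma cv_sum_right {ι : Type*} [Fintype ι] {T : ℝ} {f : ℝ → ℝ} {φ : ι → ℝ → ℝ}
    (hf : IntervalIntegrable f volume 0 T) (hφ : ∀ j, ContinuousOn (φ j) (Icc 0 T)) {t : ℝ}
    (ht : t ∈ Icc 0 T) : cv f (fun u => ∑ j, φ j u) t = ∑ j, cv f (φ j) t := by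
  unfold cv
  rw [← intervalIntegral.integral_finsetSum (fun j _ => cv_integrand hf (hφ j) ht)]
  simp_rw [Finset.mul_sum]

lemma cv_add_right {T : ℝ} {f φ ψ : ℝ → ℝ} (hf : IntervalIntegrable f volume 0 T)
    (hφ : ContinuousOn φ (Icc 0 T)) (hψ : ContinuousOn ψ (Icc 0 T)) {t : ℝ}
    (ht : t ∈ Icc 0 T) : cv f (fun u => φ u + ψ u) t = cv f φ t + cv f ψ t := by
  unfold cv
  rw [← intervalIntegral.integral_add (cv_integrand hf hφ ht) (cv_integrand hf hψ ht)]
  simp_rw [mul_add]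

lemma cv_const_right (c : ℝ) (f φ : ℝ → ℝ) (t : ℝ) :
    cv f (fun u => c * φ u) t = c * cv f φ t := by
  rw [cv_comm, cv_const_left, cv_comm]

lemma cv_one (φ : ℝ → ℝ) (t : ℝ) : cv (fun _ => 1) φ t = ∫ u in (0:ℝ)..t, φ u := by
  rw [cv_comm]; simp [cv]

lemma resolv {ι : Type*} [Fintype ι] {T : ℝ} (hT : 0 < T) {p f g : ι → ℝ → ℝ} {c : ι → ℝ} {δ : ℝ}
    {φ : ℝ → ℝ}
    (hp : ∀ j, IntervalIntegrable (p j) volume 0 T)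
    (hf : ∀ j, IntervalIntegrable (f j) volume 0 T)
    (hg : ∀ j, IntervalIntegrable (g j) volume 0 T)
    (h : ∀ᵐ r, r ∈ Ioc 0 T → ∑ j, (c j * p j r + cv (f j) (g j) r) = δ)
    (hφ : ContinuousOn φ (Icc 0 T)) {t : ℝ} (ht : t ∈ Icc 0 T) :
    ∑ j, (c j * cv (p j) φ t + cv (f j) (cv (g j) φ) t) = δ * ∫ u in (0:ℝ)..t, φ u := by
  have e1 : cv (fun r => ∑ j, (c j * p j r + cv (f j) (g j) r)) φ t = cv (fun _ => δ * 1) φ t :=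
    cv_congr_ae ht (by simpa using h)
  rw [cv_const_left, cv_one, cv_sum_left _ hφ ht] at e1
  · rw [← e1]
    refine Finset.sum_congr rfl fun j _ => ?_
    rw [cv_add_left ((hp j).const_mul _) (cv_int hT (hf j) (hg j)) hφ ht, cv_const_left,
      cv_assoc hT (hf j) (hg j) hφ ht]
  · intro j
    exact ((hp j).const_mul _).add (cv_int hT (hf j) (hg j))

lemma eq_of_prim {T : ℝ} (hT : 0 < T) {p q : ℝ → ℝ} (hp : ContinuousOn p (Icc 0 T))
    (hq : ContinuousOn q (Icc 0 T))
    (h : ∀ t ∈ Icc 0 T, ∫ u in (0:ℝ)..t, p u = ∫ u in (0:ℝ)..t, q u) :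
    ∀ t ∈ Icc 0 T, p t = q t := by
  have h1 : EqOn p q (Ioo 0 T) := by
    intro t ht
    have d : ∀ r : ℝ → ℝ, ContinuousOn r (Icc 0 T) →
        HasDerivAt (fun s => ∫ u in (0:ℝ)..s, r u) (r t) t := by
      intro r hr
      have hn : Ioo 0 T ∈ 𝓝 t := isOpen_Ioo.mem_nhds ht
      refine intervalIntegral.integral_hasDerivAt_right ?_ ?_ ?_
      · apply ContinuousOn.intervalIntegrable
        rw [uIcc_of_le ht.1.le]
        exact hr.mono (Icc_subset_Icc_right ht.2.le)
      · exact (hr.mono Ioo_subset_Icc_self).stronglyMeasurableAtFilter isOpen_Ioo t ht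
      · exact (hr.mono Ioo_subset_Icc_self).continuousAt hn
    refine (d p hp).unique ((d q hq).congr_of_eventuallyEq ?_)
    filter_upwards [isOpen_Ioo.mem_nhds ht] with s hs
    exact h s ⟨hs.1.le, hs.2.le⟩
  exact fun t ht => h1.of_subset_closure hp hq Ioo_subset_Icc_self
    (by rw [closure_Ioo hT.ne]) ht


lemma entry_le {d : ℕ} (A : Matrix (Fin d) (Fin d) ℝ) (i j : Fin d) : |A i j| ≤ matNorm A := by
  have h := (LinearMap.toContinuousLinearMap (Matrix.mulVecLin A)).le_opNorm (Pi.single j 1)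
  have h1 : ‖(Pi.single j 1 : Fin d → ℝ)‖ ≤ 1 := by
    rw [pi_norm_le_iff_of_nonneg zero_le_one]
    intro k
    by_cases hk : k = j
    · subst hk; simp
    · simp [hk]
  have h2 := norm_le_pi_norm
    ((LinearMap.toContinuousLinearMap (Matrix.mulVecLin A)) (Pi.single j 1)) i
  have h3 : ((LinearMap.toContinuousLinearMap (Matrix.mulVecLin A)) (Pi.single j 1)) i = A i j := by
    simp
  rw [h3] at h2
  unfold matNorm
  calc |A i j| ≤ _ := h2
    _ ≤ _ := h
    _ ≤ _ := mul_le_of_le_one_right (norm_nonneg _) h1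

lemma mulVec_le {d : ℕ} (A : Matrix (Fin d) (Fin d) ℝ) (v : Fin d → ℝ) :
    ‖A.mulVec v‖ ≤ matNorm A * ‖v‖ :=
  (LinearMap.toContinuousLinearMap (Matrix.mulVecLin A)).le_opNorm v

lemma matNorm_nonneg {d : ℕ} (A : Matrix (Fin d) (Fin d) ℝ) : 0 ≤ matNorm A := norm_nonneg _

lemma le_of_rpow_mul {t a n M : ℝ} (ht : 0 < t) (h : t ^ a * n ≤ M) : n ≤ M * t ^ (-a) := by
  rw [Real.rpow_neg ht.le, ← div_eq_mul_inv, le_div_iff₀ (Real.rpow_pos_of_pos ht a)]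
  linarith

lemma bdK {d : ℕ} {K : ℝ → Matrix (Fin d) (Fin d) ℝ} {T α M : ℝ}
    (hM : ∀ t ∈ Set.Ioc (0:ℝ) T,
      t ^ (1 - α) * matNorm (K t) + t ^ (2 - α) * matNorm (matDeriv K t) ≤ M)
    (t : ℝ) (ht : t ∈ Ioc 0 T) :
    matNorm (K t) ≤ |M| * t ^ (α - 1) ∧ matNorm (matDeriv K t) ≤ |M| * t ^ (α - 2) := by
  have h := hM t ht
  have h1 := mul_nonneg (Real.rpow_nonneg ht.1.le (1 - α)) (matNorm_nonneg (K t))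
  have h2 := mul_nonneg (Real.rpow_nonneg ht.1.le (2 - α)) (matNorm_nonneg (matDeriv K t))
  have h3 := le_abs_self M
  constructor
  · rw [show α - 1 = -(1 - α) by ring]
    exact le_of_rpow_mul ht.1 (by linarith)
  · rw [show α - 2 = -(2 - α) by ring]
    exact le_of_rpow_mul ht.1 (by linarith)

lemma mkKer {d : ℕ} {K : ℝ → Matrix (Fin d) (Fin d) ℝ} {T α M : ℝ} (hT : 0 < T)
    (hKcm : CompletelyMonotoneMat K) (hα : α ∈ Set.Ioc (1/2 : ℝ) 1)
    (hKder : ∀ t > (0:ℝ), ∀ i j, HasDerivAt (fun s => K s i j) (matDeriv K t i j) t)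
    (hM : ∀ t ∈ Set.Ioc (0:ℝ) T,
      t ^ (1 - α) * matNorm (K t) + t ^ (2 - α) * matNorm (matDeriv K t) ≤ M) (i j : Fin d) :
    Ker (fun t => K t i j) (fun t => matDeriv K t i j) T α |M| where
  hT := hT
  hα0 := by linarith [hα.1]
  hα1 := hα.2
  hM := abs_nonneg M
  hd := fun t ht => hKder t ht i j
  hc := (hKcm.1 i j).continuousOn_deriv_of_isOpen isOpen_Ioi (by norm_cast)
  bk := fun t ht => (entry_le _ i j).trans (bdK hM t ht).1
  bk' := fun t ht => (entry_le _ i j).trans (bdK hM t ht).2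

lemma isum {ι : Type*} [Fintype ι] {f : ι → ℝ → ℝ} {a b : ℝ}
    (h : ∀ j, IntervalIntegrable (f j) volume a b) :
    IntervalIntegrable (fun s => ∑ j, f j s) volume a b := by
  have := IntervalIntegrable.sum Finset.univ fun j _ => h j
  rwa [Finset.sum_fn] at this

lemma ieval {d : ℕ} {f : ℝ → Fin d → ℝ} {t : ℝ} (ht : 0 ≤ t)
    (h : ∀ i, IntervalIntegrable (fun s => f s i) volume 0 t) (i : Fin d) :
    (∫ s in (0:ℝ)..t, f s) i = ∫ s in (0:ℝ)..t, f s i := by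
  rw [intervalIntegral.integral_of_le ht, intervalIntegral.integral_of_le ht]
  apply eval_integral
  intro i
  exact (intervalIntegrable_iff_integrableOn_Ioc_of_le ht).1 (h i)

lemma Ker.intG {k k' z : ℝ → ℝ} {T α M η C : ℝ} (h : Ker k k' T α M)
    (hz : Pth (fun t => z (clp T t)) η C)
    (hη : 1 - α < η) (t : ℝ) (ht : t ∈ Icc 0 T) :
    IntervalIntegrable (fun s => k' (t - s) * (z s - z t)) volume 0 t := by
  have h1 := ((h.intH hz hη t).mono_set (sub_mem_T ht)).comp_sub_left t
  simp only [sub_sub_cancel, sub_zero, sub_self] at h1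
  refine h1.symm.congr ?_
  rw [uIoc_of_le ht.1]
  intro s hs
  simp only
  rw [clp_eq ⟨hs.1.le, hs.2.trans ht.2⟩, clp_eq ht]

lemma gs_clp {k k' z : ℝ → ℝ} {T t : ℝ} (ht : t ∈ Icc 0 T) :
    gs k k' z t = gs k k' (fun t => z (clp T t)) t :=
  gs_congr (fun s hs => by rw [clp_eq hs]) ht

lemma gamma_comp {d : ℕ} {K : ℝ → Matrix (Fin d) (Fin d) ℝ} {T α M η C : ℝ}
    (hK : ∀ i j, Ker (fun t => K t i j) (fun t => matDeriv K t i j) T α M)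
    {z : ℝ → Fin d → ℝ} (hz : ∀ j, Pth (fun t => z (clp T t) j) η C) (hη : 1 - α < η)
    {t : ℝ} (ht : t ∈ Icc 0 T) (i : Fin d) :
    gammaTransform K z t i
      = ∑ j, gs (fun t => K t i j) (fun t => matDeriv K t i j) (fun t => z t j) t := by
  have hi : ∀ i j, IntervalIntegrable (fun s => matDeriv K (t - s) i j * (z s j - z t j))
      volume 0 t := fun i j => (hK i j).intG (z := fun t => z t j) (hz j) hη t ht
  have e : ∀ s i, (matDeriv K (t - s)).mulVec (z s - z t) i
      = ∑ j, matDeriv K (t - s) i j * (z s j - z t j) := by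
    intro s i; simp [Matrix.mulVec, dotProduct]
  unfold gammaTransform
  rw [Pi.add_apply, ieval ht.1]
  · simp_rw [e]
    rw [intervalIntegral.integral_finsetSum fun j _ => hi i j]
    simp only [gs, Finset.sum_add_distrib]
    rfl
  · intro i
    simp_rw [e]
    exact isum fun j => hi i j

lemma z_comp {d : ℕ} {A : Matrix (Fin d) (Fin d) ℝ} {L₀ : ℝ → Matrix (Fin d) (Fin d) ℝ} {T : ℝ}
    (hL : ∀ i j, IntervalIntegrable (fun t => L₀ t i j) volume 0 T)
    {x : ℝ → Fin d → ℝ} (hx : ContinuousOn x (Icc 0 T)) {t : ℝ} (ht : t ∈ Icc 0 T) (i : Fin d) :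
    zTransform A L₀ x t i
      = ∑ j, (A i j * (x t j - x 0 j) + cv (fun t => L₀ t i j) (fun t => x t j - x 0 j) t) := by
  have hy : ∀ j, ContinuousOn (fun t => x t j - x 0 j) (Icc 0 T) := fun j =>
    ((continuous_apply j).comp_continuousOn hx).sub continuousOn_const
  have hi : ∀ i j, IntervalIntegrable (fun s => L₀ s i j * (x (t - s) j - x 0 j)) volume 0 t :=
    fun i j => cv_integrand (hL i j) (hy j) ht
  have e : ∀ s i, (L₀ s).mulVec (x (t - s) - x 0) i
      = ∑ j, L₀ s i j * (x (t - s) j - x 0 j) := by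
    intro s i; simp [Matrix.mulVec, dotProduct]
  unfold zTransform
  rw [Pi.add_apply, ieval ht.1]
  · simp_rw [e]
    rw [intervalIntegral.integral_finsetSum fun j _ => hi i j]
    simp only [cv, Finset.sum_add_distrib]
    rfl
  · intro i
    simp_rw [e]
    exact isum fun j => hi i j

lemma mkPth {d : ℕ} {T η C : ℝ} (hT : 0 < T) (hη : 0 < η) {z : ℝ → Fin d → ℝ} (z0 : z 0 = 0)
    (hC : ∀ s ∈ Set.Icc (0:ℝ) T, ∀ t ∈ Set.Icc (0:ℝ) T, ‖z t - z s‖ ≤ C * |t - s| ^ η) :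
    0 ≤ C ∧ ∀ j, Pth (fun t => z (clp T t) j) η C := by
  have h0 : 0 ≤ C := by
    have h1 := (norm_nonneg _).trans (hC 0 ⟨le_rfl, hT.le⟩ T ⟨hT.le, le_rfl⟩)
    exact nonneg_of_mul_nonneg_left h1 (Real.rpow_pos_of_pos (by simpa using hT.ne') η)
  refine ⟨h0, fun j => Pth.of_hol (z := fun t => z t j) hT h0 hη (by simp [z0]) ?_⟩
  intro s hs t ht
  exact (norm_le_pi_norm (z t - z s) j).trans (hC s hs t ht)

lemma meas_int {f : ℝ → ℝ → ℝ} (hf : Measurable (Function.uncurry f)) :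
    StronglyMeasurable (fun t => ∫ s in Ioc 0 t, f t s) := by
  have : (fun t => ∫ s in Ioc 0 t, f t s) =
      fun t => ∫ s, (indicator {p : ℝ × ℝ | 0 < p.2 ∧ p.2 ≤ p.1} (Function.uncurry f)) (t, s) := by
    funext t
    rw [← integral_indicator measurableSet_Ioc]
    congr 1
  rw [this]
  apply StronglyMeasurable.integral_prod_right'
  apply Measurable.stronglyMeasurable
  apply hf.indicator
  exact (measurableSet_lt measurable_const measurable_snd).inter
    (measurableSet_le measurable_snd measurable_fst)

lemma memDom {d : ℕ} {K : ℝ → Matrix (Fin d) (Fin d) ℝ} {T α M η C : ℝ}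
    (hK : ∀ i j, Ker (fun t => K t i j) (fun t => matDeriv K t i j) T α M) (hT : 0 < T)
    (hM0 : 0 ≤ M)
    (hM : ∀ t ∈ Ioc 0 T, matNorm (matDeriv K t) ≤ M * t ^ (α - 2))
    {z : ℝ → Fin d → ℝ} (hη : 1 - α < η) (hC0 : 0 ≤ C) (hzc : ContinuousOn z (Icc 0 T))
    (hC : ∀ s ∈ Set.Icc (0:ℝ) T, ∀ t ∈ Set.Icc (0:ℝ) T, ‖z t - z s‖ ≤ C * |t - s| ^ η) :
    MemDomGamma T K z := by
  refine ⟨hzc, ?_, ?_⟩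
  · rw [intervalIntegrable_iff_integrableOn_Ioc_of_le hT.le]
    apply Integrable.norm
    apply Integrable.of_eval
    intro i
    rw [← IntegrableOn, ← intervalIntegrable_iff_integrableOn_Ioc_of_le hT.le]
    have : IntervalIntegrable (fun t => ∑ j, K t i j * z t j) volume 0 T := by
      refine isum fun j => (hK i j).intk.mul_continuousOn ?_
      rw [uIcc_of_le hT.le]
      exact (continuous_apply j).comp_continuousOn hzc
    exact this
  · set w : ℝ → Fin d → ℝ := fun t => z (clp T t) with hw
    have hwc : Continuous w := clp_contOn hT hzc
    set f : ℝ → ℝ → ℝ := fun t s => ‖(matDeriv K (t - s)).mulVec (w s - w t)‖ with hf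
    have hfm : Measurable (Function.uncurry f) := by
      have hwm : ∀ j, Measurable fun t => w t j := fun j =>
        ((continuous_apply j).comp hwc).measurable
      apply Measurable.norm
      rw [measurable_pi_iff]
      intro i
      simp only [Matrix.mulVec, dotProduct]
      refine Finset.measurable_sum _ fun j _ => Measurable.mul ?_ ?_
      · exact (measurable_deriv (fun s => K s i j)).comp (measurable_fst.sub measurable_snd)
      · exact ((hwm j).comp measurable_snd).sub ((hwm j).comp measurable_fst)
    rw [intervalIntegrable_iff_integrableOn_Ioc_of_le hT.le]
    have hb : ∀ t ∈ Ioc 0 T, ∀ s ∈ Ioo 0 t, f t s ≤ M * C * (t - s) ^ (α - 2 + η) := by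
      intro t ht s hs
      have hts : 0 < t - s := by linarith [hs.2]
      rw [Real.rpow_add hts]
      simp only [hf, hw]
      rw [clp_eq ⟨hs.1.le, hs.2.le.trans ht.2⟩, clp_eq ⟨ht.1.le, ht.2⟩]
      refine (mulVec_le _ _).trans ?_
      have h1 := hC t ⟨ht.1.le, ht.2⟩ s ⟨hs.1.le, hs.2.le.trans ht.2⟩
      rw [abs_sub_comm, abs_of_pos hts] at h1
      have h2 := hM (t - s) ⟨hts, by linarith [hs.1, ht.2]⟩
      calc _ ≤ (M * (t - s) ^ (α - 2)) * (C * (t - s) ^ η) :=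
            mul_le_mul h2 h1 (norm_nonneg _) ((matNorm_nonneg _).trans h2)
        _ = _ := by ring
    have hIntOn : IntegrableOn (fun t => ∫ s in Ioc 0 t, f t s) (Ioc 0 T) := by
      refine Measure.integrableOn_of_bounded (M := ∫ u in (0:ℝ)..T, M * C * u ^ (α - 2 + η))
        (by simp) (meas_int hfm).aestronglyMeasurable ?_
      refine (ae_restrict_mem measurableSet_Ioc).mono fun t ht => ?_
      have ii := int_bd (T := t) hη (M * C)
      have ii' := ii.comp_sub_left t
      simp only [sub_zero, sub_self] at ii'
      have e := intervalIntegral.integral_comp_sub_left (a := 0) (b := t)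
        (fun u : ℝ => M * C * u ^ (α - 2 + η)) t
      simp only [sub_zero, sub_self] at e
      calc ‖∫ s in Ioc 0 t, f t s‖ ≤ ∫ s in Ioo 0 t, M * C * (t - s) ^ (α - 2 + η) := by
            rw [integral_Ioc_eq_integral_Ioo]
            refine norm_integral_le_of_norm_le ?_ ?_
            · exact (intervalIntegrable_iff_integrableOn_Ioo_of_le ht.1.le).1 ii'.symm
            · refine (ae_restrict_mem measurableSet_Ioo).mono fun s hs => ?_
              rw [Real.norm_of_nonneg (norm_nonneg _)]
              exact hb t ht s hs
        _ = ∫ u in (0:ℝ)..t, M * C * u ^ (α - 2 + η) := by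
            rw [← e, intervalIntegral.integral_of_le ht.1.le, integral_Ioc_eq_integral_Ioo]
        _ ≤ _ := by
            apply intervalIntegral.integral_mono_interval le_rfl ht.1.le ht.2 _ (int_bd hη _)
            refine (ae_restrict_mem measurableSet_Ioc).mono fun u hu => ?_
            exact mul_nonneg (mul_nonneg hM0 hC0) (Real.rpow_nonneg hu.1.le _)
    refine hIntOn.congr_fun (fun t ht => ?_) measurableSet_Ioc
    simp only
    rw [intervalIntegral.integral_of_le ht.1.le]
    refine setIntegral_congr_fun measurableSet_Ioc fun s hs => ?_
    simp only [hf, hw]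
    rw [clp_eq ⟨hs.1.le, hs.2.trans ht.2⟩, clp_eq ⟨ht.1.le, ht.2⟩]


lemma gamma_cont {d : ℕ} {K : ℝ → Matrix (Fin d) (Fin d) ℝ} {T α M η C : ℝ}
    (hK : ∀ i j, Ker (fun t => K t i j) (fun t => matDeriv K t i j) T α M)
    {z : ℝ → Fin d → ℝ} (hz : ∀ j, Pth (fun t => z (clp T t) j) η C) (hη : 1 - α < η) :
    ContinuousOn (gammaTransform K z) (Icc 0 T) := by
  rw [continuousOn_pi]
  intro i
  have : ContinuousOn (fun t => ∑ j, gs (fun t => K t i j) (fun t => matDeriv K t i j)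
      (fun t => z (clp T t) j) t) (Icc 0 T) :=
    continuousOn_finsetSum Finset.univ fun j _ => (hK i j).gcont (hz j) hη
  refine this.congr fun t ht => ?_
  simp only
  rw [gamma_comp hK hz hη ht i]
  exact Finset.sum_congr rfl fun j _ => gs_clp (z := fun t => z t j) ht

lemma gamma_prim {d : ℕ} {K : ℝ → Matrix (Fin d) (Fin d) ℝ} {T α M η C : ℝ}
    (hK : ∀ i j, Ker (fun t => K t i j) (fun t => matDeriv K t i j) T α M)
    {z : ℝ → Fin d → ℝ} (hz : ∀ j, Pth (fun t => z (clp T t) j) η C) (hη : 1 - α < η)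
    {i : Fin d} {τ : ℝ} (hτ : τ ∈ Icc 0 T) :
    ∫ t in (0:ℝ)..τ, gammaTransform K z t i
      = ∑ j, cv (fun t => K t i j) (fun t => z t j) τ := by
  have e1 : ∫ t in (0:ℝ)..τ, gammaTransform K z t i = ∫ t in (0:ℝ)..τ,
      ∑ j, gs (fun t => K t i j) (fun t => matDeriv K t i j) (fun t => z (clp T t) j) t := by
    apply intervalIntegral.integral_congr
    intro t ht
    rw [uIcc_of_le hτ.1] at ht
    have ht' : t ∈ Icc 0 T := ⟨ht.1, ht.2.trans hτ.2⟩
    simp only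
    rw [gamma_comp hK hz hη ht' i]
    exact Finset.sum_congr rfl fun j _ => gs_clp (z := fun t => z t j) ht'
  rw [e1, intervalIntegral.integral_finsetSum]
  · refine Finset.sum_congr rfl fun j _ => ?_
    rw [(hK i j).ident' (hz j) hη τ hτ]
    refine cv_congr (g := fun t => z (clp T t) j) hτ.1 (fun u _ => rfl) fun u hu => ?_
    rw [clp_eq ⟨hu.1.le, hu.2.le.trans hτ.2⟩]
  · intro j _
    apply ContinuousOn.intervalIntegrable
    rw [uIcc_of_le hτ.1]
    exact ((hK i j).gcont (hz j) hη).mono (Icc_subset_Icc_right hτ.2)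

lemma res2 {d : ℕ} {K L₀ : ℝ → Matrix (Fin d) (Fin d) ℝ} {A : Matrix (Fin d) (Fin d) ℝ} {T : ℝ}
    (hT : 0 < T) (hK : ∀ i j, IntervalIntegrable (fun t => K t i j) volume 0 T)
    (hL : ∀ i j, IntervalIntegrable (fun t => L₀ t i j) volume 0 T)
    (h : ∀ t > (0:ℝ), ∀ i j,
    (A * K t) i j + (∫ s in (0:ℝ)..t, (L₀ s * K (t - s)) i j) = (1 : Matrix (Fin d) (Fin d) ℝ) i j)
    (i k : Fin d) :
    ∀ᵐ r, r ∈ Ioc 0 T → ∑ j, (A i j * K r j k + cv (fun t => L₀ t i j) (fun t => K t j k) r)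
      = (1 : Matrix (Fin d) (Fin d) ℝ) i k := by
  have hex : ∀ᵐ r, ∀ j, r ∈ Ioc 0 T →
      IntervalIntegrable (fun u => L₀ u i j * K (r - u) j k) volume 0 r :=
    ae_all_iff.2 fun j => cv_exists hT (hL i j) (hK j k)
  filter_upwards [hex] with r hr hr'
  rw [← h r hr'.1 i k, Finset.sum_add_distrib]
  simp only [Matrix.mul_apply, cv]
  rw [intervalIntegral.integral_finsetSum fun j _ => hr j hr']

lemma res1 {d : ℕ} {K L₀ : ℝ → Matrix (Fin d) (Fin d) ℝ} {A : Matrix (Fin d) (Fin d) ℝ} {T : ℝ}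
    (hT : 0 < T) (hK : ∀ i j, IntervalIntegrable (fun t => K t i j) volume 0 T)
    (hL : ∀ i j, IntervalIntegrable (fun t => L₀ t i j) volume 0 T)
    (h : ∀ t > (0:ℝ), ∀ i j,
    (K t * A) i j + (∫ s in (0:ℝ)..t, (K (t - s) * L₀ s) i j) = (1 : Matrix (Fin d) (Fin d) ℝ) i j)
    (i k : Fin d) :
    ∀ᵐ r, r ∈ Ioc 0 T → ∑ j, (A j k * K r i j + cv (fun t => K t i j) (fun t => L₀ t j k) r)
      = (1 : Matrix (Fin d) (Fin d) ℝ) i k := by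
  have hex : ∀ᵐ r, ∀ j, r ∈ Ioc 0 T →
      IntervalIntegrable (fun u => L₀ u j k * K (r - u) i j) volume 0 r :=
    ae_all_iff.2 fun j => cv_exists hT (hL j k) (hK i j)
  filter_upwards [hex] with r hr hr'
  rw [← h r hr'.1 i k, Finset.sum_add_distrib]
  simp_rw [cv_comm (fun t => K t i _), Matrix.mul_apply, mul_comm (K _ i _), cv]
  rw [intervalIntegral.integral_finsetSum fun j _ => hr j hr']

end VGT

/-- For a completely monotone kernel `K` with
`sup_{t ∈ (0,T]} (t^{1-α}|K(t)| + t^{2-α}|K'(t)|) < ∞` for some `α ∈ (1/2,1]`, and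
`η ∈ (1-α,1]`, the operator `Γ` is well-defined and continuous linear from
`C₀^η([0,T]; ℝ^d)` to `C₀([0,T]; ℝ^d)`, and `Γ(Z(x)) = x - x₀` whenever
`Z(x) ∈ C₀^η`, while `Z(Γ(z)) = z` for all `z ∈ C₀^η`. -/
theorem volterra_gammaTransform_singular_kernel
    {d : ℕ} (T : ℝ) (hT : 0 < T)
    (K : ℝ → Matrix (Fin d) (Fin d) ℝ)
    (A : Matrix (Fin d) (Fin d) ℝ) (L₀ : ℝ → Matrix (Fin d) (Fin d) ℝ)
    (hKcm : CompletelyMonotoneMat K)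
    (hKpos : ∃ t₀ > (0:ℝ), ∀ v : Fin d → ℝ, v ≠ 0 → 0 < v ⬝ᵥ (K t₀).mulVec v)
    (hres : IsResolventFirstKind K A L₀)
    (α : ℝ) (hα : α ∈ Set.Ioc (1/2 : ℝ) 1)
    (hKder : ∀ t > (0:ℝ), ∀ i j, HasDerivAt (fun s => K s i j) (matDeriv K t i j) t)
    (hKbound : ∃ M : ℝ, ∀ t ∈ Set.Ioc (0:ℝ) T,
      t ^ (1 - α) * matNorm (K t) + t ^ (2 - α) * matNorm (matDeriv K t) ≤ M)
    (η : ℝ) (hη : η ∈ Set.Ioc (1 - α) 1) :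
    -- `C₀^η([0,T]) ⊆ D(Γ)` and `Γ` maps `C₀^η` into `C₀`
    (∀ z : ℝ → Fin d → ℝ, z 0 = 0 → HolderOnIcc η T z →
      MemDomGamma T K z ∧ ContinuousOn (gammaTransform K z) (Set.Icc 0 T) ∧
        gammaTransform K z 0 = 0) ∧
    -- `Γ` is linear
    (∀ z w : ℝ → Fin d → ℝ, z 0 = 0 → w 0 = 0 → HolderOnIcc η T z → HolderOnIcc η T w →
      ∀ t ∈ Set.Icc (0:ℝ) T,
        gammaTransform K (z + w) t = gammaTransform K z t + gammaTransform K w t) ∧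
    (∀ (c : ℝ) (z : ℝ → Fin d → ℝ), z 0 = 0 → HolderOnIcc η T z →
      ∀ t ∈ Set.Icc (0:ℝ) T, gammaTransform K (c • z) t = c • gammaTransform K z t) ∧
    -- `Γ : C₀^η → C₀` is continuous (bounded)
    (∃ M : ℝ, 0 ≤ M ∧ ∀ (C : ℝ) (z : ℝ → Fin d → ℝ), z 0 = 0 → HolderNormBound η T z C →
      ∀ t ∈ Set.Icc (0:ℝ) T, ‖gammaTransform K z t‖ ≤ M * C) ∧
    -- `Γ(Z(x)) = x - x₀` whenever `Z(x) ∈ C₀^η`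
    (∀ x : ℝ → Fin d → ℝ, ContinuousOn x (Set.Icc 0 T) →
      HolderOnIcc η T (zTransform A L₀ x) →
      ∀ t ∈ Set.Icc (0:ℝ) T, gammaTransform K (zTransform A L₀ x) t = x t - x 0) ∧
    -- `Z(Γ(z)) = z` for `z ∈ C₀^η`
    (∀ z : ℝ → Fin d → ℝ, z 0 = 0 → HolderOnIcc η T z →
      ∀ t ∈ Set.Icc (0:ℝ) T, zTransform A L₀ (gammaTransform K z) t = z t) := by
  obtain ⟨M, hM⟩ := hKbound
  have hK := VGT.mkKer hT hKcm hα hKder hM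
  have hη1 : 1 - α < η := hη.1
  have hη0 : 0 < η := by linarith [hη.1, hα.2]
  have hL := hres.1 T hT
  refine ⟨?_, ?_, ?_, ?_, ?_, ?_⟩
  · rintro z z0 ⟨hzc, C, hC⟩
    obtain ⟨hC0, hP⟩ := VGT.mkPth hT hη0 z0 hC
    refine ⟨VGT.memDom hK hT (abs_nonneg M) (fun t ht => (VGT.bdK hM t ht).2) hη1 hC0 hzc hC,
      VGT.gamma_cont hK hP hη1, ?_⟩
    simp [gammaTransform, z0]
  · rintro z w z0 w0 ⟨hzc, C, hC⟩ ⟨hwc, D, hD⟩ t ht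
    obtain ⟨hC0, hP⟩ := VGT.mkPth hT hη0 z0 hC
    obtain ⟨hD0, hQ⟩ := VGT.mkPth hT hη0 w0 hD
    have hE : ∀ s ∈ Set.Icc (0:ℝ) T, ∀ t ∈ Set.Icc (0:ℝ) T,
        ‖(z + w) t - (z + w) s‖ ≤ (C + D) * |t - s| ^ η := by
      intro s hs t ht
      have e : (z + w) t - (z + w) s = (z t - z s) + (w t - w s) := by
        simp only [Pi.add_apply]; abel
      rw [e, add_mul]
      exact (norm_add_le _ _).trans (add_le_add (hC s hs t ht) (hD s hs t ht))
    obtain ⟨-, hR⟩ := VGT.mkPth hT hη0 (show (z + w) 0 = 0 by simp [z0, w0]) hE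
    funext i
    rw [Pi.add_apply, VGT.gamma_comp hK hR hη1 ht, VGT.gamma_comp hK hP hη1 ht,
      VGT.gamma_comp hK hQ hη1 ht, ← Finset.sum_add_distrib]
    refine Finset.sum_congr rfl fun j _ => ?_
    have i1 := (hK i j).intG (z := fun t => z t j) (hP j) hη1 t ht
    have i2 := (hK i j).intG (z := fun t => w t j) (hQ j) hη1 t ht
    have e := intervalIntegral.integral_add i1 i2
    have e' : ∫ s in (0:ℝ)..t, matDeriv K (t - s) i j * ((z + w) s j - (z + w) t j)
        = ∫ s in (0:ℝ)..t, (matDeriv K (t - s) i j * (z s j - z t j)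
          + matDeriv K (t - s) i j * (w s j - w t j)) := by
      congr 1; funext s; simp only [Pi.add_apply]; ring
    simp only [VGT.gs]
    rw [e', e]
    simp only [Pi.add_apply]; ring
  · rintro c z z0 ⟨hzc, C, hC⟩ t ht
    have e : (fun s => (matDeriv K (t - s)).mulVec ((c • z) s - (c • z) t))
        = fun s => c • (matDeriv K (t - s)).mulVec (z s - z t) := by
      funext s
      rw [← Matrix.mulVec_smul, smul_sub]; rfl
    unfold gammaTransform
    rw [e, intervalIntegral.integral_smul, smul_add, ← Matrix.mulVec_smul]; rfl
  · set B : Fin d → Fin d → ℝ := fun i j =>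
      |K T i j| * T ^ η + |M| * ∫ u in (0:ℝ)..T, u ^ (α - 2 + η) with hB
    have hB0 : ∀ i j, 0 ≤ B i j := by
      intro i j
      refine add_nonneg (by positivity) (mul_nonneg (abs_nonneg _) ?_)
      exact intervalIntegral.integral_nonneg hT.le fun u hu => Real.rpow_nonneg hu.1 _
    have hs0 : ∀ i, 0 ≤ ∑ j, B i j := fun i => Finset.sum_nonneg fun j _ => hB0 i j
    refine ⟨∑ i, ∑ j, B i j, Finset.sum_nonneg fun i _ => hs0 i, ?_⟩
    rintro C z z0 ⟨-, hC⟩ t ht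
    obtain ⟨hC0, hP⟩ := VGT.mkPth hT hη0 z0 hC
    rw [pi_norm_le_iff_of_nonneg (mul_nonneg (Finset.sum_nonneg fun i _ => hs0 i) hC0)]
    intro i
    rw [VGT.gamma_comp hK hP hη1 ht]
    calc _ ≤ ∑ j, B i j * C := by
          refine (norm_sum_le _ _).trans (Finset.sum_le_sum fun j _ => ?_)
          rw [VGT.gs_clp ht]
          exact (hK i j).gbound (hP j) hη1 t ht
      _ = (∑ j, B i j) * C := by rw [Finset.sum_mul]
      _ ≤ _ := mul_le_mul_of_nonneg_right
          (Finset.single_le_sum (f := fun i => ∑ j, B i j) (fun i _ => hs0 i)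
            (Finset.mem_univ i)) hC0
  · rintro x hx ⟨hZc, C, hC⟩ t ht
    have Z0 : zTransform A L₀ x 0 = 0 := by simp [zTransform]
    obtain ⟨hC0, hP⟩ := VGT.mkPth hT hη0 Z0 hC
    have hy : ∀ j, ContinuousOn (fun t => x t j - x 0 j) (Icc 0 T) := fun j =>
      ((continuous_apply j).comp_continuousOn hx).sub continuousOn_const
    funext i
    have hcont : ContinuousOn (fun t => gammaTransform K (zTransform A L₀ x) t i) (Icc 0 T) :=
      (continuous_apply i).comp_continuousOn (VGT.gamma_cont hK hP hη1)
    refine VGT.eq_of_prim hT hcont (hy i) ?_ t ht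
    intro τ hτ
    rw [VGT.gamma_prim hK hP hη1 hτ]
    have hLy : ∀ j k, ContinuousOn (VGT.cv (fun t => L₀ t j k) (fun t => x t k - x 0 k))
        (Icc 0 T) := fun j k => VGT.cv_cont hT (hL j k) (hy k) (by simp)
    have e1 : ∀ j, VGT.cv (fun t => K t i j) (fun t => zTransform A L₀ x t j) τ
        = ∑ k, (A j k * VGT.cv (fun t => K t i j) (fun t => x t k - x 0 k) τ
          + VGT.cv (fun t => K t i j)
              (VGT.cv (fun t => L₀ t j k) (fun t => x t k - x 0 k)) τ) := by
      intro j
      rw [VGT.cv_congr hτ.1 (fun u _ => rfl)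
        (fun u hu => VGT.z_comp hL hx ⟨hu.1.le, hu.2.le.trans hτ.2⟩ j),
        VGT.cv_sum_right (φ := fun k t => A j k * (x t k - x 0 k)
          + VGT.cv (fun t => L₀ t j k) (fun t => x t k - x 0 k) t) (hK i j).intk
          (fun k => (continuousOn_const.mul (hy k)).add (hLy j k)) hτ]
      refine Finset.sum_congr rfl fun k _ => ?_
      rw [VGT.cv_add_right (φ := fun t => A j k * (x t k - x 0 k)) (hK i j).intk (continuousOn_const.mul (hy k)) (hLy j k) hτ,
        VGT.cv_const_right]
    simp_rw [e1]
    rw [Finset.sum_comm]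
    have e2 : ∀ k, _ := fun k => VGT.resolv (φ := fun t => x t k - x 0 k) hT
      (c := fun j => A j k) (δ := (1 : Matrix (Fin d) (Fin d) ℝ) i k)
      (fun j => (hK i j).intk) (fun j => (hK i j).intk) (fun j => hL j k)
      (VGT.res1 hT (fun i j => (hK i j).intk) hL hres.2.1 i k) (hy k) hτ
    rw [Finset.sum_congr rfl fun k _ => e2 k]
    simp [Matrix.one_apply]
  · rintro z z0 ⟨hzc, C, hC⟩ t ht
    obtain ⟨hC0, hP⟩ := VGT.mkPth hT hη0 z0 hC
    have hγ := VGT.gamma_cont hK hP hη1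
    have γ0 : gammaTransform K z 0 = 0 := by simp [gammaTransform, z0]
    have hγj : ∀ j, ContinuousOn (fun t => gammaTransform K z t j) (Icc 0 T) := fun j =>
      (continuous_apply j).comp_continuousOn hγ
    have hzj : ∀ j, ContinuousOn (fun t => z t j) (Icc 0 T) := fun j =>
      (continuous_apply j).comp_continuousOn hzc
    have hzcomp : ∀ t ∈ Icc 0 T, ∀ i, zTransform A L₀ (gammaTransform K z) t i
        = ∑ j, (A i j * gammaTransform K z t j
          + VGT.cv (fun t => L₀ t i j) (fun t => gammaTransform K z t j) t) := by
      intro t ht i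
      rw [VGT.z_comp hL hγ ht i]
      simp [γ0]
    have hLy : ∀ i j, ContinuousOn (VGT.cv (fun t => L₀ t i j) (fun t => gammaTransform K z t j))
        (Icc 0 T) := fun i j => VGT.cv_cont hT (hL i j) (hγj j) (by simp [γ0])
    have hKz : ∀ j k, ContinuousOn (VGT.cv (fun t => K t j k) (fun t => z t k))
        (Icc 0 T) := fun j k => VGT.cv_cont hT (hK j k).intk (hzj k) (by simp [z0])
    have h1i : IntervalIntegrable (fun _ : ℝ => (1:ℝ)) volume 0 T := by simp
    funext i
    have hterm : ∀ j, ContinuousOn (fun t => A i j * gammaTransform K z t j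
          + VGT.cv (fun t => L₀ t i j) (fun t => gammaTransform K z t j) t) (Icc 0 T) :=
      fun j => (continuousOn_const.mul (hγj j)).add (hLy i j)
    have hcont : ContinuousOn (fun t => zTransform A L₀ (gammaTransform K z) t i) (Icc 0 T) :=
      (continuousOn_finsetSum Finset.univ fun j _ => hterm j).congr
        fun t ht => hzcomp t ht i
    refine VGT.eq_of_prim hT hcont (hzj i) ?_ t ht
    intro τ hτ
    have prim : ∀ j, ∀ τ ∈ Icc 0 T, VGT.cv (fun _ => 1) (fun t => gammaTransform K z t j) τ
        = ∑ k, VGT.cv (fun t => K t j k) (fun t => z t k) τ := by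
      intro j τ hτ
      rw [VGT.cv_one, VGT.gamma_prim hK hP hη1 hτ]
    have e1 : ∫ u in (0:ℝ)..τ, zTransform A L₀ (gammaTransform K z) u i
        = ∑ j, ∑ k, (A i j * VGT.cv (fun t => K t j k) (fun t => z t k) τ
          + VGT.cv (fun t => L₀ t i j) (VGT.cv (fun t => K t j k) (fun t => z t k)) τ) := by
      rw [← VGT.cv_one (fun u => zTransform A L₀ (gammaTransform K z) u i),
        VGT.cv_congr hτ.1 (fun u _ => rfl)
        (fun u hu => hzcomp u ⟨hu.1.le, hu.2.le.trans hτ.2⟩ i),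
        VGT.cv_sum_right h1i hterm hτ]
      refine Finset.sum_congr rfl fun j _ => ?_
      rw [VGT.cv_add_right (φ := fun t => A i j * gammaTransform K z t j) h1i (continuousOn_const.mul (hγj j)) (hLy i j) hτ,
        VGT.cv_const_right, prim j τ hτ, ← VGT.cv_assoc hT h1i (hL i j) (hγj j) hτ,
        VGT.cv_congr hτ.1 (fun u _ => VGT.cv_comm _ _ u) (fun u _ => rfl),
        VGT.cv_assoc hT (hL i j) h1i (hγj j) hτ,
        VGT.cv_congr hτ.1 (fun u _ => rfl)
          (fun u hu => prim j u ⟨hu.1.le, hu.2.le.trans hτ.2⟩),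
        VGT.cv_sum_right (hL i j) (fun k => hKz j k) hτ, Finset.mul_sum,
        Finset.sum_add_distrib]
    rw [e1, Finset.sum_comm]
    have e2 : ∀ k, _ := fun k => VGT.resolv (φ := fun t => z t k) hT
      (c := fun j => A i j) (δ := (1 : Matrix (Fin d) (Fin d) ℝ) i k)
      (fun j => (hK j k).intk) (fun j => hL i j) (fun j => (hK j k).intk)
      (VGT.res2 hT (fun i j => (hK i j).intk) hL hres.2.2 i k) (hzj k) hτ
    rw [Finset.sum_congr rfl fun k _ => e2 k]
    simp [Matrix.one_apply]


end
end

section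
/- Suppose Assumption VOU is satisfied and let E_β ∈ L²_loc(ℝ₊) be the unique solution of E_β(t) = K(t) + ∫₀^t K(t−s) β E_β(s) ds. Then E_β ∈ L¹(ℝ₊) ∩ L²(ℝ₊) is completely monotone and ∫₀^∞ E_β(t) dt = 1/(‖K‖_{L¹(ℝ₊)}⁻¹ + |β|), with the convention 1/∞ = 0 when ‖K‖_{L¹(ℝ₊)} = ∞. Moreover, for each N ≥ 1: lim_{t→∞} sup_{β ≤ −1/N} (∫_t^∞ E_β(r) dr + ∫_t^∞ E_β(r)² dr) = 0. -/
open MeasureTheory Set Filter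
open scoped ENNReal NNReal Topology

noncomputable section

/-- A scalar kernel is completely monotone: `C^∞` on `(0,∞)` with
`(-1)^n K^{(n)}(t) ≥ 0` for all `n` and `t > 0`. -/
def CompletelyMonotoneFn (K : ℝ → ℝ) : Prop :=
  ContDiffOn ℝ (⊤ : ℕ∞) K (Set.Ioi 0) ∧
  ∀ (n : ℕ) (t : ℝ), 0 < t → 0 ≤ (-1 : ℝ) ^ n * iteratedDerivWithin n K (Set.Ioi 0) t

/-- Assumption (VOU) on the kernel: `0 ≤ K ∈ L²_loc(ℝ₊)` completely monotone, and
there is `γ ∈ (0,1]` with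
`sup_{0 ≤ t-s ≤ 1} (t-s)^{-2γ}(∫_s^t K(r)² dr + ∫₀^∞ (K((t-s)+r)-K(r))² dr) < ∞`. -/
def AssumptionVOUKernel (K : ℝ → ℝ) (γ : ℝ) : Prop :=
  (∀ t > (0:ℝ), 0 ≤ K t) ∧ CompletelyMonotoneFn K ∧
  (∀ T > (0:ℝ), IntervalIntegrable (fun t => (K t) ^ 2) volume 0 T) ∧
  γ ∈ Set.Ioc (0:ℝ) 1 ∧
  ∃ Cγ : ℝ, ∀ s t : ℝ, 0 ≤ s → s ≤ t → t - s ≤ 1 →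
    IntegrableOn (fun r => (K ((t - s) + r) - K r) ^ 2) (Set.Ioi 0) ∧
    (∫ r in s..t, (K r) ^ 2) + (∫ r in Set.Ioi (0:ℝ), (K ((t - s) + r) - K r) ^ 2) ≤
      Cγ * (t - s) ^ (2 * γ)

/-- `E_β ∈ L²_loc(ℝ₊)` solves the linear Volterra equation
`E_β(t) = K(t) + ∫₀ᵗ K(t-s) β E_β(s) ds`. -/
def SolvesResolventEq (K : ℝ → ℝ) (β : ℝ) (E : ℝ → ℝ) : Prop :=
  (∀ T > (0:ℝ), IntervalIntegrable (fun t => (E t) ^ 2) volume 0 T) ∧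
  ∀ t > (0:ℝ), E t = K t + ∫ s in (0:ℝ)..t, K (t - s) * (β * E s)

/-- `‖K‖_{L¹(ℝ₊)} = ∫₀^∞ K(t) dt ∈ [0,∞]`. -/
noncomputable def normL1 (K : ℝ → ℝ) : ℝ≥0∞ :=
  ∫⁻ t in Set.Ioi (0:ℝ), ENNReal.ofReal (K t)

/-- Witness form of complete monotonicity: `F k = (-1)^k f^(k)`. -/
def CMW (F : ℕ → ℝ → ℝ) : Prop :=
  ∀ (k : ℕ) (t : ℝ), 0 < t → HasDerivAt (F k) (-(F (k+1) t)) t ∧ 0 ≤ F k t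

lemma CMW.shift {F : ℕ → ℝ → ℝ} (h : CMW F) : CMW (fun k => F (k+1)) :=
  fun k t ht => h (k+1) t ht

lemma CMW.to {F : ℕ → ℝ → ℝ} (h : CMW F) {f : ℝ → ℝ} (hf : ∀ t, 0 < t → F 0 t = f t) :
    CompletelyMonotoneFn f := by
  have key : ∀ n : ℕ, ∀ t, 0 < t →
      iteratedDerivWithin n f (Set.Ioi 0) t = (-1 : ℝ) ^ n * F n t := by
    intro n
    induction n with
    | zero => intro t ht; simp [hf t ht]
    | succ n ih =>
      intro t ht
      rw [iteratedDerivWithin_succ]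
      have h1 : derivWithin (iteratedDerivWithin n f (Set.Ioi 0)) (Set.Ioi 0) t
          = derivWithin (fun t => (-1 : ℝ) ^ n * F n t) (Set.Ioi 0) t :=
        derivWithin_congr (fun x hx => ih x hx) (ih t ht)
      rw [h1, (((h n t ht).1.const_mul ((-1 : ℝ) ^ n)).hasDerivWithinAt).derivWithin
        (uniqueDiffOn_Ioi (0:ℝ) t ht)]
      ring
  refine ⟨?_, ?_⟩
  · apply contDiffOn_of_differentiableOn_deriv
    intro m _ t ht
    have : DifferentiableWithinAt ℝ (fun t => (-1 : ℝ) ^ m * F m t) (Set.Ioi 0) t :=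
      (((h m t ht).1.const_mul ((-1 : ℝ) ^ m)).hasDerivWithinAt).differentiableWithinAt
    exact this.congr (fun x hx => key m x hx) (key m t ht)
  · intro n t ht
    rw [key n t ht, ← mul_assoc, ← mul_pow]
    simpa using (h n t ht).2

lemma CompletelyMonotoneFn.exists_CMW {f : ℝ → ℝ} (h : CompletelyMonotoneFn f) :
    ∃ F, CMW F ∧ ∀ t, F 0 t = f t := by
  refine ⟨fun k t => (-1 : ℝ) ^ k * iteratedDerivWithin k f (Set.Ioi 0) t, ?_, by simp⟩
  intro k t ht
  refine ⟨?_, h.2 k t ht⟩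
  have h1 : DifferentiableWithinAt ℝ (iteratedDerivWithin k f (Set.Ioi 0)) (Set.Ioi 0) t :=
    h.1.differentiableOn_iteratedDerivWithin (by exact_mod_cast WithTop.coe_lt_top k)
      (uniqueDiffOn_Ioi _) t ht
  have h2 := (h1.hasDerivWithinAt.hasDerivAt (Ioi_mem_nhds ht)).const_mul ((-1:ℝ)^k)
  beta_reduce
  rw [iteratedDerivWithin_succ]
  exact h2.congr_deriv (by ring)

lemma CMW.antitoneOn {F : ℕ → ℝ → ℝ} (h : CMW F) (k : ℕ) : AntitoneOn (F k) (Set.Ioi 0) := by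
  apply antitoneOn_of_deriv_nonpos (convex_Ioi 0)
  · exact fun t ht => (h k t ht).1.continuousAt.continuousWithinAt
  · intro t ht
    rw [interior_Ioi] at ht
    exact (h k t ht).1.differentiableAt.differentiableWithinAt
  · intro t ht
    rw [interior_Ioi] at ht
    rw [(h k t ht).1.deriv]
    linarith [(h (k+1) t ht).2]

/-- first-order Taylor bound from above and below, for `s ≤ t`. -/
lemma CMW.mvt {F : ℕ → ℝ → ℝ} (h : CMW F) (k : ℕ) {s t : ℝ} (hs : 0 < s) (hst : s < t) :
    F (k+1) t * (t - s) ≤ F k s - F k t ∧ F k s - F k t ≤ F (k+1) s * (t - s) := by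
  obtain ⟨c, hc, hc'⟩ := exists_hasDerivAt_eq_slope (F k) (fun x => -(F (k+1) x)) hst
    (fun x hx => (h k x (hs.trans_le hx.1)).1.continuousAt.continuousWithinAt)
    (fun x hx => (h k x (hs.trans hx.1)).1)
  have hts : 0 < t - s := by linarith
  have e : F k s - F k t = F (k+1) c * (t - s) := by
    have := hc'
    field_simp at this
    linarith
  have hc0 : 0 < c := hs.trans hc.1
  have a1 := h.antitoneOn (k+1) (show c ∈ Set.Ioi (0:ℝ) from hc0)
    (show t ∈ Set.Ioi (0:ℝ) from hs.trans hst) hc.2.le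
  have a2 := h.antitoneOn (k+1) (show s ∈ Set.Ioi (0:ℝ) from hs)
    (show c ∈ Set.Ioi (0:ℝ) from hc0) hc.1.le
  rw [e]
  constructor <;> gcongr

/-- Taylor remainder: for `s < t`. -/
lemma CMW.taylor {F : ℕ → ℝ → ℝ} (h : CMW F) (k : ℕ) {s t a : ℝ} (ha : 0 < a) (has : a ≤ s)
    (hat : a ≤ t) :
    |F k t - F k s + F (k+1) s * (t - s)| ≤ F (k+2) a * (t - s)^2 := by
  have key : ∀ u v, a ≤ u → u < v → F (k+1) u - F (k+1) v ≤ F (k+2) a * (v - u) := by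
    intro u v hu huv
    have h1 := (h.mvt (k+1) (ha.trans_le hu) huv).2
    have h2 := h.antitoneOn (k+2) (show a ∈ Set.Ioi (0:ℝ) from ha)
      (show u ∈ Set.Ioi (0:ℝ) from ha.trans_le hu) hu
    have : 0 ≤ v - u := by linarith
    nlinarith
  rcases lt_trichotomy s t with hst | rfl | hst
  · have h1 := h.mvt k (ha.trans_le has) hst
    have h2 := key s t has hst
    have : 0 ≤ t - s := by linarith
    rw [abs_le]; constructor <;> nlinarith
  · simp
  · have h1 := h.mvt k (ha.trans_le hat) hst
    have h2 := key t s hat hst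
    have : 0 ≤ s - t := by linarith
    rw [abs_le]; constructor <;> nlinarith

lemma CMW.bound {F : ℕ → ℝ → ℝ} (h : CMW F) (k : ℕ) {t : ℝ} (ht : 0 < t) :
    F (k+1) t ≤ 2 / t * F k (t/2) := by
  have h1 := (h.mvt k (half_pos ht) (half_lt_self ht)).1
  have h2 := (h k t ht).2
  have : F (k+1) t * (t/2) ≤ F k (t/2) := by
    have : t - t/2 = t/2 := by ring
    rw [this] at h1; linarith
  rw [div_mul_eq_mul_div, le_div_iff₀ ht]; linarith

lemma CMW.tendsto_succ {F : ℕ → ℕ → ℝ → ℝ} (h : ∀ n, CMW (F n)) (k : ℕ)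
    (hc : ∀ t, 0 < t → ∃ l, Tendsto (fun n => F n k t) atTop (𝓝 l)) :
    ∀ t, 0 < t → ∃ l, Tendsto (fun n => F n (k+1) t) atTop (𝓝 l) := by
  intro t ht
  -- uniform bound on second derivative
  obtain ⟨l, hl⟩ := hc (t/2/2) (by positivity)
  obtain ⟨B, hB⟩ := hl.bddAbove_range
  have hB' : ∀ n, F n (k+2) t ≤ 2/t * (2/(t/2)) * B := by
    intro n
    have h1 := (h n).bound (k+1) ht
    have h2 := (h n).bound k (half_pos ht)
    have h3 : F n k (t/2/2) ≤ B := hB ⟨n, rfl⟩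
    calc _ ≤ _ := h1
      _ ≤ 2/t * (2/(t/2) * B) := by gcongr; exact h2.trans (by gcongr)
      _ = _ := by ring
  set C := 2/t * (2/(t/2)) * B with hC
  have hC0 : 0 ≤ C := ((h 0 (k+2) t ht).2).trans (hB' 0)
  apply cauchySeq_tendsto_of_complete
  rw [Metric.cauchySeq_iff']
  intro ε hε
  obtain ⟨η, hη, hηC⟩ : ∃ η : ℝ, 0 < η ∧ C * η < ε / 4 := by
    refine ⟨ε / (4 * (C + 1)) / 2, by positivity, ?_⟩
    rw [div_div, mul_div_assoc', div_lt_div_iff₀ (by positivity) (by positivity)]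
    nlinarith
  obtain ⟨l1, hl1⟩ := hc t ht
  obtain ⟨l2, hl2⟩ := hc (t+η) (by positivity)
  have hd := ((hl1.sub hl2).div_const η).cauchySeq
  rw [Metric.cauchySeq_iff'] at hd
  obtain ⟨N, hN⟩ := hd (ε/4) (by positivity)
  refine ⟨N, fun n hn => ?_⟩
  have h0 := hN n hn
  have est : ∀ m, |F m (k+1) t - (F m k t - F m k (t+η))/η| ≤ C * η := by
    intro m
    have := (h m).taylor k ht le_rfl (show t ≤ t + η by linarith)
    have e : F m (k+1) t - (F m k t - F m k (t+η))/η
        = (F m k (t+η) - F m k t + F m (k+1) t * (t + η - t)) / η := by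
      field_simp; ring
    rw [e, abs_div, abs_of_pos hη, div_le_iff₀ hη]
    refine this.trans ?_
    have := hB' m
    calc F m (k+2) t * (t + η - t)^2 = F m (k+2) t * (η * η) := by ring
      _ ≤ C * (η * η) := by gcongr
      _ = _ := by ring
  have e1 := est n
  have e2 := est N
  rw [Real.dist_eq] at h0 ⊢
  rw [abs_le] at e1 e2
  rw [abs_lt] at h0 ⊢
  constructor <;> linarith

lemma CMW.limit {F : ℕ → ℕ → ℝ → ℝ} (h : ∀ n, CMW (F n)) {f : ℝ → ℝ}
    (hf : ∀ t, 0 < t → Tendsto (fun n => F n 0 t) atTop (𝓝 (f t))) :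
    CompletelyMonotoneFn f := by
  have hall : ∀ k, ∀ t, 0 < t → ∃ l, Tendsto (fun n => F n k t) atTop (𝓝 l) := by
    intro k
    induction k with
    | zero => exact fun t ht => ⟨_, hf t ht⟩
    | succ k ih => exact CMW.tendsto_succ h k ih
  have hall' : ∀ k t, ∃ l, 0 < t → Tendsto (fun n => F n k t) atTop (𝓝 l) := by
    intro k t
    by_cases ht : 0 < t
    · obtain ⟨l, hl⟩ := hall k t ht
      exact ⟨l, fun _ => hl⟩
    · exact ⟨0, fun h => absurd h ht⟩
  choose G hG using hall'
  have hGW : CMW G := by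
    intro k t ht
    refine ⟨?_, ge_of_tendsto' (hG k t ht) (fun n => (h n k t ht).2)⟩
    rw [hasDerivAt_iff_isLittleO]
    have hO : (fun x' => G k x' - G k t - (x' - t) • -(G (k+1) t)) =O[𝓝 t]
        (fun x' => (x' - t)^2) := by
      apply Asymptotics.IsBigO.of_bound (G (k+2) (t/2))
      filter_upwards [Ioi_mem_nhds (half_lt_self ht)] with x hx
      have hx : t/2 < x := hx
      have hx0 : 0 < x := (half_pos ht).trans hx
      have lim1 : Tendsto (fun n => |F n k x - F n k t + F n (k+1) t * (x - t)|) atTop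
          (𝓝 |G k x - G k t + G (k+1) t * (x - t)|) :=
        (((hG k x hx0).sub (hG k t ht)).add ((hG (k+1) t ht).mul_const _)).abs
      have lim2 : Tendsto (fun n => F n (k+2) (t/2) * (x - t)^2) atTop
          (𝓝 (G (k+2) (t/2) * (x - t)^2)) := (hG (k+2) _ (half_pos ht)).mul_const _
      have := le_of_tendsto_of_tendsto' lim1 lim2
        (fun n => (h n).taylor k (half_pos ht) (half_le_self ht.le) hx.le)
      have e : G k x - G k t - (x - t) • -(G (k+1) t) = G k x - G k t + G (k+1) t * (x - t) := by
        simp only [smul_eq_mul]; ring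
      rw [e, Real.norm_eq_abs, Real.norm_eq_abs, abs_of_nonneg (sq_nonneg (x - t))]
      exact this
    refine hO.trans_isLittleO ?_
    have : (fun x' : ℝ => (x' - t)^2) =o[𝓝 t] (fun x' => (x' - t)^1) :=
      Asymptotics.IsLittleO.comp_tendsto (f := fun x : ℝ => x^2) (g := fun x : ℝ => x^1)
        (Asymptotics.isLittleO_pow_pow one_lt_two)
        (by simpa using (continuous_sub_right t).tendsto t)
    simpa using this
  exact hGW.to (fun t ht => tendsto_nhds_unique (hG 0 t ht) (hf t ht))

lemma CMW.diff {F : ℕ → ℝ → ℝ} (h : CMW F) {c : ℝ} (hc : 0 < c) :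
    CMW (fun k t => F k t - F k (t + c)) := by
  intro k t ht
  have htc : 0 < t + c := by linarith
  refine ⟨?_, ?_⟩
  · have h1 := (h k t ht).1
    have h2 := (h k (t+c) htc).1.comp_add_const t c
    exact (h1.sub h2).congr_deriv (by ring)
  · have := h.antitoneOn k (show t ∈ Set.Ioi (0:ℝ) from ht)
      (show t + c ∈ Set.Ioi (0:ℝ) from htc) (by linarith)
    linarith

/-- shift on sequences -/
def shiftSeq : Module.End ℝ (ℕ → ℝ) where
  toFun a := fun i => a (i + 1)
  map_add' _ _ := rfl
  map_smul' _ _ := rfl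

lemma shiftSeq_pow (i : ℕ) (a : ℕ → ℝ) (j : ℕ) : (shiftSeq ^ i) a j = a (j + i) := by
  induction i generalizing j with
  | zero => simp
  | succ i ih =>
    rw [pow_succ', Module.End.mul_apply]
    show (shiftSeq ^ i) a (j+1) = _
    rw [ih]; congr 1; ring

lemma seq_expand (a : ℕ → ℝ) (m j : ℕ) :
    a j = ∑ i ∈ Finset.range (m + 1), ((1 - shiftSeq) ^ (m - i)) a (j + i) * (m.choose i : ℝ) := by
  have hcomm : Commute shiftSeq (1 - shiftSeq) := (Commute.one_right _).sub_right (Commute.refl _)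
  have h := hcomm.add_pow m
  have h1 : shiftSeq + (1 - shiftSeq) = 1 := by abel
  rw [h1, one_pow] at h
  have h2 := congrFun (congrArg (fun T : Module.End ℝ (ℕ → ℝ) => T a) h) j
  simp only [Module.End.one_apply, LinearMap.sum_apply, Finset.sum_apply] at h2
  rw [h2]
  apply Finset.sum_congr rfl
  intro i _
  rw [← Nat.cast_comm, Module.End.mul_apply, Module.End.natCast_apply, Module.End.mul_apply]
  simp only [Pi.smul_apply, nsmul_eq_mul, shiftSeq_pow]
  ring

lemma seq_expand' (a : ℕ → ℝ) (N j : ℕ) (hj : j ≤ N) :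
    a j = ∑ v ∈ Finset.range (N + 1),
      ((N.choose v : ℝ) * ((1 - shiftSeq) ^ (N - v)) a v) * ((v.choose j : ℝ) / (N.choose j : ℝ)) := by
  obtain ⟨m, rfl⟩ := Nat.exists_eq_add_of_le hj
  rw [show j + m + 1 = j + (m + 1) by ring, Finset.sum_range_add]
  rw [Finset.sum_eq_zero (s := Finset.range j), zero_add]
  · conv_lhs => rw [seq_expand a m j]
    apply Finset.sum_congr rfl
    intro i hi
    have hi' : i ≤ m := by simpa [Nat.lt_succ_iff] using hi
    have e := Nat.choose_mul (n := j + m) (k := j + i) (s := j) (by omega)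
    have e1 : j + m - j = m := by omega
    have e2 : j + i - j = i := by omega
    rw [e1, e2] at e
    have e' : (((j+m).choose (j+i) : ℝ)) * ((j+i).choose j : ℝ)
        = ((j+m).choose j : ℝ) * (m.choose i : ℝ) := by exact_mod_cast e
    have hpos : ((j+m).choose j : ℝ) ≠ 0 := by
      have := Nat.choose_pos (n := j + m) (k := j) (by omega)
      positivity
    have e3 : j + m - (j + i) = m - i := by omega
    rw [e3]
    field_simp
    linear_combination (-(((1 - shiftSeq) ^ (m - i)) a (j + i))) * e'
  · intro v hv
    have h0 : v.choose j = 0 := Nat.choose_eq_zero_of_lt (by simpa using hv)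
    rw [h0]
    simp

lemma choose_ratio_bound (N v : ℕ) (hv : v ≤ N) (j : ℕ) (hj : j < N) :
    |(v.choose j : ℝ) / (N.choose j : ℝ) - ((v:ℝ)/N)^j| ≤ (j:ℝ)*j/((N:ℝ)-j) := by
  induction j with
  | zero => simp
  | succ j ih =>
    have ih := ih (by omega)
    have hN : (0:ℝ) < N := by
      have : 0 < N := by omega
      exact_mod_cast this
    have hNj : (0:ℝ) < (N:ℝ) - j - 1 := by
      have : ((j + 1 : ℕ) : ℝ) < N := by exact_mod_cast hj
      push_cast at this; linarith
    have hvN : (v:ℝ) ≤ N := by exact_mod_cast hv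
    set q := (v.choose j : ℝ) / (N.choose j : ℝ) with hq
    set y := (v:ℝ)/N with hy
    have hy0 : 0 ≤ y := by positivity
    have hy1 : y ≤ 1 := by rw [hy, div_le_one hN]; exact hvN
    have hc : ∀ n : ℕ, (n.choose (j+1) : ℝ) * (j+1) = (n.choose j : ℝ) * ((n:ℝ) - j) := by
      intro n
      have := Nat.choose_succ_right_eq n j
      by_cases h : j ≤ n
      · rw [← Nat.cast_sub h]; exact_mod_cast this
      · rw [Nat.choose_eq_zero_of_lt (by omega), Nat.choose_eq_zero_of_lt (by omega)]; simp
    have hNc : (0:ℝ) < (N.choose j : ℝ) := by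
      have := Nat.choose_pos (n := N) (k := j) (by omega)
      exact_mod_cast this
    have hNc1 : (0:ℝ) < (N.choose (j+1) : ℝ) := by
      have := Nat.choose_pos (n := N) (k := j+1) (by omega)
      exact_mod_cast this
    have hq0 : 0 ≤ q := by positivity
    have hq1 : q ≤ 1 := by
      rw [hq, div_le_one hNc]; exact_mod_cast Nat.choose_le_choose j hv
    have hrec : (v.choose (j+1) : ℝ) / (N.choose (j+1) : ℝ) = q * (((v:ℝ) - j)/((N:ℝ)-j)) := by
      have h1 := hc v
      have h2 := hc N
      have h3 : (N:ℝ) - j ≠ 0 := by linarith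
      rw [hq, div_mul_div_comm, ← h1, ← h2]
      field_simp
    have hfac : |q * (((v:ℝ) - j)/((N:ℝ)-j) - y)| ≤ (j:ℝ)/((N:ℝ)-j) := by
      have h3 : (0:ℝ) < (N:ℝ) - j := by linarith
      have e : ((v:ℝ) - j)/((N:ℝ)-j) - y = -((j:ℝ)/((N:ℝ)-j) * (1 - y)) := by
        rw [hy]; field_simp; ring
      have hjj : 0 ≤ (j:ℝ)/((N:ℝ)-j) := by positivity
      rw [e, mul_neg, abs_neg, abs_of_nonneg (by
        have : 0 ≤ 1 - y := by linarith
        positivity)]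
      calc q * ((j:ℝ)/((N:ℝ)-j) * (1 - y)) ≤ 1 * ((j:ℝ)/((N:ℝ)-j) * 1) := by
            gcongr
            · nlinarith
        _ = _ := by ring
    have e4 : (v.choose (j+1) : ℝ) / (N.choose (j+1) : ℝ) - y^(j+1)
        = q * (((v:ℝ) - j)/((N:ℝ)-j) - y) + y * (q - y^j) := by rw [hrec]; ring
    rw [e4]
    calc _ ≤ |q * (((v:ℝ) - j)/((N:ℝ)-j) - y)| + |y * (q - y^j)| := abs_add_le _ _
      _ ≤ (j:ℝ)/((N:ℝ)-j) + 1 * ((j:ℝ)*j/((N:ℝ)-j)) := by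
          rw [abs_mul y, abs_of_nonneg hy0]; gcongr
      _ = (j * (j+1)) / ((N:ℝ)-j) := by ring
      _ ≤ _ := by
          push_cast
          rw [div_le_div_iff₀ (by linarith) (by linarith)]
          have hj0 : (0:ℝ) ≤ j := by positivity
          have : (0:ℝ) ≤ ((j:ℝ)+1) * ((N:ℝ) - j - 1) := by positivity
          nlinarith

lemma hausdorff_approx (a : ℕ → ℝ) (ha : ∀ m i : ℕ, 0 ≤ ((1 - shiftSeq : Module.End ℝ (ℕ → ℝ)) ^ m) a i) (J : ℕ)
    {δ : ℝ} (hδ : 0 < δ) :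
    ∃ N : ℕ, 0 < N ∧ ∃ w : ℕ → ℝ, (∀ i, 0 ≤ w i) ∧ ∀ j ≤ J,
      |∑ v ∈ Finset.range (N+1), w v * ((v:ℝ)/N)^j - a j| ≤ δ := by
  have ha0 : 0 ≤ a 0 := by simpa using ha 0 0
  obtain ⟨M, hM⟩ := exists_nat_gt (a 0 * ((J:ℝ) * J) / δ)
  set N := J + M + 1 with hN
  refine ⟨N, by omega, fun v => (N.choose v : ℝ) * ((1 - shiftSeq) ^ (N - v)) a v,
    fun i => mul_nonneg (by positivity) (ha _ _), ?_⟩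
  intro j hj
  have hsum0 := seq_expand' a N 0 (by omega)
  simp only [Nat.choose_zero_right, Nat.cast_one, div_one, mul_one] at hsum0
  have hs := seq_expand' a N j (by omega)
  conv_lhs => rw [hs]
  rw [← Finset.sum_sub_distrib]
  have hb : (j:ℝ)*j/((N:ℝ)-j) ≤ (J:ℝ)*J/(M+1) := by
    have : (j:ℝ) ≤ J := by exact_mod_cast hj
    have h2 : (M:ℝ) + 1 ≤ (N:ℝ) - j := by rw [hN]; push_cast; linarith
    gcongr
  calc _ ≤ ∑ v ∈ Finset.range (N+1), ((N.choose v : ℝ) * ((1 - shiftSeq) ^ (N - v)) a v)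
            * ((J:ℝ)*J/(M+1)) := by
        refine (Finset.abs_sum_le_sum_abs _ _).trans (Finset.sum_le_sum fun v hv => ?_)
        rw [← mul_sub, abs_mul, abs_of_nonneg (mul_nonneg (by positivity) (ha _ _))]
        refine mul_le_mul_of_nonneg_left ?_ (mul_nonneg (by positivity) (ha _ _))
        rw [abs_sub_comm]
        exact (choose_ratio_bound N v (by simpa [Nat.lt_succ_iff] using hv) j (by omega)).trans hb
    _ = a 0 * ((J:ℝ)*J/(M+1)) := by rw [← Finset.sum_mul, ← hsum0]
    _ ≤ δ := by
        rw [mul_div_assoc', div_le_iff₀ (by positivity)]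
        rw [div_lt_iff₀ hδ] at hM
        nlinarith

lemma CMW.seq_nonneg {h : ℝ} (hh : 0 < h) (m : ℕ) : ∀ {F : ℕ → ℝ → ℝ}, CMW F → ∀ i : ℕ,
    0 ≤ ((1 - shiftSeq) ^ m) (fun j : ℕ => F 0 (h + j * h)) i := by
  induction m with
  | zero => intro F hF i; simpa using (hF 0 (h + i * h) (by positivity)).2
  | succ m ih =>
    intro F hF i
    have := ih (hF.diff hh) i
    rw [pow_succ, Module.End.mul_apply]
    convert this using 2
    funext j
    simp only [LinearMap.sub_apply, Module.End.one_apply, Pi.sub_apply]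
    show _ - F 0 (h + ((j + 1 : ℕ):ℝ) * h) = _
    congr 2
    push_cast; ring

/-- finite exponential sum -/
def expSum (N : ℕ) (c x : ℕ → ℝ) (t : ℝ) : ℝ := ∑ i ∈ Finset.range N, c i * Real.exp (-(x i * t))

lemma expSum_antitone {N : ℕ} {c x : ℕ → ℝ} (hc : ∀ i ∈ Finset.range N, 0 ≤ c i)
    (hx : ∀ i ∈ Finset.range N, 0 ≤ x i) : Antitone (expSum N c x) := by
  intro s t hst
  apply Finset.sum_le_sum
  intro i hi
  have := hc i hi
  have := hx i hi
  gcongr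

lemma CMW.exp_approx {F : ℕ → ℝ → ℝ} (hF : CMW F) {h : ℝ} (hh : 0 < h) (T : ℝ) {δ : ℝ}
    (hδ : 0 < δ) :
    ∃ (N : ℕ) (c x : ℕ → ℝ), (∀ i ∈ Finset.range N, 0 ≤ c i) ∧ (∀ i ∈ Finset.range N, 0 ≤ x i) ∧
      ∀ t, 0 ≤ t → t ≤ T → F 0 (t + 3*h) - δ ≤ expSum N c x t ∧
        expSum N c x t ≤ F 0 (t + h) + δ := by
  obtain ⟨N, hN, w, hw, hwa⟩ := hausdorff_approx (fun j : ℕ => F 0 (h + j * h))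
    (fun m i => CMW.seq_nonneg hh m hF i) (⌊T/h⌋₊ + 2) hδ
  have hN' : (0:ℝ) < N := by exact_mod_cast hN
  set c : ℕ → ℝ := fun i => w (i+1) * (((i+1 : ℕ):ℝ)/N) with hcdef
  set x : ℕ → ℝ := fun i => -Real.log (((i+1 : ℕ):ℝ)/N)/h with hxdef
  have hc : ∀ i ∈ Finset.range N, 0 ≤ c i := fun i _ => mul_nonneg (hw _) (by positivity)
  have hx : ∀ i ∈ Finset.range N, 0 ≤ x i := by
    intro i hi
    have hi' : i + 1 ≤ N := by simpa [Nat.succ_le_iff] using hi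
    have : Real.log (((i+1 : ℕ):ℝ)/N) ≤ 0 := by
      apply Real.log_nonpos (by positivity)
      rw [div_le_one hN']; exact_mod_cast hi'
    rw [hxdef]
    exact div_nonneg (by linarith) hh.le
  have hgrid : ∀ j : ℕ, j + 1 ≤ ⌊T/h⌋₊ + 2 → |expSum N c x (j*h) - F 0 ((j+2)*h)| ≤ δ := by
    intro j hj
    have h1 := hwa (j+1) hj
    rw [Finset.sum_range_succ'] at h1
    simp only [Nat.cast_zero, zero_div, ne_eq, Nat.succ_ne_zero, not_false_eq_true, zero_pow,
      mul_zero, add_zero] at h1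
    convert h1 using 3
    · apply Finset.sum_congr rfl
      intro i _
      rw [hcdef, hxdef]
      have hy : (0:ℝ) < ((i+1 : ℕ):ℝ)/N := by positivity
      have : Real.exp (-(-Real.log (((i+1 : ℕ):ℝ)/N)/h * (j*h))) = (((i+1 : ℕ):ℝ)/N)^j := by
        rw [show -(-Real.log (((i+1 : ℕ):ℝ)/N)/h * (j*h)) = j * Real.log (((i+1 : ℕ):ℝ)/N) by
          field_simp, Real.exp_nat_mul, Real.exp_log hy]
      simp only [this]
      ring
    · congr 1; push_cast; ring
  refine ⟨N, c, x, hc, hx, fun t ht0 htT => ?_⟩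
  have hanti := expSum_antitone hc hx
  set j := ⌊t/h⌋₊ with hj
  have hjT : j ≤ ⌊T/h⌋₊ := Nat.floor_le_floor (by gcongr)
  have hj1 : j * h ≤ t := by
    have := Nat.floor_le (show 0 ≤ t/h by positivity)
    rwa [le_div_iff₀ hh] at this
  have hj2 : t ≤ (j + 1) * h := by
    have := (Nat.lt_floor_add_one (t/h)).le
    rwa [div_le_iff₀ hh] at this
  have g1 := abs_le.1 (hgrid j (by omega))
  have g2 := abs_le.1 (hgrid (j+1) (by omega))
  push_cast at g2
  have a1 := hanti hj1
  have a2 := hanti hj2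
  have b1 := hF.antitoneOn 0 (show t + h ∈ Set.Ioi (0:ℝ) from by simp; linarith)
    (show ((j:ℝ)+2)*h ∈ Set.Ioi (0:ℝ) from by simp; positivity) (by linarith)
  have b2 := hF.antitoneOn 0 (show ((j:ℝ)+1+2)*h ∈ Set.Ioi (0:ℝ) from by simp; positivity)
    (show t + 3*h ∈ Set.Ioi (0:ℝ) from by simp; positivity) (by linarith)
  constructor <;> linarith

section hilbert
variable {H : Type*} [NormedAddCommGroup H] [InnerProductSpace ℝ H] [CompleteSpace H]

lemma inner_pow_nonneg {T : H →L[ℝ] H} (hT : IsSelfAdjoint T) (hp : ∀ x, 0 ≤ inner ℝ x (T x))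
    (k : ℕ) (x : H) : 0 ≤ inner ℝ x ((T ^ k) x) := by
  have hs : ∀ j : ℕ, ∀ y z, inner ℝ ((T ^ j) y) z = inner ℝ y ((T ^ j) z) := by
    intro j y z
    have := (hT.pow j).isSymmetric y z
    exact this
  rcases Nat.even_or_odd' k with ⟨j, rfl | rfl⟩
  · rw [two_mul, pow_add, mul_apply_eq_comp, ← hs]
    exact real_inner_self_nonneg
  · have : T ^ (2 * j + 1) = T ^ j * (T * T ^ j) := by
      rw [← pow_succ', ← pow_add]; congr 1; ring
    rw [this, mul_apply_eq_comp, ← hs, mul_apply_eq_comp]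
    exact hp _

lemma semigroup_hasDeriv (T : H →L[ℝ] H) (v : H) (t : ℝ) :
    HasDerivAt (fun t : ℝ => NormedSpace.exp (t • (-T)) v)
      (-(T (NormedSpace.exp (t • (-T)) v))) t := by
  have h := (hasDerivAt_exp_smul_const' (𝕂 := ℝ) (-T) t).clm_apply (hasDerivAt_const t v)
  exact h.congr_deriv (by simp)

lemma semigroup_CMW {T : H →L[ℝ] H} (hT : IsSelfAdjoint T) (hp : ∀ x, 0 ≤ inner ℝ x (T x))
    (v : H) : CMW (fun k t => inner ℝ v ((T ^ k) (NormedSpace.exp (t • (-T)) v))) := by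
  intro k t _
  constructor
  · have h1 := ((T^k).hasFDerivAt.comp_hasDerivAt t (semigroup_hasDeriv T v t))
    have h2 := (hasDerivAt_const t v).inner ℝ h1
    refine h2.congr_deriv ?_
    simp [pow_succ]
  · have hsplit : NormedSpace.exp (t • (-T))
        = NormedSpace.exp ((t/2) • (-T)) * NormedSpace.exp ((t/2) • (-T)) := by
      letI : NormedAlgebra ℚ (H →L[ℝ] H) := NormedAlgebra.restrictScalars ℚ ℝ _
      rw [← NormedSpace.exp_add_of_commute (Commute.refl _), ← add_smul]; congr 2; ring
    have hsa : IsSelfAdjoint (NormedSpace.exp ((t/2) • (-T))) := by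
      apply IsSelfAdjoint.exp
      exact (IsSelfAdjoint.all _).smul hT.neg
    have hcomm : Commute (T ^ k) (NormedSpace.exp ((t/2) • (-T))) := by
      apply Commute.exp_right
      exact ((Commute.refl T).neg_right.smul_right _).pow_left k
    have e : (T ^ k) (NormedSpace.exp (t • (-T)) v)
        = NormedSpace.exp ((t/2) • (-T)) ((T^k) (NormedSpace.exp ((t/2) • (-T)) v)) := by
      rw [hsplit, ← mul_apply_eq_comp, ← mul_assoc, hcomm.eq]
      rfl
    beta_reduce
    rw [e]
    have := hsa.isSymmetric v ((T^k) (NormedSpace.exp ((t/2) • (-T)) v))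
    have h2 := inner_pow_nonneg hT hp k (NormedSpace.exp ((t/2) • (-T)) v)
    have h3 : inner ℝ (NormedSpace.exp ((t/2) • (-T)) v) ((T^k) (NormedSpace.exp ((t/2) • (-T)) v))
      = inner ℝ v (NormedSpace.exp ((t/2) • (-T)) ((T^k) (NormedSpace.exp ((t/2) • (-T)) v))) := this
    rw [← h3]; exact h2
end hilbert

/-- diagonal plus rank one operator -/
def diagRankOne (N : ℕ) (x v : Fin N → ℝ) (l : ℝ) :
    EuclideanSpace ℝ (Fin N) →L[ℝ] EuclideanSpace ℝ (Fin N) :=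
  LinearMap.toContinuousLinearMap
    { toFun := fun y => WithLp.toLp 2 (fun i => x i * y i + l * (v i * ∑ j, v j * y j))
      map_add' := by
        intro y z
        ext i
        simp [mul_add, Finset.sum_add_distrib]
        ring
      map_smul' := by
        intro c y
        ext i
        simp only [PiLp.smul_apply, smul_eq_mul, RingHom.id_apply]
        rw [show ∑ j, v j * (c * y j) = c * ∑ j, v j * y j by
          rw [Finset.mul_sum]; exact Finset.sum_congr rfl fun j _ => by ring]
        ring }

lemma diagRankOne_apply (N : ℕ) (x v : Fin N → ℝ) (l : ℝ) (y : EuclideanSpace ℝ (Fin N))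
    (i : Fin N) : diagRankOne N x v l y i = x i * y i + l * (v i * ∑ j, v j * y j) := rfl

lemma diagRankOne_inner (N : ℕ) (x v : Fin N → ℝ) (l : ℝ) (z y : EuclideanSpace ℝ (Fin N)) :
    inner ℝ z (diagRankOne N x v l y)
      = ∑ i, x i * (y i * z i) + l * ((∑ j, v j * z j) * ∑ j, v j * y j) := by
  simp only [PiLp.inner_apply, diagRankOne_apply, RCLike.inner_apply, conj_trivial, add_mul,
    Finset.sum_add_distrib]
  congr 1
  · exact Finset.sum_congr rfl fun i _ => by ring
  · rw [Finset.sum_mul, Finset.mul_sum]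
    exact Finset.sum_congr rfl fun i _ => by ring

lemma expSum_resolvent {N : ℕ} {c x : ℕ → ℝ} (hc : ∀ i ∈ Finset.range N, 0 ≤ c i)
    (hx : ∀ i ∈ Finset.range N, 0 ≤ x i) {l : ℝ} (hl : 0 ≤ l) :
    ∃ F, CMW F ∧ Continuous (F 0) ∧ ∀ t,
      F 0 t = expSum N c x t - l * ∫ s in (0:ℝ)..t, expSum N c x (t - s) * F 0 s := by
  set v : Fin N → ℝ := fun i => Real.sqrt (c i) with hv
  set T := diagRankOne N (fun i => x i) v l with hTdef
  have hsa : IsSelfAdjoint T := by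
    rw [ContinuousLinearMap.isSelfAdjoint_iff_isSymmetric]
    intro y z
    show inner ℝ (T y) z = inner ℝ y (T z)
    rw [real_inner_comm, hTdef, diagRankOne_inner, diagRankOne_inner]
    congr 1
    · exact Finset.sum_congr rfl fun i _ => by ring
    · ring
  have hp : ∀ y, 0 ≤ inner ℝ y (T y) := by
    intro y
    rw [hTdef, diagRankOne_inner]
    apply add_nonneg
    · exact Finset.sum_nonneg fun i _ => mul_nonneg (hx i (by simp)) (mul_self_nonneg _)
    · exact mul_nonneg hl (mul_self_nonneg _)
  set w : EuclideanSpace ℝ (Fin N) := WithLp.toLp 2 v with hw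
  set X : ℝ → EuclideanSpace ℝ (Fin N) := fun t => NormedSpace.exp (t • (-T)) w with hX
  have hXd : ∀ t, HasDerivAt X (-(T (X t))) t := fun t => semigroup_hasDeriv T w t
  have hX0 : X 0 = w := by simp [hX]
  set r : ℝ → ℝ := fun t => ∑ j, v j * X t j with hr
  have hXi : ∀ t i, HasDerivAt (fun t => X t i) (-(x i * X t i + l * (v i * r t))) t := by
    intro t i
    have := (EuclideanSpace.proj (𝕜 := ℝ) i).hasFDerivAt.comp_hasDerivAt t (hXd t)
    refine this.congr_deriv ?_
    simp only [map_neg]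
    rfl
  have hXc : ∀ i, Continuous (fun t => X t i) := fun i =>
    continuous_iff_continuousAt.2 fun t => (hXi t i).continuousAt
  have hrc : Continuous r := continuous_finsetSum _ fun j _ => continuous_const.mul (hXc j)
  refine ⟨fun k t => inner ℝ w ((T ^ k) (X t)), semigroup_CMW hsa hp w, ?_⟩
  have hF0 : (fun t => inner ℝ w ((T ^ 0) (X t))) = r := by
    funext t
    simp only [pow_zero, one_apply_eq_self, PiLp.inner_apply, RCLike.inner_apply,
      conj_trivial, hr, hw]
    exact Finset.sum_congr rfl fun i _ => by ring
  have hF0' : ∀ t, inner ℝ w ((T ^ 0) (X t)) = r t := fun t => congrFun hF0 t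
  simp only [hF0']
  refine ⟨hrc, fun t => ?_⟩
  have hvar : ∀ i : Fin N, X t i = v i * Real.exp (-(x i * t))
      - l * ∫ s in (0:ℝ)..t, v i * Real.exp (-(x i * (t - s))) * r s := by
    intro i
    have hd : ∀ s ∈ Set.uIcc 0 t, HasDerivAt (fun s => Real.exp (-(x i * (t - s))) * X s i)
        (-(l * (v i * Real.exp (-(x i * (t - s))) * r s))) s := by
      intro s _
      have h1 : HasDerivAt (fun s => -(x i * (t - s))) (x i) s := by
        have := (((hasDerivAt_id s).const_sub t).const_mul (x i)).neg
        refine this.congr_deriv (by ring)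
      have := h1.exp.mul (hXi s i)
      exact this.congr_deriv (by ring)
    have hcont : Continuous (fun s => -(l * (v i * Real.exp (-(x i * (t - s))) * r s))) := by
      fun_prop
    have := intervalIntegral.integral_eq_sub_of_hasDerivAt hd (hcont.intervalIntegrable _ _)
    rw [intervalIntegral.integral_neg, intervalIntegral.integral_const_mul] at this
    simp only [sub_self, mul_zero, neg_zero, Real.exp_zero, one_mul, sub_zero, hX0] at this
    have hw' : w i = v i := rfl
    rw [hw'] at this
    linarith
  have hk : ∀ t, expSum N c x t = ∑ i : Fin N, v i * (v i * Real.exp (-(x i * t))) := by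
    intro t
    rw [expSum, ← Fin.sum_univ_eq_sum_range (fun i => c i * Real.exp (-(x i * t)))]
    refine Finset.sum_congr rfl fun i _ => ?_
    rw [← mul_assoc, hv, Real.mul_self_sqrt (hc i (by simp))]
  have hintegral : ∫ s in (0:ℝ)..t, expSum N c x (t - s) * r s
      = ∑ i : Fin N, v i * ∫ s in (0:ℝ)..t, v i * Real.exp (-(x i * (t - s))) * r s := by
    simp_rw [hk, Finset.sum_mul, ← intervalIntegral.integral_const_mul]
    rw [intervalIntegral.integral_finsetSum]
    · refine Finset.sum_congr rfl fun i _ => ?_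
      congr 1; funext s; ring
    · intro i _
      apply Continuous.intervalIntegrable
      fun_prop
  rw [hintegral, hk, Finset.mul_sum, ← Finset.sum_sub_distrib]
  refine Finset.sum_congr rfl fun i _ => ?_
  conv_lhs => rw [hvar i]
  ring

/-- convolution on the line -/
def cv (f g : ℝ → ℝ) : ℝ → ℝ := fun x => ∫ s, f s * g (x - s)

lemma cv_eq (f g : ℝ → ℝ) : cv f g = convolution f g (ContinuousLinearMap.mul ℝ ℝ) volume := rfl

/-- causal, locally square integrable functions -/
structure Loc (f : ℝ → ℝ) : Prop where
  zero : ∀ x, x ≤ 0 → f x = 0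
  aesm : AEStronglyMeasurable f volume
  sq : ∀ T : ℝ, IntegrableOn (fun t => f t ^ 2) (Set.Iic T)

lemma cv_comm (f g : ℝ → ℝ) : cv f g = cv g f := by
  funext x
  unfold cv
  rw [← integral_sub_left_eq_self (fun s => g s * f (x - s)) volume x]
  congr 1; funext s
  rw [sub_sub_self, mul_comm]

/-- dominating function -/
def domf (f g : ℝ → ℝ) (x s : ℝ) : ℝ :=
  (1/2) * ((Set.Iic x).indicator (fun t => f t ^ 2) s
    + (Set.Iic x).indicator (fun t => g t ^ 2) (x - s))

lemma domf_bound {f g : ℝ → ℝ} (hf : Loc f) (hg : Loc g) (x s : ℝ) :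
    ‖f s * g (x - s)‖ ≤ domf f g x s := by
  have hnn : 0 ≤ domf f g x s := by
    unfold domf
    have h1 : 0 ≤ (Set.Iic x).indicator (fun t => f t ^ 2) s :=
      Set.indicator_nonneg (fun t _ => sq_nonneg _) s
    have h2 : 0 ≤ (Set.Iic x).indicator (fun t => g t ^ 2) (x - s) :=
      Set.indicator_nonneg (fun t _ => sq_nonneg _) _
    positivity
  by_cases hs : s ≤ 0
  · rw [hf.zero s hs]; simpa using hnn
  by_cases hs' : x ≤ s
  · rw [hg.zero (x - s) (by linarith)]; simpa using hnn
  push Not at hs hs'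
  unfold domf
  rw [Set.indicator_of_mem (show s ∈ Set.Iic x from hs'.le),
    Set.indicator_of_mem (show x - s ∈ Set.Iic x from by simp [hs.le])]
  rw [Real.norm_eq_abs, abs_mul, ← sq_abs (f s), ← sq_abs (g (x - s))]
  nlinarith [sq_nonneg (|f s| - |g (x - s)|)]

lemma domf_integrable {f g : ℝ → ℝ} (hf : Loc f) (hg : Loc g) (x : ℝ) :
    Integrable (domf f g x) := by
  unfold domf
  apply Integrable.const_mul
  apply Integrable.add
  · exact (hf.sq x).integrable_indicator measurableSet_Iic
  · exact ((hg.sq x).integrable_indicator measurableSet_Iic).comp_sub_left x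

lemma domf_integral {f g : ℝ → ℝ} (hf : Loc f) (hg : Loc g) (x : ℝ) :
    ∫ s, domf f g x s = (1/2) * ((∫ t in Set.Iic x, f t ^ 2) + ∫ t in Set.Iic x, g t ^ 2) := by
  unfold domf
  rw [integral_const_mul, integral_add]
  · rw [integral_sub_left_eq_self (fun s => (Set.Iic x).indicator (fun t => g t ^ 2) s) volume x,
      integral_indicator measurableSet_Iic, integral_indicator measurableSet_Iic]
  · exact (hf.sq x).integrable_indicator measurableSet_Iic
  · exact ((hg.sq x).integrable_indicator measurableSet_Iic).comp_sub_left x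

lemma Loc.aesm_cv {f g : ℝ → ℝ} (hf : Loc f) (hg : Loc g) (x : ℝ) :
    AEStronglyMeasurable (fun s => f s * g (x - s)) volume :=
  hf.aesm.mul (hg.aesm.comp_quasiMeasurePreserving
    (quasiMeasurePreserving_sub_left_of_right_invariant volume x))

lemma Loc.integrable {f g : ℝ → ℝ} (hf : Loc f) (hg : Loc g) (x : ℝ) :
    Integrable (fun s => f s * g (x - s)) :=
  (domf_integrable hf hg x).mono' (hf.aesm_cv hg x) (ae_of_all _ (domf_bound hf hg x))

lemma Loc.exists {f g : ℝ → ℝ} (hf : Loc f) (hg : Loc g) (x : ℝ) :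
    ConvolutionExistsAt f g x (ContinuousLinearMap.mul ℝ ℝ) volume := hf.integrable hg x

lemma Loc.abs {f : ℝ → ℝ} (hf : Loc f) : Loc (fun x => ‖f x‖) where
  zero x hx := by simp [hf.zero x hx]
  aesm := hf.aesm.norm
  sq T := by simpa using hf.sq T

lemma Loc.of_bdd {f : ℝ → ℝ} (h0 : ∀ x, x ≤ 0 → f x = 0) (hm : AEStronglyMeasurable f volume)
    (M : ℝ → ℝ) (hb : ∀ T x, x ≤ T → ‖f x‖ ≤ M T) : Loc f where
  zero := h0
  aesm := hm
  sq T := by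
    rw [← integrable_indicator_iff measurableSet_Iic]
    have hi : Integrable ((Set.Ioc 0 T).indicator (fun _ => M T ^ 2)) := by
      apply IntegrableOn.integrable_indicator _ measurableSet_Ioc
      exact integrableOn_const (by simp)
    refine hi.mono' ((hm.pow 2).indicator measurableSet_Iic) (ae_of_all _ fun x => ?_)
    by_cases hx : x ≤ 0
    · have : (Set.Iic T).indicator (fun t => f t ^ 2) x = 0 := by
        by_cases h : x ∈ Set.Iic T
        · rw [Set.indicator_of_mem h, h0 x hx]; simp
        · rw [Set.indicator_of_notMem h]
      rw [this, norm_zero]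
      exact Set.indicator_nonneg (fun t _ => sq_nonneg _) _
    · by_cases h : x ≤ T
      · rw [Set.indicator_of_mem (show x ∈ Set.Iic T from h),
          Set.indicator_of_mem (show x ∈ Set.Ioc 0 T from ⟨not_le.1 hx, h⟩), norm_pow]
        have := hb T x h
        gcongr
      · rw [Set.indicator_of_notMem (show x ∉ Set.Iic T from h), norm_zero]
        exact Set.indicator_nonneg (fun t _ => sq_nonneg _) _

lemma cv_zero {f g : ℝ → ℝ} (hf : ∀ x, x ≤ 0 → f x = 0) (hg : ∀ x, x ≤ 0 → g x = 0) (x : ℝ)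
    (hx : x ≤ 0) : cv f g x = 0 := by
  unfold cv
  have : (fun s => f s * g (x - s)) = fun _ => 0 := by
    funext s
    by_cases hs : s ≤ 0
    · rw [hf s hs, zero_mul]
    · rw [hg (x - s) (by linarith), mul_zero]
  rw [this]; simp

lemma Loc.cv {f g : ℝ → ℝ} (hf : Loc f) (hg : Loc g) : Loc (cv f g) := by
  refine Loc.of_bdd (cv_zero hf.zero hg.zero) ?_
    (fun T => (1/2) * ((∫ t in Set.Iic T, f t ^ 2) + ∫ t in Set.Iic T, g t ^ 2)) ?_
  · have := hf.aesm.convolution_integrand (ContinuousLinearMap.mul ℝ ℝ) (μ := volume) hg.aesm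
    exact this.integral_prod_right'
  · intro T x hx
    have h1 : ‖_root_.cv f g x‖ ≤ ∫ s, domf f g x s :=
      norm_integral_le_of_norm_le (domf_integrable hf hg x) (ae_of_all _ (domf_bound hf hg x))
    rw [domf_integral hf hg] at h1
    refine h1.trans ?_
    gcongr ?_ * (?_ + ?_)
    · exact setIntegral_mono_set (hf.sq T) (ae_of_all _ fun t => sq_nonneg _)
        (Set.Iic_subset_Iic.2 hx).eventuallyLE
    · exact setIntegral_mono_set (hg.sq T) (ae_of_all _ fun t => sq_nonneg _)
        (Set.Iic_subset_Iic.2 hx).eventuallyLE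

lemma cv_assoc {f g h : ℝ → ℝ} (hf : Loc f) (hg : Loc g) (hh : Loc h) :
    cv (cv f g) h = cv f (cv g h) := by
  funext x
  exact convolution_assoc (ContinuousLinearMap.mul ℝ ℝ) (ContinuousLinearMap.mul ℝ ℝ)
    (ContinuousLinearMap.mul ℝ ℝ) (ContinuousLinearMap.mul ℝ ℝ)
    (fun a b c => by simp [mul_assoc]) hf.aesm hg.aesm hh.aesm
    (ae_of_all _ fun y => hf.exists hg y) (ae_of_all _ fun y => hg.abs.exists hh.abs y)
    (hf.abs.exists (hg.abs.cv hh.abs) x)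

lemma Loc.smul {f : ℝ → ℝ} (hf : Loc f) (c : ℝ) : Loc (fun x => c * f x) where
  zero x hx := by simp [hf.zero x hx]
  aesm := hf.aesm.const_mul c
  sq T := by
    simp only [mul_pow]
    exact (hf.sq T).const_mul (c^2)

lemma Loc.add {f g : ℝ → ℝ} (hf : Loc f) (hg : Loc g) : Loc (fun x => f x + g x) where
  zero x hx := by simp [hf.zero x hx, hg.zero x hx]
  aesm := hf.aesm.add hg.aesm
  sq T := by
    refine Integrable.mono' (((hf.sq T).const_mul 2).add ((hg.sq T).const_mul 2))
      (((hf.aesm.add hg.aesm).pow 2).restrict) (ae_of_all _ fun x => ?_)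
    simp only [Pi.add_apply]
    rw [Real.norm_eq_abs, abs_of_nonneg (sq_nonneg _)]
    nlinarith [sq_nonneg (f x - g x)]

lemma Loc.sub {f g : ℝ → ℝ} (hf : Loc f) (hg : Loc g) : Loc (fun x => f x - g x) := by
  convert hf.add (hg.smul (-1)) using 2
  ring

lemma cv_smul_left (c : ℝ) (f g : ℝ → ℝ) (x : ℝ) : cv (fun y => c * f y) g x = c * cv f g x := by
  unfold cv; simp_rw [mul_assoc]; rw [integral_const_mul]

lemma cv_sub_left {f g h : ℝ → ℝ} (hf : Loc f) (hg : Loc g) (hh : Loc h) (x : ℝ) :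
    cv (fun y => f y - g y) h x = cv f h x - cv g h x := by
  unfold cv; simp_rw [sub_mul]; rw [integral_sub (hf.integrable hh x) (hg.integrable hh x)]

lemma cv_smul_right (c : ℝ) (f g : ℝ → ℝ) (x : ℝ) : cv f (fun y => c * g y) x = c * cv f g x := by
  rw [cv_comm, cv_smul_left, cv_comm]

lemma cv_sub_right {f g h : ℝ → ℝ} (hf : Loc f) (hg : Loc g) (hh : Loc h) (x : ℝ) :
    cv h (fun y => f y - g y) x = cv h f x - cv h g x := by
  rw [cv_comm, cv_sub_left hf hg hh, cv_comm f, cv_comm g]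

lemma cv_nonneg {f g : ℝ → ℝ} (hf : ∀ x, 0 ≤ f x) (hg : ∀ x, 0 ≤ g x) (x : ℝ) : 0 ≤ cv f g x :=
  integral_nonneg fun s => mul_nonneg (hf s) (hg _)

/-- extension by zero -/
def ext0 (f : ℝ → ℝ) : ℝ → ℝ := (Set.Ioi (0:ℝ)).indicator f

lemma ext0_pos (f : ℝ → ℝ) {x : ℝ} (hx : 0 < x) : ext0 f x = f x :=
  Set.indicator_of_mem (show x ∈ Set.Ioi (0:ℝ) from hx) f

lemma ext0_zero (f : ℝ → ℝ) (x : ℝ) (hx : x ≤ 0) : ext0 f x = 0 :=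
  Set.indicator_of_notMem (show x ∉ Set.Ioi (0:ℝ) from not_lt.2 hx) f

lemma cv_ext0 (f g : ℝ → ℝ) {x : ℝ} (hx : 0 < x) :
    cv (ext0 f) (ext0 g) x = ∫ s in (0:ℝ)..x, f (x - s) * g s := by
  rw [cv_comm, intervalIntegral.integral_of_le hx.le, integral_Ioc_eq_integral_Ioo,
    ← integral_indicator measurableSet_Ioo]
  unfold cv
  congr 1; funext s
  by_cases hs : 0 < s
  · by_cases hs' : s < x
    · rw [Set.indicator_of_mem (show s ∈ Set.Ioo 0 x from ⟨hs, hs'⟩), ext0_pos _ hs,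
        ext0_pos _ (by linarith), mul_comm]
    · rw [Set.indicator_of_notMem (fun h : s ∈ Set.Ioo 0 x => hs' h.2),
        ext0_zero f _ (by linarith), mul_zero]
  · rw [Set.indicator_of_notMem (fun h : s ∈ Set.Ioo 0 x => hs h.1),
      ext0_zero g _ (by linarith), zero_mul]

lemma Loc.ext0 {f : ℝ → ℝ} (hm : AEStronglyMeasurable f (volume.restrict (Set.Ioi 0)))
    (hsq : ∀ T > (0:ℝ), IntervalIntegrable (fun t => (f t) ^ 2) volume 0 T) : Loc (ext0 f) where
  zero := ext0_zero f
  aesm := (aestronglyMeasurable_indicator_iff measurableSet_Ioi).2 hm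
  sq T := by
    have hT : IntegrableOn (fun t => f t ^ 2) (Set.Ioc 0 (max T 1)) :=
      (intervalIntegrable_iff_integrableOn_Ioc_of_le (by positivity)).1 (hsq (max T 1) (by positivity))
    have h1 : (fun t => _root_.ext0 f t ^ 2) = (Set.Ioi (0:ℝ)).indicator (fun t => f t ^ 2) := by
      funext t
      by_cases ht : 0 < t
      · rw [ext0_pos f ht, Set.indicator_of_mem (show t ∈ Set.Ioi (0:ℝ) from ht)]
      · rw [ext0_zero f t (not_lt.1 ht), Set.indicator_of_notMem (show t ∉ Set.Ioi (0:ℝ) from ht)]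
        simp
    rw [h1, integrableOn_indicator_iff measurableSet_Ioi]
    refine hT.mono_set fun t ht => ?_
    exact ⟨ht.1, le_trans ht.2 (le_max_left _ _)⟩

/-- `r` is the resolvent of `k`. -/
def Res (l : ℝ) (k r : ℝ → ℝ) : Prop := ∀ x, r x = k x - l * cv k r x

lemma res_diff {l : ℝ} {k r K E : ℝ → ℝ} (hk : Loc k) (hr : Loc r) (hK : Loc K)
    (hE : Loc E) (h1 : Res l k r) (h2 : Res l K E) (x : ℝ) :
    E x - r x = (K x - k x) - l * cv (fun y => K y - k y) r x - l * cv (fun y => K y - k y) E x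
      + l ^ 2 * cv (fun y => K y - k y) (cv r E) x := by
  have a1 : cv E r x = cv K r x - l * cv K (cv E r) x := by
    rw [← cv_assoc hK hE hr, ← cv_smul_left l, ← cv_sub_left hK ((hK.cv hE).smul l) hr]
    congr 1; funext y; exact h2 y
  have a2 : cv r E x = cv k E x - l * cv k (cv r E) x := by
    rw [← cv_assoc hk hr hE, ← cv_smul_left l, ← cv_sub_left hk ((hk.cv hr).smul l) hE]
    congr 1; funext y; exact h1 y
  rw [cv_sub_left hK hk hr, cv_sub_left hK hk hE, cv_sub_left hK hk (hr.cv hE)]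
  rw [cv_comm E r] at a1
  have b1 := h1 x
  have b2 := h2 x
  linear_combination b2 - b1 + l * a2 - l * a1

lemma res_mono {l m : ℝ} {K r E : ℝ → ℝ} (hK : Loc K) (hr : Loc r)
    (hE : Loc E) (h1 : Res l K r) (h2 : Res m K E) (x : ℝ) :
    r x - E x = (m - l) * cv r E x := by
  have a1 : cv E r x = cv K r x - m * cv K (cv E r) x := by
    rw [← cv_assoc hK hE hr, ← cv_smul_left m, ← cv_sub_left hK ((hK.cv hE).smul m) hr]
    congr 1; funext y; exact h2 y
  have a2 : cv r E x = cv K E x - l * cv K (cv r E) x := by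
    rw [← cv_assoc hK hr hE, ← cv_smul_left l, ← cv_sub_left hK ((hK.cv hr).smul l) hE]
    congr 1; funext y; exact h1 y
  rw [cv_comm E r] at a1
  have b1 := h1 x
  have b2 := h2 x
  linear_combination b1 - b2 - m * a2 + l * a1

lemma sol_measurable {K E : ℝ → ℝ} {β : ℝ} (hβ : β ≠ 0) (hK0 : ∀ t > (0:ℝ), 0 ≤ K t)
    (hKa : AntitoneOn K (Set.Ioi 0)) (hKc : ContinuousOn K (Set.Ioi 0))
    (hE : ∀ t > (0:ℝ), E t = K t + ∫ s in (0:ℝ)..t, K (t - s) * (β * E s)) :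
    AEStronglyMeasurable E (volume.restrict (Set.Ioi 0)) := by
  have hKm : AEStronglyMeasurable K (volume.restrict (Set.Ioi 0)) :=
    hKc.aestronglyMeasurable measurableSet_Ioi
  by_cases hz : ∀ t > (0:ℝ), K t = 0
  · refine hKm.congr ?_
    filter_upwards [ae_restrict_mem measurableSet_Ioi] with t ht
    have ht : 0 < t := ht
    rw [hE t ht, intervalIntegral.integral_of_le ht.le, integral_Ioc_eq_integral_Ioo,
      setIntegral_congr_fun (g := fun _ => 0) measurableSet_Ioo, integral_zero, add_zero]
    intro s hs
    simp only
    rw [hz (t - s) (by linarith [hs.2]), zero_mul]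
  push Not at hz
  obtain ⟨c, hc, hKc0⟩ := hz
  have hpos : ∀ t, 0 < t → t ≤ c → 0 < K t := fun t ht htc =>
    lt_of_lt_of_le (lt_of_le_of_ne (hK0 c hc) (Ne.symm hKc0)) (hKa ht hc htc)
  set A : Set ℝ := {t | 0 < t ∧ IntervalIntegrable (fun s => K (t - s) * (β * E s)) volume 0 t}
    with hA
  set U : ℝ → Set ℝ := fun t => Set.Ioo (max (t - c) 0) t with hU
  have hUm : ∀ t ∈ A, AEStronglyMeasurable E (volume.restrict (U t)) := by
    intro t ht
    have h1 : AEStronglyMeasurable (fun s => K (t - s) * (β * E s)) (volume.restrict (U t)) := by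
      refine ((intervalIntegrable_iff_integrableOn_Ioc_of_le ht.1.le).1
        ht.2).aestronglyMeasurable.mono_measure (Measure.restrict_mono ?_ le_rfl)
      intro s hs
      exact ⟨lt_of_le_of_lt (le_max_right _ _) hs.1, hs.2.le⟩
    have hmem : ∀ s ∈ U t, 0 < t - s ∧ t - s ≤ c := by
      intro s hs
      have := lt_of_le_of_lt (le_max_left _ _) hs.1
      have := hs.2
      constructor <;> linarith
    have h2 : ContinuousOn (fun s => (β * K (t - s))⁻¹) (U t) := by
      apply ContinuousOn.inv₀
      · apply continuousOn_const.mul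
        exact hKc.comp (by fun_prop) (fun s hs => (hmem s hs).1)
      · intro s hs
        exact mul_ne_zero hβ (hpos _ (hmem s hs).1 (hmem s hs).2).ne'
    refine (h1.mul (h2.aestronglyMeasurable measurableSet_Ioo)).congr ?_
    filter_upwards [ae_restrict_mem measurableSet_Ioo] with s hs
    have := (hpos _ (hmem s hs).1 (hmem s hs).2).ne'
    simp only [Pi.mul_apply]
    field_simp
  obtain ⟨S, hSA, hSc, hSU⟩ := TopologicalSpace.isOpen_biUnion_countable A U
    (fun t _ => isOpen_Ioo)
  set V := ⋃ t ∈ A, U t with hV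
  have hVo : IsOpen V := isOpen_biUnion fun t _ => isOpen_Ioo
  have hVm : AEStronglyMeasurable E (volume.restrict V) := by
    rw [← hSU, Set.biUnion_eq_iUnion]
    have := hSc.to_subtype
    exact AEStronglyMeasurable.iUnion fun i => hUm i (hSA i.2)
  have hcount : (A \ V).Countable := by
    refine (countable_setOfPred_isolated_right_within (s := A)).mono ?_
    rintro t ⟨htA, htV⟩
    refine ⟨htA, ?_⟩
    rw [← empty_mem_iff_bot, mem_nhdsWithin]
    refine ⟨Set.Iio (t + c), isOpen_Iio, by simp only [Set.mem_Iio]; linarith, ?_⟩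
    rintro t' ⟨h1, h2, h3⟩
    have h1 : t' < t + c := h1
    exact htV (Set.mem_biUnion h2 ⟨max_lt (by linarith) htA.1, h3⟩)
  have hCm : AEStronglyMeasurable E (volume.restrict (A \ V)) := by
    rw [Measure.restrict_eq_zero.2 (hcount.measure_zero volume)]
    exact aestronglyMeasurable_zero_measure E
  set R := Set.Ioi (0:ℝ) \ (V ∪ (A \ V)) with hR
  have hRmeas : MeasurableSet R :=
    measurableSet_Ioi.diff (hVo.measurableSet.union hcount.measurableSet)
  have hRm : AEStronglyMeasurable E (volume.restrict R) := by
    refine (hKm.mono_measure (Measure.restrict_mono (Set.sdiff_subset) le_rfl)).congr ?_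
    filter_upwards [ae_restrict_mem hRmeas] with t ht
    have ht0 : 0 < t := ht.1
    have htA : t ∉ A := by
      intro h
      by_cases hv : t ∈ V
      · exact ht.2 (Or.inl hv)
      · exact ht.2 (Or.inr ⟨h, hv⟩)
    rw [hE t ht0, intervalIntegral.integral_undef (fun h => htA ⟨ht0, h⟩), add_zero]
  have htot : AEStronglyMeasurable E (volume.restrict ((V ∪ (A \ V)) ∪ R)) :=
    aestronglyMeasurable_union_iff.2 ⟨aestronglyMeasurable_union_iff.2 ⟨hVm, hCm⟩, hRm⟩
  refine htot.mono_measure (Measure.restrict_mono ?_ le_rfl)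
  rw [hR, Set.union_sdiff_self]
  exact Set.subset_union_right

lemma cv_tendsto_zero {P Q : ℝ → ℝ} (hP : Loc P) (hQ : Loc Q) (t : ℝ) {g q : ℕ → ℝ → ℝ}
    (hg : ∀ m, Loc (g m)) (hq : ∀ m, Loc (q m))
    (hgP : ∀ᶠ m in atTop, ∀ s, s ≤ t → |g m s| ≤ P s)
    (hqQ : ∀ᶠ m in atTop, ∀ s, s ≤ t → |q m s| ≤ Q s)
    (hg0 : ∀ s, Tendsto (fun m => g m s) atTop (𝓝 0)) :
    Tendsto (fun m => cv (g m) (q m) t) atTop (𝓝 0) := by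
  have hPn : ∀ s, s ≤ t → 0 ≤ P s := by
    obtain ⟨m, hm⟩ := hgP.exists
    exact fun s hs => (abs_nonneg _).trans (hm s hs)
  have hlim : Tendsto (fun m => cv (g m) (q m) t) atTop (𝓝 (∫ _ : ℝ, (0:ℝ))) := by
    unfold cv
    apply tendsto_integral_filter_of_dominated_convergence (fun s => ‖P s‖ * ‖Q (t - s)‖)
    · exact Eventually.of_forall fun m => (hg m).aesm_cv (hq m) t
    · filter_upwards [hgP, hqQ] with m h1 h2
      refine ae_of_all _ fun s => ?_
      rw [norm_mul]
      by_cases hs0 : s ≤ 0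
      · rw [(hg m).zero s hs0, norm_zero, zero_mul]; positivity
      by_cases hst : t ≤ s
      · rw [(hq m).zero (t - s) (by linarith), norm_zero, mul_zero]; positivity
      push Not at hs0 hst
      have a := (h1 s hst.le).trans (le_abs_self _)
      have b := (h2 (t - s) (by linarith)).trans (le_abs_self _)
      simp only [Real.norm_eq_abs]
      gcongr
    · exact hP.abs.integrable hQ.abs t
    · refine ae_of_all _ fun s => ?_
      by_cases hs0 : s ≤ 0
      · simp [(hg _).zero s hs0]
      have lim : Tendsto (fun m => |g m s| * Q (t - s)) atTop (𝓝 0) := by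
        simpa using (hg0 s).abs.mul_const (Q (t - s))
      refine squeeze_zero_norm' ?_ lim
      filter_upwards [hqQ] with m h2
      rw [norm_mul, Real.norm_eq_abs, Real.norm_eq_abs]
      have := h2 (t - s) (by linarith)
      gcongr
  simpa using hlim

lemma res_CM {F : ℕ → ℝ → ℝ} (hF : CMW F) {l : ℝ} (hl : 0 < l) {E : ℝ → ℝ}
    (hK : Loc (ext0 (F 0))) (hE : Loc (ext0 E)) (hres : Res l (ext0 (F 0)) (ext0 E)) :
    CompletelyMonotoneFn E := by
  have hstep : ∀ m : ℕ, ∃ k : ℝ → ℝ, ∃ G : ℕ → ℝ → ℝ, CMW G ∧ Continuous (G 0) ∧ Continuous k ∧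
      (∀ t, 0 ≤ t → 0 ≤ k t) ∧
      (∀ t, G 0 t = k t - l * ∫ s in (0:ℝ)..t, k (t - s) * G 0 s) ∧
      ∀ t : ℝ, 0 ≤ t → t ≤ (m:ℝ) → F 0 (t + 3 * (1 / ((m:ℝ) + 1))) - 1 / ((m:ℝ) + 1) ≤ k t ∧
        k t ≤ F 0 (t + 1 / ((m:ℝ) + 1)) + 1 / ((m:ℝ) + 1) := by
    intro m
    have hm : (0:ℝ) < 1 / ((m:ℝ) + 1) := by positivity
    obtain ⟨N, c, x, hc, hx, hb⟩ := hF.exp_approx hm m hm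
    obtain ⟨G, hG, hGc, hGr⟩ := expSum_resolvent hc hx hl.le
    refine ⟨expSum N c x, G, hG, hGc, ?_, ?_, hGr, hb⟩
    · unfold expSum; fun_prop
    · exact fun t _ => Finset.sum_nonneg fun i hi => mul_nonneg (hc i hi) (Real.exp_nonneg _)
  choose k G hG hGc hkc hk0 hGr hkb using hstep
  have hloc : ∀ f : ℝ → ℝ, Continuous f → Loc (ext0 f) := fun f hf =>
    Loc.ext0 hf.aestronglyMeasurable (fun T _ => (hf.pow 2).intervalIntegrable _ _)
  have hkl : ∀ m, Loc (ext0 (k m)) := fun m => hloc _ (hkc m)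
  have hrl : ∀ m, Loc (ext0 (G m 0)) := fun m => hloc _ (hGc m)
  have hGres : ∀ m, Res l (ext0 (k m)) (ext0 (G m 0)) := by
    intro m x
    by_cases hx : 0 < x
    · rw [cv_ext0 _ _ hx, ext0_pos _ hx, ext0_pos _ hx]; exact hGr m x
    · push Not at hx
      rw [cv_zero (ext0_zero _) (ext0_zero _) x hx, ext0_zero _ x hx, ext0_zero _ x hx]; simp
  have hkn : ∀ m x, 0 ≤ ext0 (k m) x := fun m x =>
    Set.indicator_nonneg (fun t ht => hk0 m t (le_of_lt ht)) x
  have hrn : ∀ m x, 0 ≤ ext0 (G m 0) x := fun m x =>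
    Set.indicator_nonneg (fun t ht => (hG m 0 t ht).2) x
  have hKn : ∀ x, 0 ≤ ext0 (F 0) x := fun x =>
    Set.indicator_nonneg (fun t ht => (hF 0 t ht).2) x
  have hrk : ∀ m x, ext0 (G m 0) x ≤ ext0 (k m) x := by
    intro m x
    rw [hGres m x]
    have := mul_nonneg hl.le (cv_nonneg (hkn m) (hrn m) x)
    linarith
  set P : ℝ → ℝ := fun x => ext0 (F 0) x + ext0 (fun _ => 1) x with hPdef
  have hP : Loc P := hK.add (hloc _ continuous_const)
  have hkP : ∀ t, ∀ᶠ m in atTop, ∀ s, s ≤ t → ext0 (k m) s ≤ P s := by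
    intro t
    obtain ⟨M, hM⟩ := exists_nat_ge t
    filter_upwards [eventually_ge_atTop M] with m hm s hs
    by_cases hs0 : 0 < s
    · have hmt : s ≤ m := hs.trans (hM.trans (by exact_mod_cast hm))
      have h1 := (hkb m s hs0.le hmt).2
      have hpos : (0:ℝ) < 1 / ((m:ℝ) + 1) := by positivity
      have h2 := hF.antitoneOn 0 (show s ∈ Set.Ioi (0:ℝ) from hs0)
        (show s + 1 / ((m:ℝ)+1) ∈ Set.Ioi (0:ℝ) from by simp only [Set.mem_Ioi]; positivity)
        (by linarith)
      have h3 : 1 / ((m:ℝ) + 1) ≤ 1 := by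
        rw [div_le_one (by positivity)]; linarith [Nat.cast_nonneg (α := ℝ) m]
      rw [hPdef]; simp only [ext0_pos _ hs0]
      linarith
    · rw [ext0_zero _ _ (not_lt.1 hs0)]
      rw [hPdef]; simp [ext0_zero _ _ (not_lt.1 hs0)]
  have hKP : ∀ s, ext0 (F 0) s ≤ P s := by
    intro s
    have : 0 ≤ ext0 (fun _ => (1:ℝ)) s := Set.indicator_nonneg (fun _ _ => zero_le_one) s
    rw [hPdef]; simp only; linarith
  set g : ℕ → ℝ → ℝ := fun m y => ext0 (F 0) y - ext0 (k m) y with hgdef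
  have hgl : ∀ m, Loc (g m) := fun m => hK.sub (hkl m)
  have hgP : ∀ t, ∀ᶠ m in atTop, ∀ s, s ≤ t → |g m s| ≤ P s := by
    intro t
    filter_upwards [hkP t] with m hm s hs
    have := hm s hs
    have := hkn m s
    have := hKn s
    have := hKP s
    rw [hgdef, abs_le]; constructor <;> simp only <;> linarith
  have hg0 : ∀ s, Tendsto (fun m => g m s) atTop (𝓝 0) := by
    intro s
    by_cases hs : 0 < s
    · have h1 : Tendsto (fun m : ℕ => 1 / ((m:ℝ) + 1)) atTop (𝓝 0) :=
        tendsto_one_div_add_atTop_nhds_zero_nat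
      have hc : ContinuousAt (F 0) s := (hF 0 s hs).1.continuousAt
      have l1 : Tendsto (fun m : ℕ => F 0 (s + 3 * (1 / ((m:ℝ) + 1))) - 1 / ((m:ℝ) + 1)) atTop
          (𝓝 (F 0 s)) := by
        have : Tendsto (fun m : ℕ => s + 3 * (1 / ((m:ℝ) + 1))) atTop (𝓝 s) := by
          simpa using (h1.const_mul 3).const_add s
        simpa using (hc.tendsto.comp this).sub h1
      have l2 : Tendsto (fun m : ℕ => F 0 (s + 1 / ((m:ℝ) + 1)) + 1 / ((m:ℝ) + 1)) atTop
          (𝓝 (F 0 s)) := by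
        have : Tendsto (fun m : ℕ => s + 1 / ((m:ℝ) + 1)) atTop (𝓝 s) := by
          simpa using h1.const_add s
        simpa using (hc.tendsto.comp this).add h1
      obtain ⟨M, hM⟩ := exists_nat_ge s
      have hb : ∀ᶠ m : ℕ in atTop, s ≤ m := by
        filter_upwards [eventually_ge_atTop M] with m hm
        exact hM.trans (by exact_mod_cast hm)
      have l3 : Tendsto (fun m => k m s) atTop (𝓝 (F 0 s)) :=
        tendsto_of_tendsto_of_tendsto_of_le_of_le' l1 l2
          (hb.mono fun m hm => (hkb m s hs.le hm).1) (hb.mono fun m hm => (hkb m s hs.le hm).2)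
      rw [hgdef]; simp only [ext0_pos _ hs]
      simpa using l3.const_sub (F 0 s)
    · rw [hgdef]; simp [ext0_zero _ _ (not_lt.1 hs)]
  have hrP : ∀ t, ∀ᶠ m in atTop, ∀ s, s ≤ t → |ext0 (G m 0) s| ≤ P s := by
    intro t
    filter_upwards [hkP t] with m hm s hs
    rw [abs_of_nonneg (hrn m s)]
    exact (hrk m s).trans (hm s hs)
  have hrE : ∀ t, ∀ᶠ m in atTop, ∀ s, s ≤ t →
      |cv (ext0 (G m 0)) (ext0 E) s| ≤ cv P (fun x => ‖ext0 E x‖) s := by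
    intro t
    filter_upwards [hrP t] with m hm s hs
    show ‖∫ u, ext0 (G m 0) u * ext0 E (s - u)‖ ≤ ∫ u, P u * ‖ext0 E (s - u)‖
    refine norm_integral_le_of_norm_le (hP.integrable hE.abs s) (ae_of_all _ fun u => ?_)
    rw [norm_mul]
    by_cases hu : u ≤ s
    · have := hm u (hu.trans hs)
      rw [Real.norm_eq_abs]
      gcongr
    · rw [hE.zero (s - u) (by linarith)]; simp
  apply CMW.limit hG
  intro t ht
  have c1 := cv_tendsto_zero hP hP t hgl hrl (hgP t) (hrP t) hg0
  have c2 := cv_tendsto_zero hP hE.abs t hgl (fun _ => hE) (hgP t)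
    (Eventually.of_forall fun m s _ => le_rfl) hg0
  have c3 := cv_tendsto_zero hP (hP.cv hE.abs) t hgl (fun m => (hrl m).cv hE) (hgP t) (hrE t) hg0
  have c4 := (((hg0 t).sub (c1.const_mul l)).sub (c2.const_mul l)).add (c3.const_mul (l^2))
  have c5 : Tendsto (fun m => ext0 E t - ext0 (G m 0) t) atTop (𝓝 0) := by
    simp only [mul_zero, sub_zero, add_zero] at c4
    refine c4.congr fun m => ?_
    exact (res_diff (hkl m) (hrl m) hK hE (hGres m) hres t).symm
  have c6 := c5.const_sub (ext0 E t)
  simpa [ext0_pos _ ht] using c6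

lemma CompletelyMonotoneFn.facts {f : ℝ → ℝ} (h : CompletelyMonotoneFn f) :
    AntitoneOn f (Set.Ioi 0) ∧ ContinuousOn f (Set.Ioi 0) ∧ ∀ t, 0 < t → 0 ≤ f t := by
  obtain ⟨F, hF, hFf⟩ := h.exists_CMW
  have e : F 0 = f := funext hFf
  refine ⟨e ▸ hF.antitoneOn 0, ?_, fun t ht => e ▸ (hF 0 t ht).2⟩
  rw [← e]
  exact fun t ht => (hF 0 t ht).1.continuousAt.continuousWithinAt

lemma vou_basic {K : ℝ → ℝ} {γ β : ℝ} (hV : AssumptionVOUKernel K γ) (hβ : β < 0) {E : ℝ → ℝ}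
    (hE : SolvesResolventEq K β E) :
    Loc (ext0 K) ∧ Loc (ext0 E) ∧ Res (-β) (ext0 K) (ext0 E) ∧ CompletelyMonotoneFn E := by
  obtain ⟨ha, hc, hn⟩ := hV.2.1.facts
  have hK : Loc (ext0 K) := Loc.ext0 (hc.aestronglyMeasurable measurableSet_Ioi) hV.2.2.1
  have hEl : Loc (ext0 E) := Loc.ext0 (sol_measurable hβ.ne hn ha hc hE.2) hE.1
  have hres : Res (-β) (ext0 K) (ext0 E) := by
    intro x
    by_cases hx : 0 < x
    · rw [cv_ext0 _ _ hx, ext0_pos _ hx, ext0_pos _ hx, hE.2 x hx,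
        ← intervalIntegral.integral_const_mul, sub_eq_add_neg, ← intervalIntegral.integral_neg]
      congr 1
      apply intervalIntegral.integral_congr
      intro s _
      simp only; ring
    · push Not at hx
      rw [cv_zero (ext0_zero _) (ext0_zero _) x hx, ext0_zero _ x hx, ext0_zero _ x hx]; simp
  obtain ⟨F, hF, hFf⟩ := hV.2.1.exists_CMW
  have e : F 0 = K := funext hFf
  refine ⟨hK, hEl, hres, res_CM hF (l := -β) (by linarith) ?_ hEl ?_⟩
  · rw [e]; exact hK
  · rw [e]; exact hres

lemma Loc.integrableOn {f : ℝ → ℝ} (hf : Loc f) (T : ℝ) : IntegrableOn f (Set.Ioc 0 T) := by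
  have h1 : IntegrableOn (fun t => f t ^ 2) (Set.Ioc 0 T) :=
    (hf.sq T).mono_set Set.Ioc_subset_Iic_self
  have h2 : IntegrableOn (fun _ : ℝ => (1:ℝ)) (Set.Ioc 0 T) := by simp
  refine (h2.add h1).mono' hf.aesm.restrict (ae_of_all _ fun x => ?_)
  simp only [Pi.add_apply, Real.norm_eq_abs]
  rw [← sq_abs (f x)]
  nlinarith [sq_nonneg (|f x| - 1), abs_nonneg (f x)]

lemma ext0_nonneg {f : ℝ → ℝ} (h : ∀ t, 0 < t → 0 ≤ f t) (x : ℝ) : 0 ≤ ext0 f x :=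
  Set.indicator_nonneg (fun t ht => h t ht) x

lemma integral_cv {f g : ℝ → ℝ} (hf : Integrable f) (hg : Integrable g) :
    Integrable (cv f g) ∧ ∫ x, cv f g x = (∫ x, f x) * ∫ x, g x := by
  rw [cv_eq]
  exact ⟨hf.integrable_convolution (ContinuousLinearMap.mul ℝ ℝ) hg,
    by simpa using integral_convolution (ContinuousLinearMap.mul ℝ ℝ) hf hg⟩

lemma ext0_integrable_iff {f : ℝ → ℝ} : Integrable (ext0 f) ↔ IntegrableOn f (Set.Ioi 0) :=
  integrable_indicator_iff measurableSet_Ioi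

lemma ext0_integral (f : ℝ → ℝ) : ∫ x, ext0 f x = ∫ x in Set.Ioi (0:ℝ), f x :=
  integral_indicator measurableSet_Ioi

lemma res_le {l : ℝ} {k e : ℝ → ℝ} (hl : 0 < l) (hkn : ∀ x, 0 ≤ k x) (hen : ∀ x, 0 ≤ e x)
    (h : Res l k e) (x : ℝ) : e x ≤ k x := by
  have := mul_nonneg hl.le (cv_nonneg hkn hen x)
  rw [h x]; linarith

lemma res_fin {l : ℝ} {k e : ℝ → ℝ} (hl : 0 < l) (hkn : ∀ x, 0 ≤ k x) (hen : ∀ x, 0 ≤ e x)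
    (he : Loc e) (hki : Integrable k) (h : Res l k e) :
    Integrable e ∧ ∫ x, e x = (∫ x, k x) - l * ((∫ x, k x) * ∫ x, e x) := by
  have hei : Integrable e := hki.mono' he.aesm (ae_of_all _ fun x => by
    rw [Real.norm_eq_abs, abs_of_nonneg (hen x)]; exact res_le hl hkn hen h x)
  refine ⟨hei, ?_⟩
  obtain ⟨h1, h2⟩ := integral_cv hki hei
  rw [← h2, ← integral_const_mul, ← integral_sub hki (h1.const_mul l)]
  exact integral_congr_ae (ae_of_all _ h)

lemma res_lower {l : ℝ} {k e : ℝ → ℝ} (hl : 0 < l) (hkn : ∀ x, 0 ≤ k x) (hen : ∀ x, 0 ≤ e x)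
    (hk : Loc k) (he : Loc e) (hei : Integrable e) (h : Res l k e) (T : ℝ) :
    ∫ x in Set.Ioc 0 T, k x ≤ (∫ x, e x) + l * ((∫ x in Set.Ioc 0 T, k x) * ∫ x, e x) := by
  set kT := (Set.Ioc 0 T).indicator k with hkT
  have hi : Integrable kT := (hk.integrableOn T).integrable_indicator measurableSet_Ioc
  have hI : ∫ x in Set.Ioc 0 T, k x = ∫ x, kT x := (integral_indicator measurableSet_Ioc).symm
  have hn : ∀ x, 0 ≤ kT x := fun x => Set.indicator_nonneg (fun t _ => hkn t) x
  obtain ⟨h1, h2⟩ := integral_cv hi hei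
  rw [hI, ← h2, ← integral_const_mul, ← integral_add hei (h1.const_mul l)]
  refine integral_mono hi (hei.add (h1.const_mul l)) fun x => ?_
  by_cases hx : x ∈ Set.Ioc 0 T
  · have : cv kT e x = cv k e x := by
      unfold cv; congr 1; funext s
      by_cases hs : s ∈ Set.Ioc 0 T
      · rw [hkT, Set.indicator_of_mem hs]
      · rw [hkT, Set.indicator_of_notMem hs]
        by_cases hs0 : s ≤ 0
        · rw [hk.zero s hs0]
        · have : T < s := by
            by_contra hh
            exact hs ⟨not_le.1 hs0, not_lt.1 hh⟩
          rw [he.zero (x - s) (by linarith [hx.2])]; simp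
    simp only
    rw [this, h x, hkT, Set.indicator_of_mem hx]; linarith
  · simp only
    rw [hkT, Set.indicator_of_notMem hx, ← hkT]
    exact add_nonneg (hen x) (mul_nonneg hl.le (cv_nonneg hn hen x))

lemma integrableOn_of_bdd {f : ℝ → ℝ} (hf : Loc (ext0 f)) (hn : ∀ t, 0 < t → 0 ≤ f t) (C : ℝ)
    (hC : ∀ T > (0:ℝ), ∫ x in Set.Ioc 0 T, f x ≤ C) : IntegrableOn f (Set.Ioi 0) := by
  have hi : ∀ T, IntegrableOn f (Set.Ioc 0 T) := fun T =>
    (hf.integrableOn T).congr_fun (fun x hx => ext0_pos f hx.1) measurableSet_Ioc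
  refine integrableOn_Ioi_of_intervalIntegral_norm_bounded C 0 (l := atTop) (b := id) hi tendsto_id ?_
  filter_upwards [eventually_gt_atTop 0] with T hT
  rw [id, intervalIntegral.integral_of_le hT.le]
  refine le_trans (le_of_eq ?_) (hC T hT)
  refine setIntegral_congr_fun measurableSet_Ioc fun x hx => ?_
  simp only [Real.norm_eq_abs, abs_of_nonneg (hn x hx.1)]

lemma integral_main {K E : ℝ → ℝ} {l : ℝ} (hl : 0 < l) (hKl : Loc (ext0 K)) (hEl : Loc (ext0 E))
    (hres : Res l (ext0 K) (ext0 E)) (hKa : AntitoneOn K (Set.Ioi 0))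
    (hKc : ContinuousOn K (Set.Ioi 0))
    (hKn : ∀ t, 0 < t → 0 ≤ K t) (hEn : ∀ t, 0 < t → 0 ≤ E t) :
    IntegrableOn E (Set.Ioi 0) ∧
    (∫ t in Set.Ioi (0:ℝ), E t) = (((normL1 K)⁻¹ + ENNReal.ofReal l)⁻¹).toReal := by
  have kn := ext0_nonneg hKn
  have en := ext0_nonneg hEn
  by_cases hKi : IntegrableOn K (Set.Ioi 0)
  · obtain ⟨h1, h2⟩ := res_fin hl kn en hEl (ext0_integrable_iff.2 hKi) hres
    refine ⟨ext0_integrable_iff.1 h1, ?_⟩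
    rw [ext0_integral, ext0_integral] at h2
    have hN : normL1 K = ENNReal.ofReal (∫ t in Set.Ioi (0:ℝ), K t) :=
      (ofReal_integral_eq_lintegral_ofReal hKi
        ((ae_restrict_mem measurableSet_Ioi).mono fun t ht => hKn t ht)).symm
    have hk0 : 0 ≤ ∫ t in Set.Ioi (0:ℝ), K t :=
      setIntegral_nonneg measurableSet_Ioi fun t ht => hKn t ht
    rw [hN]
    generalize (∫ t in Set.Ioi (0:ℝ), K t) = κ at *
    generalize (∫ t in Set.Ioi (0:ℝ), E t) = I at *
    rcases hk0.eq_or_lt with h0 | h0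
    · rw [← h0] at h2 ⊢
      simpa using h2
    · rw [← ENNReal.ofReal_inv_of_pos h0, ← ENNReal.ofReal_add (by positivity) hl.le,
        ENNReal.toReal_inv, ENNReal.toReal_ofReal (by positivity)]
      field_simp
      linarith
  · have hpos : ∀ t, 0 < t → 0 < K t := by
      intro t ht
      refine (hKn t ht).lt_of_ne fun h0 => hKi ?_
      have a1 : IntegrableOn K (Set.Ioc 0 t) :=
        (hKl.integrableOn t).congr_fun (fun x hx => ext0_pos K hx.1) measurableSet_Ioc
      have a2 : IntegrableOn K (Set.Ioi t) := by
        refine (integrableOn_zero (μ := volume)).congr_fun (fun x hx => ?_) measurableSet_Ioi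
        have hx : t < x := hx
        have := hKa (show t ∈ Set.Ioi (0:ℝ) from ht) (show x ∈ Set.Ioi (0:ℝ) from ht.trans hx) hx.le
        exact le_antisymm (hKn x (ht.trans hx)) (this.trans h0.symm.le)
      rw [← Set.Ioc_union_Ioi_eq_Ioi ht.le]
      exact a1.union a2
    have hEi' : ∀ T, IntegrableOn E (Set.Ioc 0 T) := fun T =>
      (hEl.integrableOn T).congr_fun (fun x hx => ext0_pos E hx.1) measurableSet_Ioc
    have hup : ∀ T > (0:ℝ), ∫ x in Set.Ioc 0 T, E x ≤ 1 / l := by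
      intro T hT
      have h1 := hres T
      have h2 : K T * ∫ x in Set.Ioc 0 T, E x ≤ cv (ext0 K) (ext0 E) T := by
        rw [cv_comm, ← integral_const_mul, integral_Ioc_eq_integral_Ioo,
          ← integral_indicator measurableSet_Ioo]
        have hi : IntegrableOn (fun x => K T * E x) (Set.Ioo 0 T) :=
          ((hEi' T).mono_set Set.Ioo_subset_Ioc_self).const_mul _
        refine integral_mono (hi.integrable_indicator measurableSet_Ioo)
          (hEl.integrable hKl T) fun s => ?_
        by_cases hs : s ∈ Set.Ioo 0 T
        · have hs2 : 0 < T - s := by linarith [hs.2]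
          simp only
          rw [Set.indicator_of_mem hs, ext0_pos _ hs.1, ext0_pos _ hs2, mul_comm]
          refine mul_le_mul_of_nonneg_left (hKa hs2 hT (by linarith [hs.1])) (hEn s hs.1)
        · simp only
          rw [Set.indicator_of_notMem hs]
          exact mul_nonneg (en _) (kn _)
      rw [ext0_pos _ hT, ext0_pos _ hT] at h1
      have h3 := hEn T hT
      have h4 : l * (K T * ∫ x in Set.Ioc 0 T, E x) ≤ K T := by
        have := mul_le_mul_of_nonneg_left h2 hl.le
        linarith
      rw [le_div_iff₀ hl]
      have := hpos T hT
      by_contra hh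
      push Not at hh
      nlinarith
    have hEi := integrableOn_of_bdd hEl hEn _ hup
    refine ⟨hEi, ?_⟩
    have hN : normL1 K = ∞ := by
      by_contra hne
      apply hKi
      refine ⟨hKc.aestronglyMeasurable measurableSet_Ioi, ?_⟩
      rw [hasFiniteIntegral_iff_ofReal
        ((ae_restrict_mem measurableSet_Ioi).mono fun t ht => hKn t ht)]
      exact lt_top_iff_ne_top.2 hne
    rw [hN, ENNReal.inv_top, zero_add, ENNReal.toReal_inv, ENNReal.toReal_ofReal hl.le]
    apply le_antisymm
    · have lim := intervalIntegral_tendsto_integral_Ioi 0 hEi tendsto_id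
      refine le_of_tendsto lim ?_
      filter_upwards [eventually_gt_atTop 0] with T hT
      rw [id, intervalIntegral.integral_of_le hT.le, ← one_div]
      exact hup T hT
    · by_contra hlt
      push Not at hlt
      apply hKi
      have hlow := res_lower hl kn en hKl hEl (ext0_integrable_iff.2 hEi) hres
      rw [ext0_integral] at hlow
      set I := ∫ t in Set.Ioi (0:ℝ), E t
      have hI : 0 < 1 - l * I := by
        have := mul_lt_mul_of_pos_left hlt hl
        rw [mul_inv_cancel₀ hl.ne'] at this
        linarith
      refine integrableOn_of_bdd hKl hKn (I / (1 - l * I)) fun T hT => ?_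
      have h := hlow T
      rw [setIntegral_congr_fun (g := K) measurableSet_Ioc (fun x hx => ext0_pos K hx.1)] at h
      rw [le_div_iff₀ hI]
      linarith

/-- Under assumption (VOU), the resolvent-type function `E_β`
belongs to `L¹(ℝ₊) ∩ L²(ℝ₊)`, is completely monotone, satisfies
`∫₀^∞ E_β = 1/(‖K‖_{L¹}⁻¹ + |β|)` (with `1/∞ = 0`), and its tails vanish
uniformly for `β ≤ -1/N`. -/
theorem Ebeta_integrability_and_uniform_tails
    (K : ℝ → ℝ) (γ b x₀ σ : ℝ) (hσ : 0 < σ)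
    (hVOU : AssumptionVOUKernel K γ)
    (E : ℝ → ℝ → ℝ)
    (hE : ∀ β < (0:ℝ), SolvesResolventEq K β (E β)) :
    (∀ β < (0:ℝ),
      IntegrableOn (E β) (Set.Ioi 0) ∧
      IntegrableOn (fun t => (E β t) ^ 2) (Set.Ioi 0) ∧
      CompletelyMonotoneFn (E β) ∧
      (∫ t in Set.Ioi (0:ℝ), E β t) = (((normL1 K)⁻¹ + ENNReal.ofReal |β|)⁻¹).toReal) ∧
    (∀ N : ℕ, 1 ≤ N → ∀ ε > (0:ℝ), ∃ t₀ : ℝ, ∀ t ≥ t₀, ∀ β ≤ -(1 / (N:ℝ)),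
      (∫ r in Set.Ioi t, E β r) + (∫ r in Set.Ioi t, (E β r) ^ 2) < ε) := by
  have hpart : ∀ β < (0:ℝ),
      IntegrableOn (E β) (Set.Ioi 0) ∧
      IntegrableOn (fun t => (E β t) ^ 2) (Set.Ioi 0) ∧
      CompletelyMonotoneFn (E β) ∧
      (∫ t in Set.Ioi (0:ℝ), E β t) = (((normL1 K)⁻¹ + ENNReal.ofReal |β|)⁻¹).toReal := by
    intro β hβ
    obtain ⟨hKl, hEl, hres, hCM⟩ := vou_basic hVOU hβ (hE β hβ)
    obtain ⟨ha, hc, hn⟩ := hVOU.2.1.facts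
    obtain ⟨hEa, hEc, hEn⟩ := hCM.facts
    obtain ⟨h1, h2⟩ := integral_main (l := -β) (by linarith) hKl hEl hres ha hc hn hEn
    rw [abs_of_neg hβ]
    refine ⟨h1, ?_, hCM, h2⟩
    rw [← Set.Ioc_union_Ioi_eq_Ioi (zero_le_one (α := ℝ))]
    refine IntegrableOn.union ((intervalIntegrable_iff_integrableOn_Ioc_of_le zero_le_one).1
      ((hE β hβ).1 1 one_pos)) ?_
    have hsub : Set.Ioi (1:ℝ) ⊆ Set.Ioi 0 := Set.Ioi_subset_Ioi zero_le_one
    have h3 : IntegrableOn (fun x => E β 1 * E β x) (Set.Ioi 1) := (h1.mono_set hsub).const_mul _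
    refine h3.mono' (((hEc.pow 2).mono hsub).aestronglyMeasurable measurableSet_Ioi) ?_
    filter_upwards [ae_restrict_mem measurableSet_Ioi] with x hx
    have hx0 : 0 < x := hsub hx
    have h4 := hEa (show (1:ℝ) ∈ Set.Ioi (0:ℝ) from zero_lt_one (α := ℝ)) hx0 (le_of_lt hx)
    rw [Real.norm_eq_abs, abs_of_nonneg (sq_nonneg _), sq]
    exact mul_le_mul_of_nonneg_right h4 (hEn x hx0)
  refine ⟨hpart, fun N hN ε hε => ?_⟩
  have hN0 : (0:ℝ) < 1 / (N:ℝ) := by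
    have : (0:ℝ) < N := by exact_mod_cast hN
    positivity
  set α : ℝ := -(1 / (N:ℝ)) with hα
  have hα0 : α < 0 := by linarith
  obtain ⟨hKl, hGl, hresG, hGCM⟩ := vou_basic hVOU hα0 (hE α hα0)
  obtain ⟨hG1, hG2, -, -⟩ := hpart α hα0
  have hGn := hGCM.facts.2.2
  have tail : ∀ f : ℝ → ℝ, IntegrableOn f (Set.Ioi 0) →
      Tendsto (fun t => ∫ r in Set.Ioi t, f r) atTop (𝓝 0) := by
    intro f hf
    have lim := (intervalIntegral_tendsto_integral_Ioi 0 hf tendsto_id).const_sub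
      (∫ r in Set.Ioi (0:ℝ), f r)
    rw [sub_self] at lim
    refine lim.congr' ?_
    filter_upwards [eventually_gt_atTop 0] with t ht
    rw [id, intervalIntegral.integral_of_le ht.le, ← Set.Ioc_union_Ioi_eq_Ioi ht.le,
      setIntegral_union (Set.Ioc_disjoint_Ioi le_rfl) measurableSet_Ioi
        (hf.mono_set Set.Ioc_subset_Ioi_self) (hf.mono_set (Set.Ioi_subset_Ioi ht.le))]
    ring
  have lim := (tail _ hG1).add (tail _ hG2)
  rw [add_zero] at lim
  obtain ⟨t₁, ht₁⟩ := eventually_atTop.1 (lim.eventually_lt_const hε)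
  refine ⟨max t₁ 0, fun t ht β hβ => lt_of_le_of_lt ?_ (ht₁ t ((le_max_left _ _).trans ht))⟩
  have ht0 : 0 ≤ t := (le_max_right _ _).trans ht
  have hβ0 : β < 0 := by linarith
  obtain ⟨-, hEl, hresE, hECM⟩ := vou_basic hVOU hβ0 (hE β hβ0)
  obtain ⟨hE1, hE2, -, -⟩ := hpart β hβ0
  have hEn := hECM.facts.2.2
  have hle : ∀ x, 0 < x → E β x ≤ E α x := by
    intro x hx
    have h := res_mono hKl hGl hEl hresG hresE x
    rw [ext0_pos _ hx, ext0_pos _ hx] at h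
    have := mul_nonneg (show 0 ≤ -β - -α by linarith)
      (cv_nonneg (ext0_nonneg hGn) (ext0_nonneg hEn) x)
    linarith
  have hsub : Set.Ioi t ⊆ Set.Ioi (0:ℝ) := Set.Ioi_subset_Ioi ht0
  refine add_le_add ?_ ?_
  · exact setIntegral_mono_on (hE1.mono_set hsub) (hG1.mono_set hsub) measurableSet_Ioi
      fun x hx => hle x (hsub hx)
  · exact setIntegral_mono_on (hE2.mono_set hsub) (hG2.mono_set hsub) measurableSet_Ioi
      fun x hx => pow_le_pow_left₀ (hEn x (hsub hx)) (hle x (hsub hx)) 2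

end
end
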